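/- The nine W(E8)-invariant holomorphic Jacobi forms A_1, A_2, A_3, A_4, A_5, B_2, B_3, B_4, B_6, viewed as functions on ℍ × ℂ^8, are algebraically independent over the ring ℂ[E4, E6] generated by the Eisenstein series E4 and E6. -/

import Mathlib

noncomputable section

open Complex Finset

namespace E8Jacobi

/-- π as a complex number. -/
def πC : ℂ := Real.pi

/-- The E8 lattice as a subset of ℝ^8. -/
def E8Lattice : Set (Fin 8 → ℝ) :=
  {x | ((∀ i, ∃ n : ℤ, x i = n) ∨ (∀ i, ∃ n : ℤ, x i = n + 1/2)) ∧ ∃ m : ℤ, ∑ i, x i = 2 * m}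

/-- Complexification of a real vector. -/
def cv (x : Fin 8 → ℝ) : Fin 8 → ℂ := fun i => (x i : ℂ)

/-- The dot product on ℝ^8. -/
def dotR (x y : Fin 8 → ℝ) : ℝ := ∑ i, x i * y i

/-- The dot product on ℂ^8. -/
def dotC (z w : Fin 8 → ℂ) : ℂ := ∑ i, z i * w i

/-- The Weyl group W(E8): orthogonal matrices preserving the E8 lattice. -/
def WeylE8 : Set (Matrix (Fin 8) (Fin 8) ℝ) :=
  {M | (∀ x y, dotR (M.mulVec x) (M.mulVec y) = dotR x y) ∧
       (∀ x ∈ E8Lattice, M.mulVec x ∈ E8Lattice) ∧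
       (∀ x ∈ E8Lattice, ∃ y ∈ E8Lattice, M.mulVec y = x)}

/-- The complexified (ℂ-linear) action of a real matrix on ℂ^8. -/
def actC (M : Matrix (Fin 8) (Fin 8) ℝ) (z : Fin 8 → ℂ) : Fin 8 → ℂ :=
  fun i => ∑ j, (M i j : ℂ) * z j

/-- A W(E8)-invariant weak Jacobi form of weight `k` and index `m`. -/
structure IsWeakJacobiFormE8 (k : ℤ) (m : ℕ) (φ : ℂ → (Fin 8 → ℂ) → ℂ) : Prop where
  holo : DifferentiableOn ℂ (fun p : ℂ × (Fin 8 → ℂ) => φ p.1 p.2) {p | 0 < p.1.im}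
  weyl_inv : ∀ M ∈ WeylE8, ∀ τ : ℂ, 0 < τ.im → ∀ z, φ τ (actC M z) = φ τ z
  quasi_periodic : ∀ α ∈ E8Lattice, ∀ β ∈ E8Lattice, ∀ τ : ℂ, 0 < τ.im → ∀ z,
    φ τ (fun i => z i + τ * (α i : ℂ) + (β i : ℂ)) =
      Complex.exp (-(m : ℂ) * πC * I * (τ * dotC (cv α) (cv α) + 2 * dotC z (cv α))) * φ τ z
  modular : ∀ a b c d : ℤ, a * d - b * c = 1 → ∀ τ : ℂ, 0 < τ.im → ∀ z,
    φ (((a : ℂ) * τ + (b : ℂ)) / ((c : ℂ) * τ + (d : ℂ))) (fun i => z i / ((c : ℂ) * τ + (d : ℂ))) =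
      ((c : ℂ) * τ + (d : ℂ)) ^ k *
        Complex.exp ((m : ℂ) * πC * I * (c : ℂ) / ((c : ℂ) * τ + (d : ℂ)) * dotC z z) * φ τ z
  fourier : ∃ co : ℕ → E8Lattice → ℂ, ∀ τ : ℂ, 0 < τ.im → ∀ z,
    φ τ z = ∑' (n : ℕ) (w : E8Lattice), co n w *
      Complex.exp (2 * πC * I * dotC (cv w.1) z) * Complex.exp (2 * πC * I * τ) ^ n

/-- Membership in the ring J^{E8}_{*,*} of W(E8)-invariant weak Jacobi forms:
a finite sum of weak Jacobi forms of various weights and indices. -/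
def MemJE8 (φ : ℂ → (Fin 8 → ℂ) → ℂ) : Prop :=
  ∃ (n : ℕ) (k : Fin n → ℤ) (m : Fin n → ℕ) (ψ : Fin n → ℂ → (Fin 8 → ℂ) → ℂ),
    (∀ i, IsWeakJacobiFormE8 (k i) (m i) (ψ i)) ∧
    ∀ τ : ℂ, 0 < τ.im → ∀ z, φ τ z = ∑ i, ψ i τ z

/-- The nome q = e^{2πiτ}. -/
def qExp (τ : ℂ) : ℂ := Complex.exp (2 * πC * I * τ)

/-- The Eisenstein series E4. -/
def E4 (τ : ℂ) : ℂ :=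
  1 + 240 * ∑' n : ℕ+, (n : ℂ) ^ 3 * qExp τ ^ (n : ℕ) / (1 - qExp τ ^ (n : ℕ))

/-- The Eisenstein series E6. -/
def E6 (τ : ℂ) : ℂ :=
  1 - 504 * ∑' n : ℕ+, (n : ℂ) ^ 5 * qExp τ ^ (n : ℕ) / (1 - qExp τ ^ (n : ℕ))

/-- The modular discriminant Δ. -/
def Dl (τ : ℂ) : ℂ := (E4 τ ^ 3 - E6 τ ^ 2) / 1728

/-- The Dedekind eta function. -/
def etaF (τ : ℂ) : ℂ := Complex.exp (2 * πC * I * τ / 24) * ∏' n : ℕ, (1 - qExp τ ^ (n + 1))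

/-- The theta function of the E8 lattice. -/
def Theta (τ : ℂ) (z : Fin 8 → ℂ) : ℂ :=
  ∑' w : E8Lattice, Complex.exp (πC * I * τ * dotC (cv w.1) (cv w.1) + 2 * πC * I * dotC z (cv w.1))

/-- The Jacobi theta function θ1. -/
def th1 (z τ : ℂ) : ℂ :=
  I * ∑' n : ℤ, (-1 : ℂ) ^ n * Complex.exp (2 * πC * I * z * ((n : ℂ) - 1/2)) *
    Complex.exp (πC * I * τ * ((n : ℂ) - 1/2) ^ 2)

/-- The Jacobi theta function θ2. -/
def th2 (z τ : ℂ) : ℂ :=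
  ∑' n : ℤ, Complex.exp (2 * πC * I * z * ((n : ℂ) - 1/2)) *
    Complex.exp (πC * I * τ * ((n : ℂ) - 1/2) ^ 2)

/-- The Jacobi theta function θ3. -/
def th3 (z τ : ℂ) : ℂ :=
  ∑' n : ℤ, Complex.exp (2 * πC * I * z * (n : ℂ)) * Complex.exp (πC * I * τ * (n : ℂ) ^ 2)

/-- The Jacobi theta function θ4. -/
def th4 (z τ : ℂ) : ℂ :=
  ∑' n : ℤ, (-1 : ℂ) ^ n * Complex.exp (2 * πC * I * z * (n : ℂ)) *
    Complex.exp (πC * I * τ * (n : ℂ) ^ 2)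

/-- A1 = Θ(τ,z). -/
def A1 (τ : ℂ) (z : Fin 8 → ℂ) : ℂ := Theta τ z

/-- A_m for m = 2, 3, 5. -/
def AM (m : ℕ) (τ : ℂ) (z : Fin 8 → ℂ) : ℂ :=
  ((m : ℂ) ^ 3 / ((m : ℂ) ^ 3 + 1)) *
    (Theta ((m : ℂ) * τ) (fun i => (m : ℂ) * z i) +
      ((m : ℂ) ^ 4)⁻¹ * ∑ k ∈ Finset.range m, Theta ((τ + (k : ℂ)) / (m : ℂ)) z)

def A2 : ℂ → (Fin 8 → ℂ) → ℂ := AM 2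
def A3 : ℂ → (Fin 8 → ℂ) → ℂ := AM 3
def A5 : ℂ → (Fin 8 → ℂ) → ℂ := AM 5

/-- A4 = Θ(τ,2z). -/
def A4 (τ : ℂ) (z : Fin 8 → ℂ) : ℂ := Theta τ (fun i => 2 * z i)

def ee1 (τ : ℂ) : ℂ := (th3 0 τ ^ 4 + th4 0 τ ^ 4) / 12
def ee2 (τ : ℂ) : ℂ := (th2 0 τ ^ 4 - th4 0 τ ^ 4) / 12
def ee3 (τ : ℂ) : ℂ := (-th2 0 τ ^ 4 - th3 0 τ ^ 4) / 12
def h0 (τ : ℂ) : ℂ := th3 0 (2*τ) * th3 0 (6*τ) + th2 0 (2*τ) * th2 0 (6*τ)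

def B2 (τ : ℂ) (z : Fin 8 → ℂ) : ℂ :=
  (32/5) * (ee1 τ * Theta (2*τ) (fun i => 2 * z i)
    + (1/2^4) * ee3 τ * Theta (τ/2) z + (1/2^4) * ee2 τ * Theta ((τ+1)/2) z)

def B3 (τ : ℂ) (z : Fin 8 → ℂ) : ℂ :=
  (81/80) * (h0 τ ^ 2 * Theta (3*τ) (fun i => 3 * z i)
    - (1/3^5) * ∑ k ∈ Finset.range 3, h0 ((τ + (k:ℂ))/3) ^ 2 * Theta ((τ + (k:ℂ))/3) z)

def B4 (τ : ℂ) (z : Fin 8 → ℂ) : ℂ :=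
  (16/15) * (th4 0 (2*τ) ^ 4 * Theta (4*τ) (fun i => 4 * z i)
    - (1/2^4) * th4 0 (2*τ) ^ 4 * Theta (τ + 1/2) (fun i => 2 * z i)
    - (1/(2^2 * 4^4)) * ∑ k ∈ Finset.range 4, th2 0 ((τ + (k:ℂ))/2) ^ 4 * Theta ((τ + (k:ℂ))/4) z)

def B6 (τ : ℂ) (z : Fin 8 → ℂ) : ℂ :=
  (9/10) * (h0 τ ^ 2 * Theta (6*τ) (fun i => 6 * z i)
    + (1/2^4) * ∑ k ∈ Finset.range 2, h0 (τ + (k:ℂ)) ^ 2 * Theta ((3*τ + 3*(k:ℂ))/2) (fun i => 3 * z i)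
    - (1/(3 * 3^4)) * ∑ k ∈ Finset.range 3, h0 ((τ + (k:ℂ))/3) ^ 2 * Theta ((2*τ + 2*(k:ℂ))/3) (fun i => 2 * z i)
    - (1/(3 * 6^4)) * ∑ k ∈ Finset.range 6, h0 ((τ + (k:ℂ))/3) ^ 2 * Theta ((τ + (k:ℂ))/6) z)

/-- The nine basic W(E8)-invariant holomorphic Jacobi forms A1,…,A5,B2,…,B6. -/
def nineForms : Fin 9 → ℂ → (Fin 8 → ℂ) → ℂ := ![A1, A2, A3, A4, A5, B2, B3, B4, B6]

/- The basic meromorphic Jacobi forms a_i, b_j (Appendix A of the paper). -/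

def a0f (τ : ℂ) (_z : Fin 8 → ℂ) : ℂ := E4 τ / 12

def a2f (τ : ℂ) (z : Fin 8 → ℂ) : ℂ :=
  6 / (E4 τ * Dl τ) * (-(E4 τ) * A2 τ z + A1 τ z ^ 2)

def a3f (τ : ℂ) (z : Fin 8 → ℂ) : ℂ :=
  1 / (9 * E4 τ ^ 2 * Dl τ ^ 2) *
    (-7 * E4 τ ^ 2 * E6 τ * A3 τ z - 20 * E4 τ ^ 3 * B3 τ z
      - 9 * E4 τ * E6 τ * A1 τ z * A2 τ z + 30 * E4 τ ^ 2 * A1 τ z * B2 τ z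
      + 6 * E6 τ * A1 τ z ^ 3)

def a4f (τ : ℂ) (z : Fin 8 → ℂ) : ℂ :=
  1 / (288 * E4 τ ^ 3 * Dl τ ^ 3) *
    (576 * E4 τ ^ 3 * Dl τ * A4 τ z + 32256 * E4 τ ^ 2 * Dl τ * A1 τ z * A3 τ z
      - 9 * E4 τ ^ 5 * A2 τ z ^ 2 - 30 * E4 τ ^ 3 * E6 τ * A2 τ z * B2 τ z
      - 25 * E4 τ ^ 4 * B2 τ z ^ 2
      + (60 * E4 τ ^ 4 - 12 * E4 τ * E6 τ ^ 2) * A1 τ z ^ 2 * A2 τ z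
      + 80 * E4 τ ^ 2 * E6 τ * A1 τ z ^ 2 * B2 τ z
      + (-70 * E4 τ ^ 3 + 6 * E6 τ ^ 2) * A1 τ z ^ 4)

def b0f (τ : ℂ) (_z : Fin 8 → ℂ) : ℂ := E6 τ / 216

def b1f (τ : ℂ) (z : Fin 8 → ℂ) : ℂ := -4 / E4 τ * A1 τ z

def b2f (τ : ℂ) (z : Fin 8 → ℂ) : ℂ :=
  5 / (6 * E4 τ ^ 2 * Dl τ) * (E4 τ ^ 2 * B2 τ z - E6 τ * A1 τ z ^ 2)

def b3f (τ : ℂ) (z : Fin 8 → ℂ) : ℂ :=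
  1 / (108 * E4 τ ^ 3 * Dl τ ^ 2) *
    (-7 * E4 τ ^ 5 * A3 τ z - 20 * E4 τ ^ 3 * E6 τ * B3 τ z
      - 9 * E4 τ ^ 4 * A1 τ z * A2 τ z + 30 * E4 τ ^ 2 * E6 τ * A1 τ z * B2 τ z
      + (16 * E4 τ ^ 3 - 10 * E6 τ ^ 2) * A1 τ z ^ 3)

def b4f (τ : ℂ) (z : Fin 8 → ℂ) : ℂ :=
  1 / (1728 * E4 τ ^ 4 * Dl τ ^ 3) *
    (-8640 * E4 τ ^ 4 * Dl τ * B4 τ z + 138240 * E4 τ ^ 3 * Dl τ * A1 τ z * B3 τ z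
      + 9 * E4 τ ^ 5 * E6 τ * A2 τ z ^ 2 + 30 * E4 τ ^ 6 * A2 τ z * B2 τ z
      + 25 * E4 τ ^ 4 * E6 τ * B2 τ z ^ 2
      - 48 * E4 τ ^ 4 * E6 τ * A1 τ z ^ 2 * A2 τ z
      + (-140 * E4 τ ^ 5 + 60 * E4 τ ^ 2 * E6 τ ^ 2) * A1 τ z ^ 2 * B2 τ z
      + (74 * E4 τ ^ 3 * E6 τ - 10 * E6 τ ^ 3) * A1 τ z ^ 4)

def b5f (τ : ℂ) (z : Fin 8 → ℂ) : ℂ :=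
  1 / (72 * E4 τ ^ 5 * Dl τ ^ 3) *
    (-36288 * E4 τ ^ 4 * Dl τ * A5 τ z - 294 * E4 τ ^ 6 * A2 τ z * A3 τ z
      - 770 * E4 τ ^ 4 * E6 τ * B2 τ z * A3 τ z - 840 * E4 τ ^ 4 * E6 τ * A2 τ z * B3 τ z
      - 2200 * E4 τ ^ 5 * B2 τ z * B3 τ z + 168 * E4 τ ^ 5 * A1 τ z ^ 2 * A3 τ z
      + 480 * E4 τ ^ 3 * E6 τ * A1 τ z ^ 2 * B3 τ z - 621 * E4 τ ^ 5 * A1 τ z * A2 τ z ^ 2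
      + 3525 * E4 τ ^ 4 * A1 τ z * B2 τ z ^ 2 + 1224 * E4 τ ^ 4 * A1 τ z ^ 3 * A2 τ z
      - 240 * E4 τ ^ 2 * E6 τ * A1 τ z ^ 3 * B2 τ z
      + (-456 * E4 τ ^ 3 + 24 * E6 τ ^ 2) * A1 τ z ^ 5)

def b6f (τ : ℂ) (z : Fin 8 → ℂ) : ℂ :=
  1 / (4478976 * E4 τ ^ 6 * Dl τ ^ 5) *
    (-19906560 * E4 τ ^ 6 * Dl τ ^ 2 * B6 τ z
      - 188116992 * E4 τ ^ 4 * E6 τ * Dl τ ^ 2 * A1 τ z * A5 τ z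
      - 5184 * E4 τ ^ 7 * E6 τ * Dl τ * A2 τ z * A4 τ z
      - 8640 * E4 τ ^ 8 * Dl τ * B2 τ z * A4 τ z
      - 103680 * E4 τ ^ 8 * Dl τ * A2 τ z * B4 τ z
      - 172800 * E4 τ ^ 6 * E6 τ * Dl τ * B2 τ z * B4 τ z
      + 12672 * E4 τ ^ 6 * E6 τ * Dl τ * A1 τ z ^ 2 * A4 τ z
      + 17280 * (5 * E4 τ ^ 7 + 9 * E4 τ ^ 4 * E6 τ ^ 2) * Dl τ * A1 τ z ^ 2 * B4 τ z
      + 112896 * E4 τ ^ 7 * E6 τ * Dl τ * A3 τ z ^ 2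
      + 645120 * E4 τ ^ 8 * Dl τ * A3 τ z * B3 τ z
      + 921600 * E4 τ ^ 6 * E6 τ * Dl τ * B3 τ z ^ 2
      - 1717632 * E4 τ ^ 6 * E6 τ * Dl τ * A1 τ z * A2 τ z * A3 τ z
      - 362880 * (4 * E4 τ ^ 7 + 11 * E4 τ ^ 4 * E6 τ ^ 2) * Dl τ * A1 τ z * B2 τ z * A3 τ z
      + 483840 * (4 * E4 τ ^ 7 - 9 * E4 τ ^ 4 * E6 τ ^ 2) * Dl τ * A1 τ z * A2 τ z * B3 τ z
      - 11404800 * E4 τ ^ 5 * E6 τ * Dl τ * A1 τ z * B2 τ z * B3 τ z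
      + 1161216 * E4 τ ^ 5 * E6 τ * Dl τ * A1 τ z ^ 3 * A3 τ z
      - 92160 * (37 * E4 τ ^ 6 - 9 * E4 τ ^ 3 * E6 τ ^ 2) * Dl τ * A1 τ z ^ 3 * B3 τ z
      + (135 * E4 τ ^ 9 * E6 τ + 54 * E4 τ ^ 6 * E6 τ ^ 3) * A2 τ z ^ 3
      + (405 * E4 τ ^ 10 + 540 * E4 τ ^ 7 * E6 τ ^ 2) * A2 τ z ^ 2 * B2 τ z
      + 1575 * E4 τ ^ 8 * E6 τ * A2 τ z * B2 τ z ^ 2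
      + (375 * E4 τ ^ 9 + 500 * E4 τ ^ 6 * E6 τ ^ 2) * B2 τ z ^ 3
      + (-3159 * E4 τ ^ 8 * E6 τ + 1701 * E4 τ ^ 5 * E6 τ ^ 3) * A1 τ z ^ 2 * A2 τ z ^ 2
      + (-3060 * E4 τ ^ 9 - 1800 * E4 τ ^ 6 * E6 τ ^ 2) * A1 τ z ^ 2 * A2 τ z * B2 τ z
      + (6975 * E4 τ ^ 7 * E6 τ - 11025 * E4 τ ^ 4 * E6 τ ^ 3) * A1 τ z ^ 2 * B2 τ z ^ 2
      + (6768 * E4 τ ^ 7 * E6 τ - 3024 * E4 τ ^ 4 * E6 τ ^ 3) * A1 τ z ^ 4 * A2 τ z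
      + (4260 * E4 τ ^ 8 + 1800 * E4 τ ^ 5 * E6 τ ^ 2 + 180 * E4 τ ^ 2 * E6 τ ^ 4) * A1 τ z ^ 4 * B2 τ z
      + (-3692 * E4 τ ^ 6 * E6 τ + 504 * E4 τ ^ 3 * E6 τ ^ 3 - 12 * E6 τ ^ 5) * A1 τ z ^ 6)

/-- The Seiberg–Witten coefficients a_0, …, a_4 (a_1 = 0). -/
def aSW : ℕ → ℂ → (Fin 8 → ℂ) → ℂ
  | 0 => a0f
  | 2 => a2f
  | 3 => a3f
  | 4 => a4f
  | _ => fun _ _ => 0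

/-- The Seiberg–Witten coefficients b_0, …, b_6. -/
def bSW : ℕ → ℂ → (Fin 8 → ℂ) → ℂ
  | 0 => b0f
  | 1 => b1f
  | 2 => b2f
  | 3 => b3f
  | 4 => b4f
  | 5 => b5f
  | 6 => b6f
  | _ => fun _ _ => 0

/-- The translation parameter −b₁/(6b₀). -/
def uShift (τ : ℂ) (z : Fin 8 → ℂ) : ℂ := -(bSW 1 τ z) / (6 * bSW 0 τ z)

/-- The coefficients c_i. -/
def cSW (i : ℕ) (τ : ℂ) (z : Fin 8 → ℂ) : ℂ :=
  ∑ j ∈ Finset.range (i+1), aSW j τ z * (Nat.choose (4-j) (4-i) : ℂ) * uShift τ z ^ (i-j)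

/-- The coefficients d_j. -/
def dSW (j : ℕ) (τ : ℂ) (z : Fin 8 → ℂ) : ℂ :=
  ∑ l ∈ Finset.range (j+1), bSW l τ z * (Nat.choose (6-l) (6-j) : ℂ) * uShift τ z ^ (j-l)

/-- Points of the upper half-plane avoiding the zeros of E4, E6 and Δ
(where all the meromorphic Jacobi forms above are defined). -/
def GoodTau (τ : ℂ) : Prop := 0 < τ.im ∧ E4 τ ≠ 0 ∧ E6 τ ≠ 0 ∧ Dl τ ≠ 0

/-- The eleven generators a_0, a_2, a_3, a_4, b_0, …, b_6 of R. -/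
def abGens : Fin 11 → ℂ → (Fin 8 → ℂ) → ℂ :=
  ![aSW 0, aSW 2, aSW 3, aSW 4, bSW 0, bSW 1, bSW 2, bSW 3, bSW 4, bSW 5, bSW 6]

/-- The eleven generators c_0, …, c_4, d_0, d_2, …, d_6 of R̃. -/
def cdGens : Fin 11 → ℂ → (Fin 8 → ℂ) → ℂ :=
  ![cSW 0, cSW 1, cSW 2, cSW 3, cSW 4, dSW 0, dSW 2, dSW 3, dSW 4, dSW 5, dSW 6]

/-- Membership in the polynomial ring R = ℂ[a_0,a_2,a_3,a_4,b_0,…,b_6]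
(as meromorphic functions on ℍ × ℂ^8). -/
def MemR (φ : ℂ → (Fin 8 → ℂ) → ℂ) : Prop :=
  ∃ P : MvPolynomial (Fin 11) ℂ, ∀ τ : ℂ, GoodTau τ → ∀ z,
    φ τ z = MvPolynomial.eval (fun i => abGens i τ z) P

/-- Membership in the polynomial ring R̃ = ℂ[c_0,…,c_4,d_0,d_2,…,d_6]
(as meromorphic functions on ℍ × ℂ^8). -/
def MemRt (φ : ℂ → (Fin 8 → ℂ) → ℂ) : Prop :=
  ∃ P : MvPolynomial (Fin 11) ℂ, ∀ τ : ℂ, GoodTau τ → ∀ z,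
    φ τ z = MvPolynomial.eval (fun i => cdGens i τ z) P

/- Invariant theory of binary forms. -/

/-- `BinTrans n T α α'` says that `α'` is the coefficient family of the degree-`n`
binary form with coefficients `α` transformed by `T ∈ SL2(ℂ)`. -/
def BinTrans (n : ℕ) (T : Matrix (Fin 2) (Fin 2) ℂ) (α α' : ℕ → ℂ) : Prop :=
  ∀ u v : ℂ,
    ∑ j ∈ Finset.range (n+1), α' j * u ^ (n - j) * v ^ j
      = ∑ i ∈ Finset.range (n+1), α i * (T 0 0 * u + T 0 1 * v) ^ (n - i) *
          (T 1 0 * u + T 1 1 * v) ^ i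

/-- Variables for polynomials in the coefficients of a binary quartic and sextic. -/
abbrev SV := Fin 5 ⊕ Fin 7

/-- Evaluation of a polynomial in the coefficients of the quartic and sextic. -/
def evalSV (Φ : MvPolynomial SV ℂ) (α β : ℕ → ℂ) : ℂ :=
  MvPolynomial.eval (Sum.elim (fun i : Fin 5 => α i.1) (fun j : Fin 7 => β j.1)) Φ

/-- Membership in the ring of joint semiinvariants ℂ[V4 ⊕ V6]^{U2(ℂ)}. -/
def IsSemiinvRingElem (Φ : MvPolynomial SV ℂ) : Prop :=
  ∀ κ : ℂ, ∀ α α' β β' : ℕ → ℂ,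
    BinTrans 4 !![1, κ; 0, 1] α α' → BinTrans 6 !![1, κ; 0, 1] β β' →
      evalSV Φ α' β' = evalSV Φ α β

/-- Membership in the ring of joint invariants ℂ[V4 ⊕ V6]^{SL2(ℂ)}. -/
def IsInvRingElem (Φ : MvPolynomial SV ℂ) : Prop :=
  ∀ T : Matrix (Fin 2) (Fin 2) ℂ, T.det = 1 → ∀ α α' β β' : ℕ → ℂ,
    BinTrans 4 T α α' → BinTrans 6 T β β' → evalSV Φ α' β' = evalSV Φ α β

/-- Variables for joint covariants: coefficients of the two forms together with (u,v). -/
abbrev CVV := (Fin 5 ⊕ Fin 7) ⊕ Fin 2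

/-- Evaluation of a polynomial in the coefficients and (u,v). -/
def evalCov (Ψ : MvPolynomial CVV ℂ) (α β : ℕ → ℂ) (u v : ℂ) : ℂ :=
  MvPolynomial.eval
    (Sum.elim (Sum.elim (fun i : Fin 5 => α i.1) (fun j : Fin 7 => β j.1))
      (fun p : Fin 2 => if p = 0 then u else v)) Ψ

/-- Membership in the ring of joint covariants ℂ[V4 ⊕ V6 ⊕ ℂ²]^{SL2(ℂ)}. -/
def IsCovRingElem (Ψ : MvPolynomial CVV ℂ) : Prop :=
  ∀ T : Matrix (Fin 2) (Fin 2) ℂ, T.det = 1 → ∀ α α' β β' : ℕ → ℂ,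
    BinTrans 4 T α α' → BinTrans 6 T β β' → ∀ u v : ℂ,
      evalCov Ψ α' β' u v = evalCov Ψ α β (T 0 0 * u + T 0 1 * v) (T 1 0 * u + T 1 1 * v)

/-- â_i in ℂ[α, β, α₀⁻¹]. -/
def ahat (α : ℕ → ℂ) (i : ℕ) : ℂ :=
  ∑ j ∈ Finset.range (i+1), α j * (Nat.choose (4-j) (4-i) : ℂ) * (-(α 1)/(4 * α 0)) ^ (i-j)

/-- b̂_i in ℂ[α, β, α₀⁻¹]. -/
def bhat (α β : ℕ → ℂ) (i : ℕ) : ℂ :=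
  ∑ j ∈ Finset.range (i+1), β j * (Nat.choose (6-j) (6-i) : ℂ) * (-(α 1)/(4 * α 0)) ^ (i-j)

/-- ĉ_i in ℂ[α, β, β₀⁻¹]. -/
def chat (α β : ℕ → ℂ) (i : ℕ) : ℂ :=
  ∑ j ∈ Finset.range (i+1), α j * (Nat.choose (4-j) (4-i) : ℂ) * (-(β 1)/(6 * β 0)) ^ (i-j)

/-- d̂_i in ℂ[α, β, β₀⁻¹]. -/
def dhat (β : ℕ → ℂ) (i : ℕ) : ℂ :=
  ∑ j ∈ Finset.range (i+1), β j * (Nat.choose (6-j) (6-i) : ℂ) * (-(β 1)/(6 * β 0)) ^ (i-j)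

/-- The images of the eleven generators of R under ψ. -/
def hatGens (α β : ℕ → ℂ) : Fin 11 → ℂ :=
  ![ahat α 0, ahat α 2, ahat α 3, ahat α 4, bhat α β 0, bhat α β 1, bhat α β 2,
    bhat α β 3, bhat α β 4, bhat α β 5, bhat α β 6]

/-- The images of the eleven generators of R̃ under ψ̃. -/
def cdhatGens (α β : ℕ → ℂ) : Fin 11 → ℂ :=
  ![chat α β 0, chat α β 1, chat α β 2, chat α β 3, chat α β 4, dhat β 0, dhat β 2,
    dhat β 3, dhat β 4, dhat β 5, dhat β 6]

/-- Weights picking out the a-variables among the eleven generators. -/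
def wA : Fin 11 → ℕ := ![1, 1, 1, 1, 0, 0, 0, 0, 0, 0, 0]

/-- Weights picking out the b-variables among the eleven generators. -/
def wB : Fin 11 → ℕ := ![0, 0, 0, 0, 1, 1, 1, 1, 1, 1, 1]

/-- Weights picking out the α-variables. -/
def wSVα : SV → ℕ := Sum.elim (fun _ => 1) (fun _ => 0)

/-- Weights picking out the β-variables. -/
def wSVβ : SV → ℕ := Sum.elim (fun _ => 0) (fun _ => 1)

/-- A joint semiinvariant of the quartic and sextic, of degrees (da, db) and order ω. -/
def IsSemiinvOf (Φ : MvPolynomial SV ℂ) (da db : ℕ) (ω : ℤ) : Prop :=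
  MvPolynomial.IsWeightedHomogeneous wSVα Φ da ∧
  MvPolynomial.IsWeightedHomogeneous wSVβ Φ db ∧
  IsSemiinvRingElem Φ ∧
  ∀ l : ℂ, l ≠ 0 → ∀ α α' β β' : ℕ → ℂ,
    BinTrans 4 !![l, 0; 0, l⁻¹] α α' → BinTrans 6 !![l, 0; 0, l⁻¹] β β' →
      evalSV Φ α' β' = l ^ ω * evalSV Φ α β

/-- Substitution α_i ↦ a_i (with a_1 = 0), β_j ↦ b_j into a polynomial in (α, β). -/
def subAB (Φ : MvPolynomial SV ℂ) : ℂ → (Fin 8 → ℂ) → ℂ :=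
  fun τ z => MvPolynomial.eval
    (Sum.elim (fun i : Fin 5 => aSW i.1 τ z) (fun j : Fin 7 => bSW j.1 τ z)) Φ

/-- The graph of the map ψ_J : a Jacobi form φ = Q(a_i, b_j) is sent to the
polynomial Φ = Q(â_i, b̂_j). -/
def PsiJRel (φ : ℂ → (Fin 8 → ℂ) → ℂ) (Φ : MvPolynomial SV ℂ) : Prop :=
  ∃ Q : MvPolynomial (Fin 11) ℂ,
    (∀ τ : ℂ, GoodTau τ → ∀ z, φ τ z = MvPolynomial.eval (fun i => abGens i τ z) Q) ∧
    (∀ α β : ℕ → ℂ, α 0 ≠ 0 → evalSV Φ α β = MvPolynomial.eval (hatGens α β) Q)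

/-!
The lattice `E₈` contains `A₄ ⊕ A₄` with index `5`, and the product `σ` of Coxeter elements of the
two factors has order `5`, with every nontrivial fifth root of unity as an eigenvalue of
multiplicity `2` on `ℂ⁸`. At a point fixed by `σ` modulo periods, an invariant form of index `m`
takes a value `V = ζ^m V`, which vanishes unless `5 ∣ m`, and has its differential in the
two-dimensional `ζ^m`-eigenspace. Hence among the nine forms only `A₅` can be nonzero there, while
the differentials of the others pair up as `(A₁, B₆)`, `(A₂, B₂)`, `(A₃, B₃)`, `(A₄, B₄)`, one pair
in each eigenspace. The four resulting `2 × 2` determinants and the value of `A₅` are nonzero for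
`τ = iT` with `T` large, by their leading terms in `q`. So the nine forms have a nonsingular
Jacobian in the eight coordinates of `z` and one scaling variable `t` that acts on index `m` by
`t ^ m`; an algebraic relation is invariant under this scaling since it holds at infinitely many
translates by periods, which carry different factors of automorphy. For such `τ` the nine forms are
therefore algebraically independent over `ℂ`. A nonzero coefficient in `ℂ[E₄, E₆]` of a relation
cannot vanish at all large `T`, which excludes a relation over `ℂ[E₄, E₆]`.
-/

open scoped Topology
open Filter Asymptotics

/-! ### Gaussian sums over slices of `ℤⁿ` -/

section Slices

variable {ι : Type*} [Fintype ι]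

lemma summable_prod_apply_fin {α : Type*} {f : α → ℝ} (hf : Summable f) (h0 : ∀ x, 0 ≤ f x) :
    ∀ n : ℕ, Summable fun a : Fin n → α => ∏ i, f (a i)
  | 0 => Summable.of_finite
  | n + 1 => by
    rw [← (Fin.consEquiv fun _ => α).summable_iff]
    refine (hf.mul_of_nonneg (summable_prod_apply_fin hf h0 n) h0
      fun a => prod_nonneg fun i _ => h0 _).congr fun b => ?_
    simp [Fin.prod_univ_succ, Fin.consEquiv]

lemma summable_prod_apply {α : Type*} {f : α → ℝ} (hf : Summable f) (h0 : ∀ x, 0 ≤ f x) :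
    Summable fun a : ι → α => ∏ i, f (a i) := by
  rw [← ((Fintype.equivFin ι).arrowCongr (Equiv.refl α)).symm.summable_iff]
  refine (summable_prod_apply_fin hf h0 (Fintype.card ι)).congr fun a => ?_
  exact ((Fintype.equivFin ι).prod_comp fun i => f (a i)).symm

lemma hasStrictFDerivAt_tsum {α E F : Type*} [NormedAddCommGroup E] [NormedSpace ℂ E]
    [NormedAddCommGroup F] [NormedSpace ℂ F] [CompleteSpace F] {f : α → E → F}
    {f' : α → E → E →L[ℂ] F} {u : α → ℝ} {s : Set E} {x : E} (hu : Summable u)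
    (hs : IsOpen s) (hs' : IsPreconnected s) (hf : ∀ a, ∀ y ∈ s, HasFDerivAt (f a) (f' a y) y)
    (hf'c : ∀ a, ContinuousOn (f' a) s) (hf' : ∀ a, ∀ y ∈ s, ‖f' a y‖ ≤ u a) (hx : x ∈ s)
    (hfx : Summable fun a => f a x) :
    HasStrictFDerivAt (fun y => ∑' a, f a y) (∑' a, f' a x) x :=
  hasStrictFDerivAt_of_hasFDerivAt_of_continuousAt
    (eventually_of_mem (hs.mem_nhds hx) fun _ hy =>
      hasFDerivAt_tsum_of_isPreconnected hu hs hs' hf hf' hx hfx hy)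
    ((continuousOn_tsum hf'c hu fun a y hy => hf' a y hy).continuousAt (hs.mem_nhds hx))

/-- The affine slice `∑ᵢ aᵢ = c` of the lattice `ℤ^ι`; modulo the all-ones vector it is a coset of
the root lattice `A_{n-1}`, `n = #ι`, in its dual. -/
abbrev Slice (ι : Type*) [Fintype ι] (c : ℤ) : Type _ := {a : ι → ℤ // ∑ i, a i = c}

/-- The squared length of the projection of an integer vector to the hyperplane of vectors with
coordinate sum zero. -/
def sliceNorm (a : ι → ℤ) : ℂ := ∑ i, (a i : ℂ) ^ 2 - (∑ i, (a i : ℂ)) ^ 2 / Fintype.card ι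

/-- The term of the vector `a` in the theta series of a slice. -/
def sliceTerm (τ : ℂ) (p : ι → ℂ) (a : ι → ℤ) : ℂ :=
  cexp (πC * I * τ * sliceNorm a + 2 * πC * I * ∑ i, (a i : ℂ) * p i)

/-- The theta series of a slice. -/
def sliceTheta (c : ℤ) (τ : ℂ) (p : ι → ℂ) : ℂ := ∑' a : Slice ι c, sliceTerm τ p a.1

lemma Slice.sum_cast {c : ℤ} (a : Slice ι c) : ∑ i, (a.1 i : ℂ) = c := by
  exact_mod_cast a.2

/-- The majorant of a factor of a theta series, uniform over points of norm at most `R`. -/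
def gaussBound (T R : ℝ) (n : ℤ) : ℝ := Real.exp (-Real.pi * (T * n ^ 2 - 2 * R * |n|))

lemma summable_prod_gaussBound {T : ℝ} (hT : 0 < T) (R : ℝ) :
    Summable fun a : ι → ℤ => ∏ i, gaussBound T R (a i) :=
  summable_prod_apply ((summable_pow_mul_jacobiTheta₂_term_bound R hT 0).congr fun n => by
    rw [pow_zero, one_mul, gaussBound]) fun _ => (Real.exp_pos _).le

lemma gaussBound_add_one (T R : ℝ) (n : ℤ) :
    gaussBound T (R + 1) n = Real.exp (2 * Real.pi * |n|) * gaussBound T R n := by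
  rw [gaussBound, gaussBound, ← Real.exp_add]
  congr 1
  ring

lemma sum_abs_mul_prod_gaussBound_le (T R : ℝ) (a : ι → ℤ) :
    (∑ i, |(a i : ℝ)|) * ∏ i, gaussBound T R (a i) ≤ ∏ i, gaussBound T (R + 1) (a i) := by
  simp only [gaussBound_add_one, prod_mul_distrib, ← Real.exp_sum, ← mul_sum, Int.cast_abs]
  refine mul_le_mul_of_nonneg_right ?_ (prod_nonneg fun _ _ => (Real.exp_pos _).le)
  have h_exp := Real.add_one_le_exp (2 * Real.pi * ∑ i, |(a i : ℝ)|)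
  have h_sum : 0 ≤ ∑ i, |(a i : ℝ)| := sum_nonneg fun _ _ => abs_nonneg _
  nlinarith [Real.pi_gt_three]

lemma sliceTerm_eq_mul_prod {c : ℤ} (τ : ℂ) (p : ι → ℂ) (a : Slice ι c) :
    sliceTerm τ p a.1 =
      cexp (-(πC * I * τ * c ^ 2 / Fintype.card ι)) * ∏ i, jacobiTheta₂_term (a.1 i) (p i) τ := by
  have h_factor : ∀ i, jacobiTheta₂_term (a.1 i) (p i) τ =
      cexp (πC * I * τ * a.1 i ^ 2 + 2 * πC * I * (a.1 i * p i)) := fun i => by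
    rw [jacobiTheta₂_term, πC]
    ring_nf
  simp only [h_factor, ← Complex.exp_sum, ← Complex.exp_add, sum_add_distrib, ← mul_sum, sliceTerm,
    sliceNorm, a.sum_cast]
  ring_nf

/-- The norm of the normalising factor of the theta series of a slice. -/
def sliceScale (ι : Type*) [Fintype ι] (c : ℤ) (τ : ℂ) : ℝ :=
  ‖cexp (-(πC * I * τ * c ^ 2 / Fintype.card ι))‖

lemma norm_sliceTerm_le {c : ℤ} {τ : ℂ} (hτ : 0 < τ.im) {p : ι → ℂ} {R : ℝ} (hp : ‖p‖ ≤ R)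
    (a : Slice ι c) :
    ‖sliceTerm τ p a.1‖ ≤ sliceScale ι c τ * ∏ i, gaussBound τ.im R (a.1 i) := by
  rw [sliceTerm_eq_mul_prod, norm_mul, norm_prod, sliceScale]
  gcongr with i
  rw [gaussBound, Int.cast_abs, ← Int.cast_abs]
  exact norm_jacobiTheta₂_term_le hτ
    ((abs_im_le_norm _).trans ((norm_le_pi_norm p i).trans hp)) le_rfl (a.1 i)

lemma summable_mul_prod_gaussBound {τ : ℂ} (hτ : 0 < τ.im) (C R : ℝ) (c : ℤ) :
    Summable fun a : Slice ι c => C * ∏ i, gaussBound τ.im R (a.1 i) :=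
  ((summable_prod_gaussBound hτ R).mul_left C).subtype {a : ι → ℤ | ∑ i, a i = c}

lemma summable_norm_sliceTerm {τ : ℂ} (hτ : 0 < τ.im) (c : ℤ) (p : ι → ℂ) :
    Summable fun a : Slice ι c => ‖sliceTerm τ p a.1‖ :=
  (summable_mul_prod_gaussBound hτ _ ‖p‖ c).of_nonneg_of_le (fun _ => norm_nonneg _)
    (norm_sliceTerm_le hτ le_rfl)

/-- The linear form with integer coefficients `a`. -/
def intForm (a : ι → ℤ) : (ι → ℂ) →L[ℂ] ℂ := ∑ i, (a i : ℂ) • ContinuousLinearMap.proj i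

lemma intForm_apply (a : ι → ℤ) (h : ι → ℂ) : intForm a h = ∑ i, (a i : ℂ) * h i := by
  simp [intForm]

lemma norm_intForm_le (a : ι → ℤ) : ‖intForm a‖ ≤ ∑ i, |(a i : ℝ)| := by
  refine ContinuousLinearMap.opNorm_le_bound _ (sum_nonneg fun _ _ => abs_nonneg _) fun h => ?_
  rw [intForm_apply, sum_mul]
  refine norm_sum_le_of_le _ fun i _ => ?_
  rw [norm_mul, norm_intCast]
  gcongr
  exact norm_le_pi_norm h i

/-- The differential of the term of `a` in the theta series of a slice. -/
def sliceTermDeriv (τ : ℂ) (p : ι → ℂ) (a : ι → ℤ) : (ι → ℂ) →L[ℂ] ℂ :=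
  (2 * πC * I * sliceTerm τ p a) • intForm a

lemma hasFDerivAt_sliceTerm (τ : ℂ) (p : ι → ℂ) (a : ι → ℤ) :
    HasFDerivAt (fun p => sliceTerm τ p a) (sliceTermDeriv τ p a) p := by
  have h_exponent : HasFDerivAt (fun p : ι → ℂ =>
      πC * I * τ * sliceNorm a + 2 * πC * I * intForm a p) ((2 * πC * I) • intForm a) p :=
    ((intForm a).hasFDerivAt.const_mul _).const_add _
  have h_exp := h_exponent.cexp
  simp only [intForm_apply, smul_smul] at h_exp
  rw [sliceTermDeriv, mul_comm (2 * πC * I)]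
  exact h_exp

lemma norm_sliceTermDeriv_le {c : ℤ} {τ : ℂ} (hτ : 0 < τ.im) {p : ι → ℂ} {R : ℝ} (hp : ‖p‖ ≤ R)
    (a : Slice ι c) :
    ‖sliceTermDeriv τ p a.1‖ ≤
      ‖2 * πC * I‖ * sliceScale ι c τ * ∏ i, gaussBound τ.im (R + 1) (a.1 i) := by
  have h_scale : 0 ≤ sliceScale ι c τ := norm_nonneg _
  calc ‖sliceTermDeriv τ p a.1‖
      = ‖2 * πC * I‖ * ‖sliceTerm τ p a.1‖ * ‖intForm a.1‖ := by
        rw [sliceTermDeriv, norm_smul, norm_mul]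
    _ ≤ ‖2 * πC * I‖ * (sliceScale ι c τ * ∏ i, gaussBound τ.im R (a.1 i)) *
          ∑ i, |(a.1 i : ℝ)| := by
        gcongr
        · exact mul_nonneg (norm_nonneg _)
            (mul_nonneg h_scale (prod_nonneg fun _ _ => (Real.exp_pos _).le))
        · exact norm_sliceTerm_le hτ hp a
        · exact norm_intForm_le a.1
    _ = ‖2 * πC * I‖ * sliceScale ι c τ *
          ((∑ i, |(a.1 i : ℝ)|) * ∏ i, gaussBound τ.im R (a.1 i)) := by ring
    _ ≤ _ := by
        gcongr
        exact sum_abs_mul_prod_gaussBound_le _ _ _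

lemma summable_sliceTermDeriv {τ : ℂ} (hτ : 0 < τ.im) (c : ℤ) (p : ι → ℂ) :
    Summable fun a : Slice ι c => sliceTermDeriv τ p a.1 :=
  .of_norm_bounded (summable_mul_prod_gaussBound hτ _ (‖p‖ + 1) c)
    (norm_sliceTermDeriv_le hτ le_rfl)

lemma hasStrictFDerivAt_sliceTheta {τ : ℂ} (hτ : 0 < τ.im) (c : ℤ) (p : ι → ℂ) :
    HasStrictFDerivAt (sliceTheta c τ) (∑' a : Slice ι c, sliceTermDeriv τ p a.1) p := by
  have h_cont : ∀ a : Slice ι c, Continuous fun q : ι → ℂ => sliceTermDeriv τ q a.1 := fun a =>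
    have h_term : Continuous fun q : ι → ℂ => sliceTerm τ q a.1 :=
      continuous_iff_continuousAt.2 fun q => (hasFDerivAt_sliceTerm τ q a.1).continuousAt
    (continuous_const.mul h_term).smul continuous_const
  exact hasStrictFDerivAt_tsum (f := fun (a : Slice ι c) q => sliceTerm τ q a.1)
    (f' := fun a q => sliceTermDeriv τ q a.1) (s := Metric.ball 0 (‖p‖ + 1))
    (summable_mul_prod_gaussBound hτ (‖2 * πC * I‖ * sliceScale ι c τ) (‖p‖ + 1 + 1) c)
    Metric.isOpen_ball (convex_ball _ _).isPreconnected
    (fun a q _ => hasFDerivAt_sliceTerm τ q a.1) (fun a => (h_cont a).continuousOn)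
    (fun a q hq => norm_sliceTermDeriv_le hτ (mem_ball_zero_iff.1 hq).le a)
    (mem_ball_zero_iff.2 (lt_add_one _)) (summable_norm_sliceTerm hτ c p).of_norm

end Slices

section Translation

variable {ι : Type*} [Fintype ι]

/-- Translation by an integer vector, as a bijection between slices. -/
def sliceShift (v : ι → ℤ) {c c' : ℤ} (h : c + ∑ i, v i = c') : Slice ι c ≃ Slice ι c' :=
  (Equiv.addRight v).subtypeEquiv fun a => by
    simp only [Equiv.coe_addRight, Pi.add_apply, sum_add_distrib, ← h, add_left_inj]

lemma coe_sliceShift (v : ι → ℤ) {c c' : ℤ} (h : c + ∑ i, v i = c') (a : Slice ι c) :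
    (sliceShift v h a).1 = a.1 + v := rfl

/-- Permutation of the coordinates, as a bijection of a slice. -/
def slicePerm (c : ℤ) (e : Equiv.Perm ι) : Slice ι c ≃ Slice ι c :=
  (e.symm.arrowCongr (Equiv.refl ℤ)).subtypeEquiv fun a => by
    simp [Equiv.sum_comp e]

lemma sliceNorm_add_const [Nonempty ι] (a : ι → ℤ) (n : ℤ) :
    sliceNorm (a + fun _ => n) = sliceNorm a := by
  have h_card : (Fintype.card ι : ℂ) ≠ 0 := Nat.cast_ne_zero.2 Fintype.card_ne_zero
  simp only [sliceNorm, Pi.add_apply, Int.cast_add, add_sq, sum_add_distrib, ← mul_sum, ← sum_mul,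
    sum_const, card_univ, nsmul_eq_mul]
  field_simp
  ring

lemma sliceTheta_add_card_mul [Nonempty ι] (c n : ℤ) (τ : ℂ) {p : ι → ℂ} (hp : ∑ i, p i = 0) :
    sliceTheta (c + Fintype.card ι * n) τ p = sliceTheta c τ p := by
  rw [sliceTheta, sliceTheta,
    ← (sliceShift (fun _ => n) (c := c) (c' := c + Fintype.card ι * n) (by simp)).tsum_eq]
  refine tsum_congr fun a => ?_
  simp only [coe_sliceShift, sliceTerm, sliceNorm_add_const, Pi.add_apply, Int.cast_add, add_mul,
    sum_add_distrib, ← mul_sum, hp, mul_zero, add_zero]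

lemma sliceTheta_congr [Nonempty ι] {c c' : ℤ} (h : c ≡ c' [ZMOD Fintype.card ι]) (τ : ℂ)
    {p : ι → ℂ} (hp : ∑ i, p i = 0) : sliceTheta c τ p = sliceTheta c' τ p := by
  obtain ⟨n, hn⟩ := h.dvd
  rw [← sliceTheta_add_card_mul c n τ hp, ← hn, add_sub_cancel]

variable [DecidableEq ι]

/-- The projection of the `j`-th coordinate vector to the hyperplane of vectors of sum zero. -/
def weightVec (j : ι) : ι → ℂ := Pi.single j 1 - fun _ => (Fintype.card ι : ℂ)⁻¹

lemma sum_mul_weightVec (a : ι → ℂ) (j : ι) :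
    ∑ i, a i * weightVec j i = a j - (∑ i, a i) / Fintype.card ι := by
  simp [weightVec, mul_sub, Pi.single_apply, ← sum_mul, div_eq_mul_inv]

lemma sliceNorm_add_single (a : ι → ℤ) (j : ι) (M : ℤ) :
    sliceNorm (a + Pi.single j M) = sliceNorm a + 2 * M * a j + M ^ 2 -
      (2 * M * (∑ i, (a i : ℂ)) + M ^ 2) / Fintype.card ι := by
  simp only [sliceNorm, Pi.add_apply, Int.cast_add, add_sq, sum_add_distrib, Pi.single_apply,
    Int.cast_ite, Int.cast_zero, mul_ite, ite_pow, mul_zero, zero_pow two_ne_zero, sum_ite_eq',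
    mem_univ, if_true]
  ring

lemma sliceTheta_add_smul_weightVec (c M : ℤ) (τ : ℂ) (p : ι → ℂ) (j : ι) :
    sliceTheta c τ (p + (M * τ) • weightVec j) =
      cexp (-(πC * I * τ * (1 - (Fintype.card ι : ℂ)⁻¹) * M ^ 2) - 2 * πC * I * M * p j) *
        sliceTheta (c + M) τ p := by
  rw [sliceTheta, sliceTheta,
    ← (sliceShift (Pi.single j M) (c := c) (c' := c + M) (by simp)).tsum_eq, ← tsum_mul_left]
  refine tsum_congr fun a => ?_
  have h_pairing : ∑ i, ((a.1 + Pi.single j M : ι → ℤ) i : ℂ) * p i =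
      ∑ i, (a.1 i : ℂ) * p i + M * p j := by
    simp [add_mul, sum_add_distrib, Pi.single_apply]
  simp only [coe_sliceShift, sliceTerm, sliceNorm_add_single, h_pairing, a.sum_cast,
    ← Complex.exp_add]
  simp only [Pi.add_apply, Pi.smul_apply, smul_eq_mul, mul_add, mul_left_comm _ (M * τ),
    sum_add_distrib, ← mul_sum (f := fun i => (a.1 i : ℂ) * weightVec j i), sum_mul_weightVec,
    a.sum_cast]
  ring_nf

lemma sliceTheta_sub_smul_weightVec (c s : ℤ) (τ : ℂ) (p : ι → ℂ) (j : ι) :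
    sliceTheta c τ (p - (s : ℂ) • weightVec j) =
      cexp (2 * πC * I * (s * c / Fintype.card ι)) * sliceTheta c τ p := by
  rw [sliceTheta, sliceTheta, ← tsum_mul_left]
  refine tsum_congr fun a => ?_
  simp only [sliceTerm, Pi.sub_apply, Pi.smul_apply, smul_eq_mul, mul_sub, mul_left_comm _ (s : ℂ),
    sum_sub_distrib, ← mul_sum (f := fun i => (a.1 i : ℂ) * weightVec j i), sum_mul_weightVec,
    a.sum_cast, ← Complex.exp_add]
  refine Complex.exp_eq_exp_iff_exists_int.2 ⟨-(s * a.1 j), ?_⟩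
  push_cast [πC]
  ring

end Translation

/-! ### Points fixed by a permutation of the coordinates -/

section FixedPoint

variable {ι : Type*} [Fintype ι]

lemma sliceTerm_comp_perm {c : ℤ} {e : Equiv.Perm ι} {s : ℂ} {p : ι → ℂ}
    (hp : ∀ i, ∃ n : ℤ, p (e i) = p i + s + n) (τ : ℂ) (a : Slice ι c) :
    sliceTerm τ p a.1 = cexp (2 * πC * I * (s * c)) * sliceTerm τ p (slicePerm c e a).1 := by
  choose n hn using hp
  have h_norm : sliceNorm (slicePerm c e a).1 = sliceNorm a.1 := by
    change sliceNorm (a.1 ∘ e) = _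
    simp only [sliceNorm, Function.comp_apply, Equiv.sum_comp e fun i => (a.1 i : ℂ) ^ 2,
      Equiv.sum_comp e fun i => (a.1 i : ℂ)]
  have h_pairing : ∑ i, (a.1 i : ℂ) * p i =
      ∑ i, ((slicePerm c e a).1 i : ℂ) * p i + s * c + ∑ i, (a.1 (e i) * n i : ℂ) := by
    change _ = ∑ i, (a.1 (e i) : ℂ) * p i + s * c + ∑ i, (a.1 (e i) : ℂ) * n i
    rw [← Equiv.sum_comp e, ← a.sum_cast, ← Equiv.sum_comp e fun i => (a.1 i : ℂ), mul_sum,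
      ← sum_add_distrib, ← sum_add_distrib]
    exact sum_congr rfl fun i _ => by rw [hn]; ring
  rw [sliceTerm, sliceTerm, h_norm, h_pairing, ← Complex.exp_add]
  refine Complex.exp_eq_exp_iff_exists_int.2 ⟨∑ i, a.1 (e i) * n i, ?_⟩
  push_cast [πC]
  ring

lemma sliceTheta_eq_mul_of_perm {e : Equiv.Perm ι} {s : ℂ} {p : ι → ℂ}
    (hp : ∀ i, ∃ n : ℤ, p (e i) = p i + s + n) (c : ℤ) (τ : ℂ) :
    sliceTheta c τ p = cexp (2 * πC * I * (s * c)) * sliceTheta c τ p := by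
  conv_rhs => rw [sliceTheta, ← (slicePerm c e).tsum_eq, ← tsum_mul_left]
  exact tsum_congr fun a => sliceTerm_comp_perm hp τ a

/-- The first moments of a theta series of a slice: up to the factor `2πi`, its partial
derivatives. -/
def sliceMoment (c : ℤ) (τ : ℂ) (p : ι → ℂ) (j : ι) : ℂ :=
  ∑' a : Slice ι c, sliceTerm τ p a.1 * a.1 j

lemma sliceMoment_perm {e : Equiv.Perm ι} {s : ℂ} {p : ι → ℂ}
    (hp : ∀ i, ∃ n : ℤ, p (e i) = p i + s + n) (c : ℤ) (τ : ℂ) (j : ι) :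
    sliceMoment c τ p (e j) = cexp (2 * πC * I * (s * c)) * sliceMoment c τ p j := by
  conv_rhs => rw [sliceMoment, ← (slicePerm c e).tsum_eq, ← tsum_mul_left]
  refine tsum_congr fun a => ?_
  rw [sliceTerm_comp_perm hp, mul_assoc]
  rfl

lemma sliceTermDeriv_apply (τ : ℂ) (p h : ι → ℂ) (a : ι → ℤ) :
    sliceTermDeriv τ p a h = 2 * πC * I * ∑ j, sliceTerm τ p a * a j * h j := by
  simp only [sliceTermDeriv, smul_apply, intForm_apply, smul_eq_mul, mul_sum, mul_assoc]

lemma summable_sliceTerm_mul_coord {τ : ℂ} (hτ : 0 < τ.im) (c : ℤ) (p : ι → ℂ) (j : ι) :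
    Summable fun a : Slice ι c => sliceTerm τ p a.1 * a.1 j := by
  classical
  refine (((summable_sliceTermDeriv hτ c p).map
    (ContinuousLinearMap.apply ℂ ℂ (Pi.single j (1 : ℂ))) (by fun_prop)).mul_left
    (2 * πC * I)⁻¹).congr fun a => ?_
  have h_two_pi : (2 * πC * I : ℂ) ≠ 0 := Complex.two_pi_I_ne_zero
  simp only [Function.comp_apply, ContinuousLinearMap.apply_apply, sliceTermDeriv_apply,
    Pi.single_apply, mul_ite, mul_one, mul_zero, sum_ite_eq', mem_univ, if_true]
  rw [inv_mul_cancel_left₀ h_two_pi]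

lemma tsum_sliceTermDeriv_apply {τ : ℂ} (hτ : 0 < τ.im) (c : ℤ) (p h : ι → ℂ) :
    (∑' a : Slice ι c, sliceTermDeriv τ p a.1) h = 2 * πC * I * ∑ j, sliceMoment c τ p j * h j := by
  calc (∑' a : Slice ι c, sliceTermDeriv τ p a.1) h
      = ∑' a : Slice ι c, sliceTermDeriv τ p a.1 h :=
        (ContinuousLinearMap.apply ℂ ℂ h).map_tsum (summable_sliceTermDeriv hτ c p)
    _ = 2 * πC * I * ∑ j, sliceMoment c τ p j * h j := by
        simp only [sliceTermDeriv_apply, tsum_mul_left]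
        rw [Summable.tsum_finsetSum fun j _ =>
          (summable_sliceTerm_mul_coord hτ c p j).mul_right (h j)]
        simp only [tsum_mul_right, sliceMoment]

end FixedPoint

/-- A point at which the fifth roots of unity are the exponentials of the coordinates; it is fixed
by the cyclic rotation up to translations. -/
def rootPt : Fin 5 → ℂ := ![0, 1/5, 2/5, 3/5, -6/5]

/-- The fifth root of unity `e^{2πin/5}`, as a function of an integer. -/
def zeta5 (n : ℤ) : ℂ := ZMod.stdAddChar (n : ZMod 5)

lemma zeta5_eq_exp (n : ℤ) : zeta5 n = cexp (2 * πC * I * (n / 5)) := by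
  rw [zeta5, ZMod.stdAddChar_coe, πC]
  push_cast
  ring_nf

lemma zeta5_eq_one_iff {n : ℤ} : zeta5 n = 1 ↔ 5 ∣ n := by
  rw [zeta5, ← AddChar.map_zero_eq_one (ZMod.stdAddChar (N := 5)),
    ZMod.injective_stdAddChar.eq_iff]
  exact ZMod.intCast_zmod_eq_zero_iff_dvd n 5

lemma rootPt_add_one (ρ : ℕ) (i : Fin 5) :
    ∃ n : ℤ, ((ρ : ℂ) • rootPt) (Equiv.addRight 1 i) = ((ρ : ℂ) • rootPt) i + ρ / 5 + n := by
  refine ⟨ρ * ![0, 0, 0, -2, 1] i, ?_⟩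
  fin_cases i <;> simp [rootPt] <;> ring

lemma sliceTheta_rootPt_eq_zero {c : ℤ} {ρ : ℕ} (h : ¬ (5 : ℤ) ∣ ρ * c) (τ : ℂ) :
    sliceTheta c τ ((ρ : ℂ) • rootPt) = 0 := by
  have h_invariant := sliceTheta_eq_mul_of_perm (rootPt_add_one ρ) c τ
  rw [show (ρ / 5 * c : ℂ) = (ρ * c : ℤ) / 5 by push_cast; ring, ← zeta5_eq_exp] at h_invariant
  by_contra h0
  exact h (zeta5_eq_one_iff.1 (mul_right_cancel₀ h0 (h_invariant.symm.trans (one_mul _).symm)))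

lemma sliceMoment_rootPt (c : ℤ) (τ : ℂ) (ρ : ℕ) (j : Fin 5) :
    sliceMoment c τ ((ρ : ℂ) • rootPt) j =
      zeta5 (ρ * c * j) * sliceMoment c τ ((ρ : ℂ) • rootPt) 0 := by
  induction j using Fin.induction with
  | zero => simp [zeta5]
  | succ j ih =>
    have h_step := sliceMoment_perm (rootPt_add_one ρ) c τ j.castSucc
    simp only [Equiv.coe_addRight, Fin.coeSucc_eq_succ] at h_step
    rw [ih, ← mul_assoc] at h_step
    rw [h_step, zeta5_eq_exp, zeta5_eq_exp, ← Complex.exp_add]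
    congr 3
    simp
    ring

lemma hasStrictFDerivAt_sliceTheta_rootPt {τ : ℂ} (hτ : 0 < τ.im) (c : ℤ) (ρ : ℕ) :
    ∃ D : (Fin 5 → ℂ) →L[ℂ] ℂ, HasStrictFDerivAt (sliceTheta c τ) D ((ρ : ℂ) • rootPt) ∧
      ∀ h, D h = 2 * πC * I * sliceMoment c τ ((ρ : ℂ) • rootPt) 0 *
        ∑ j : Fin 5, zeta5 (ρ * c * j) * h j := by
  refine ⟨_, hasStrictFDerivAt_sliceTheta hτ c _, fun h => ?_⟩
  rw [tsum_sliceTermDeriv_apply hτ, mul_assoc (2 * πC * I), mul_sum univ _ (sliceMoment _ _ _ _)]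
  congr 2 with j
  rw [sliceMoment_rootPt]
  ring

/-! ### Gluing two copies of `A₄` to `E₈` -/

/-- The vector of `E₈` glued from two integer vectors. -/
def glue (a b : Fin 5 → ℤ) : Fin 8 → ℝ :=
  ![a 0 - b 0 / 2, a 1 - b 0 / 2, a 2 - b 0 / 2, a 3 - b 0 / 2, a 4 - b 0 / 2,
    (b 1 + b 2 - b 3 - b 4) / 2, (b 1 - b 2 + b 3 - b 4) / 2, (b 1 - b 2 - b 3 + b 4) / 2]

lemma mem_E8Lattice_iff {w : Fin 8 → ℝ} :
    w ∈ E8Lattice ↔ ∃ (n : Fin 8 → ℤ) (e m : ℤ), ∑ i, n i = 2 * m + 4 * e ∧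
      ∀ i, w i = n i - e / 2 := by
  constructor
  · rintro ⟨hw | hw, m, hm⟩ <;> choose n hn using hw
    · refine ⟨n, 0, m, ?_, by simp [hn]⟩
      simp only [hn] at hm
      exact_mod_cast hm.trans (by ring : (2 * m : ℝ) = 2 * m + 4 * 0)
    · refine ⟨n, -1, m, ?_, fun i => by rw [hn]; push_cast; ring⟩
      simp only [hn, sum_add_distrib, sum_const, card_univ, Fintype.card_fin, nsmul_eq_mul] at hm
      push_cast at hm
      exact_mod_cast (by linarith : (∑ i, (n i : ℝ)) = 2 * m + 4 * (-1))
  · rintro ⟨n, e, m, h_sum, hw⟩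
    refine ⟨?_, m, ?_⟩
    · rcases Int.even_or_odd' e with ⟨k, rfl | rfl⟩
      · exact .inl fun i => ⟨n i - k, by rw [hw]; push_cast; ring⟩
      · exact .inr fun i => ⟨n i - k - 1, by rw [hw]; push_cast; ring⟩
    · have h_sum' : (∑ i, (n i : ℝ)) = 2 * m + 4 * e := by exact_mod_cast h_sum
      simp only [hw, sum_sub_distrib, h_sum', sum_const, card_univ, Fintype.card_fin, nsmul_eq_mul]
      push_cast
      ring

lemma glue_mem {c : ℤ} (a : Slice (Fin 5) c) (b : Slice (Fin 5) (2 * c)) :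
    glue a.1 b.1 ∈ E8Lattice := by
  obtain ⟨a, ha⟩ := a
  obtain ⟨b, hb⟩ := b
  refine mem_E8Lattice_iff.2 ⟨![a 0, a 1, a 2, a 3, a 4, c - b 3 - b 4, c - b 2 - b 4,
    c - b 2 - b 3], b 0, b 1 - b 0, ?_, ?_⟩
  · simp only [Fin.sum_univ_five, Fin.sum_univ_eight] at ha hb ⊢
    simp
    linarith
  · have hb' : (b 0 + b 1 + b 2 + b 3 + b 4 : ℝ) = 2 * c := by
      exact_mod_cast (Fin.sum_univ_five b).symm.trans hb
    intro i
    fin_cases i <;> simp [glue] <;> linarith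

/-- The pairs of slices that make up the cosets of `A₄ ⊕ A₄` in `E₈`. -/
abbrev GlueIndex : Type := Σ c : Fin 5, Slice (Fin 5) (c : ℤ) × Slice (Fin 5) (2 * (c : ℤ))

/-- The gluing map from pairs of slices to the `E₈` lattice. -/
def glueMap (x : GlueIndex) : E8Lattice := ⟨glue x.2.1.1 x.2.2.1, glue_mem x.2.1 x.2.2⟩

/-- The projection of `ℂ⁸` to the first copy of the hyperplane of vectors of sum zero in `ℂ⁵`. -/
def projP : (Fin 8 → ℂ) →L[ℂ] Fin 5 → ℂ :=
  LinearMap.toContinuousLinearMap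
    { toFun z :=
        let σ := (z 0 + z 1 + z 2 + z 3 + z 4) / 5
        ![z 0 - σ, z 1 - σ, z 2 - σ, z 3 - σ, z 4 - σ]
      map_add' z w := by ext i; fin_cases i <;> simp <;> ring
      map_smul' r z := by ext i; fin_cases i <;> simp <;> ring }

/-- The projection of `ℂ⁸` to the second copy of the hyperplane of vectors of sum zero in `ℂ⁵`. -/
def projR : (Fin 8 → ℂ) →L[ℂ] Fin 5 → ℂ :=
  LinearMap.toContinuousLinearMap
    { toFun z :=
        let σ := (z 0 + z 1 + z 2 + z 3 + z 4) / 5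
        ![-2 * σ, σ / 2 + (z 5 + z 6 + z 7) / 2, σ / 2 + (z 5 - z 6 - z 7) / 2,
          σ / 2 + (-z 5 + z 6 - z 7) / 2, σ / 2 + (-z 5 - z 6 + z 7) / 2]
      map_add' z w := by ext i; fin_cases i <;> simp <;> ring
      map_smul' r z := by ext i; fin_cases i <;> simp <;> ring }

lemma projP_apply (z : Fin 8 → ℂ) : projP z =
    ![z 0 - (z 0 + z 1 + z 2 + z 3 + z 4) / 5, z 1 - (z 0 + z 1 + z 2 + z 3 + z 4) / 5,
      z 2 - (z 0 + z 1 + z 2 + z 3 + z 4) / 5, z 3 - (z 0 + z 1 + z 2 + z 3 + z 4) / 5,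
      z 4 - (z 0 + z 1 + z 2 + z 3 + z 4) / 5] := rfl

lemma projR_apply (z : Fin 8 → ℂ) : projR z =
    ![-2 * ((z 0 + z 1 + z 2 + z 3 + z 4) / 5),
      (z 0 + z 1 + z 2 + z 3 + z 4) / 5 / 2 + (z 5 + z 6 + z 7) / 2,
      (z 0 + z 1 + z 2 + z 3 + z 4) / 5 / 2 + (z 5 - z 6 - z 7) / 2,
      (z 0 + z 1 + z 2 + z 3 + z 4) / 5 / 2 + (-z 5 + z 6 - z 7) / 2,
      (z 0 + z 1 + z 2 + z 3 + z 4) / 5 / 2 + (-z 5 - z 6 + z 7) / 2] := rfl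

lemma sum_projP (z : Fin 8 → ℂ) : ∑ i, projP z i = 0 := by
  simp [projP_apply, Fin.sum_univ_five]
  ring

lemma sum_projR (z : Fin 8 → ℂ) : ∑ i, projR z i = 0 := by
  simp [projR_apply, Fin.sum_univ_five]
  ring

lemma projP_cv_glue {c : ℤ} (a : Slice (Fin 5) c) (b : Fin 5 → ℤ) (i : Fin 5) :
    projP (cv (glue a.1 b)) i = a.1 i - c / 5 := by
  rw [← a.sum_cast, Fin.sum_univ_five]
  fin_cases i <;> simp [projP_apply, cv, glue] <;> ring

lemma projR_cv_glue {c : ℤ} (a : Slice (Fin 5) c) (b : Slice (Fin 5) (2 * c)) (i : Fin 5) :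
    projR (cv (glue a.1 b.1)) i = b.1 i - 2 * c / 5 := by
  have ha := a.sum_cast
  have hb := b.sum_cast
  rw [Fin.sum_univ_five] at ha hb
  push_cast at hb
  fin_cases i <;> simp [projR_apply, cv, glue]
  · linear_combination (-2 / 5) * ha
  all_goals linear_combination (1 / 10) * ha - (1 / 4) * hb

-- The two projections recover the slices, up to a shift which the class `c` in `[0, 5)` fixes.
lemma glueMap_injective : Function.Injective glueMap := by
  rintro ⟨c, a, b⟩ ⟨c', a', b'⟩ h
  have h_glue : glue a.1 b.1 = glue a'.1 b'.1 := congrArg Subtype.val h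
  have h_fst : ∀ i, 5 * a.1 i - c = 5 * a'.1 i - (c' : ℤ) := fun i => by
    have h_proj := projP_cv_glue a b.1 i
    rw [h_glue, projP_cv_glue] at h_proj
    exact_mod_cast (by push_cast at h_proj; linear_combination (-5) * h_proj :
      (5 * a.1 i - (c : ℤ) : ℂ) = 5 * a'.1 i - (c' : ℤ))
  have h_snd : ∀ i, 5 * b.1 i - 2 * c = 5 * b'.1 i - 2 * (c' : ℤ) := fun i => by
    have h_proj := projR_cv_glue a b i
    rw [h_glue, projR_cv_glue] at h_proj
    exact_mod_cast (by push_cast at h_proj; linear_combination (-5) * h_proj :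
      (5 * b.1 i - 2 * (c : ℤ) : ℂ) = 5 * b'.1 i - 2 * (c' : ℤ))
  obtain rfl : c = c' := by have := h_fst 0; omega
  obtain rfl : a = a' := Subtype.ext (funext fun i => by have := h_fst i; omega)
  obtain rfl : b = b' := Subtype.ext (funext fun i => by have := h_snd i; omega)
  rfl

lemma glueMap_surjective : Function.Surjective glueMap := by
  rintro ⟨w, hw⟩
  obtain ⟨n, e, m, h_sum, hw⟩ := mem_E8Lattice_iff.1 hw
  obtain ⟨c, k, hck⟩ : ∃ (c : Fin 5) (k : ℤ), n 0 + n 1 + n 2 + n 3 + n 4 + 5 * k = (c : ℤ) :=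
    ⟨⟨((n 0 + n 1 + n 2 + n 3 + n 4) % 5).toNat, by omega⟩, -((n 0 + n 1 + n 2 + n 3 + n 4) / 5),
      by simp only; omega⟩
  rw [Fin.sum_univ_eight] at h_sum
  refine ⟨⟨c, ⟨![n 0 + k, n 1 + k, n 2 + k, n 3 + k, n 4 + k], ?_⟩,
    ⟨![2 * k + e, 2 * k + e + m, c - 3 * k - 2 * e - m + n 5, c - 3 * k - 2 * e - m + n 6,
      c - 3 * k - 2 * e - m + n 7], ?_⟩⟩, Subtype.ext (funext fun i => ?_)⟩
  · simp only [Fin.sum_univ_five, Matrix.cons_val]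
    omega
  · simp only [Fin.sum_univ_five, Matrix.cons_val]
    omega
  · have hck' : (n 0 + n 1 + n 2 + n 3 + n 4 + 5 * k : ℝ) = c := by exact_mod_cast hck
    have h_sum' : (n 0 + n 1 + n 2 + n 3 + n 4 + n 5 + n 6 + n 7 : ℝ) = 2 * m + 4 * e := by
      exact_mod_cast h_sum
    simp only [glueMap, hw]
    fin_cases i <;> simp [glue] <;> linarith

/-- The `E₈` lattice as a union of products of slices. -/
def glueEquiv : GlueIndex ≃ E8Lattice :=
  Equiv.ofBijective glueMap ⟨glueMap_injective, glueMap_surjective⟩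

lemma exp_glue {c : ℤ} (a : Slice (Fin 5) c) (b : Slice (Fin 5) (2 * c)) (τ : ℂ) (z : Fin 8 → ℂ) :
    cexp (πC * I * τ * dotC (cv (glue a.1 b.1)) (cv (glue a.1 b.1)) +
      2 * πC * I * dotC z (cv (glue a.1 b.1))) =
      sliceTerm τ (projP z) a.1 * sliceTerm τ (projR z) b.1 := by
  have ha := a.sum_cast
  have hb := b.sum_cast
  rw [sliceTerm, sliceTerm, sliceNorm, sliceNorm, ha, hb, ← Complex.exp_add]
  congr 1
  simp only [Fin.sum_univ_five] at ha hb
  have hb4 : (b.1 4 : ℂ) = 2 * c - b.1 0 - b.1 1 - b.1 2 - b.1 3 := by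
    push_cast at hb
    linear_combination hb
  simp [dotC, cv, glue, projP_apply, projR_apply, Fin.sum_univ_eight, Fin.sum_univ_five, hb4,
    ← ha]
  ring

lemma Theta_eq_sum {τ : ℂ} (hτ : 0 < τ.im) (z : Fin 8 → ℂ) :
    Theta τ z = ∑ c ∈ range 5, sliceTheta c τ (projP z) * sliceTheta (2 * c) τ (projR z) := by
  let term (x : GlueIndex) : ℂ := sliceTerm τ (projP z) x.2.1.1 * sliceTerm τ (projR z) x.2.2.1
  have h_slices (c : Fin 5) : Summable fun y => ‖term ⟨c, y⟩‖ :=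
    Summable.mul_norm (f := fun a : Slice (Fin 5) c => sliceTerm τ (projP z) a.1)
      (g := fun b : Slice (Fin 5) (2 * c) => sliceTerm τ (projR z) b.1)
      (summable_norm_sliceTerm hτ c (projP z)) (summable_norm_sliceTerm hτ (2 * c) (projR z))
  have h_summable : Summable term :=
    .of_norm ((summable_sigma_of_nonneg fun _ => norm_nonneg _).2 ⟨h_slices, .of_finite⟩)
  calc Theta τ z
      = ∑' x, term x := by
        rw [Theta, ← glueEquiv.tsum_eq]
        exact tsum_congr fun x => exp_glue x.2.1 x.2.2 τ z
    _ = ∑ c : Fin 5, ∑' y, term ⟨c, y⟩ := by rw [h_summable.tsum_sigma, tsum_fintype]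
    _ = ∑ c : Fin 5, sliceTheta c τ (projP z) * sliceTheta (2 * c) τ (projR z) :=
        sum_congr rfl fun c _ => (tsum_mul_tsum_of_summable_norm
          (f := fun a : Slice (Fin 5) c => sliceTerm τ (projP z) a.1)
          (g := fun b : Slice (Fin 5) (2 * c) => sliceTerm τ (projR z) b.1)
          (summable_norm_sliceTerm hτ c (projP z))
          (summable_norm_sliceTerm hτ (2 * c) (projR z))).symm
    _ = _ := (sum_range
        fun c : ℕ => sliceTheta c τ (projP z) * sliceTheta (2 * c) τ (projR z)).symm

/-! ### Translation behaviour of rescaled theta functions -/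

lemma zeta5_add (m n : ℤ) : zeta5 (m + n) = zeta5 m * zeta5 n := by
  rw [zeta5, zeta5, zeta5, Int.cast_add, AddChar.map_add_eq_mul]

lemma zeta5_congr {m n : ℤ} (h : m ≡ n [ZMOD 5]) : zeta5 m = zeta5 n :=
  congrArg ZMod.stdAddChar ((ZMod.intCast_eq_intCast_iff m n 5).2 h)

lemma sliceTheta_congr_five {c c' : ℤ} (h : c ≡ c' [ZMOD 5]) (τ : ℂ) {p : Fin 5 → ℂ}
    (hp : ∑ i, p i = 0) : sliceTheta c τ p = sliceTheta c' τ p :=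
  sliceTheta_congr (by rwa [Fintype.card_fin]) τ hp

lemma sum_range_add_of_periodic {M : Type*} [AddCommMonoid M] {f : ℤ → M} {n : ℕ}
    (hf : Function.Periodic f n) (m : ℕ) :
    ∑ c ∈ range n, f (c + m) = ∑ c ∈ range n, f c := by
  induction m with
  | zero => simp
  | succ m ih =>
    rw [← ih]
    cases n with
    | zero => simp
    | succ n =>
      rw [sum_range_succ, sum_range_succ' (fun c : ℕ => f (c + m))]
      congr 1
      · exact sum_congr rfl fun c _ => by push_cast; ring_nf
      · rw [Nat.cast_zero, zero_add, ← hf m]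
        push_cast
        ring_nf

/-- A vector of the dual of the first copy of `A₄`. -/
def transVec : Fin 8 → ℂ := ![-1/5, -1/5, -1/5, -1/5, 4/5, 0, 0, 0]

lemma projP_transVec : projP transVec = weightVec 4 := by
  ext i
  fin_cases i <;> simp [projP_apply, transVec, weightVec] <;> ring

lemma projR_transVec : projR transVec = 0 := by
  ext i
  fin_cases i <;> simp [projR_apply, transVec] <;> ring

/-- The factor of automorphy for the translation by `N τ` times `transVec`. -/
def autFactor (τ : ℂ) (N : ℕ) (y : Fin 8 → ℂ) : ℂ :=
  cexp (-(4 / 5 * πC * I * τ * N ^ 2) - 2 * πC * I * N * projP y 4)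

/-- The summand of `thetaRed` over the coset of `A₄ ⊕ A₄` of class `c`; the translation has moved
the class of the second factor. -/
def thetaRedTerm (d ρ l : ℕ) (τ : ℂ) (y : Fin 8 → ℂ) (c : ℤ) : ℂ :=
  zeta5 (l * (c + 2 * d)) * (sliceTheta c ((ρ * τ + l) / d) ((ρ : ℂ) • projP y) *
    sliceTheta (2 * c + 3 * d) ((ρ * τ + l) / d) ((ρ : ℂ) • projR y))

/-- The rescaled theta function `Θ((ρτ + l)/d, ρ z)` at a translate `z = y + (1 + 5n)τ·transVec`,
with the factor of automorphy removed. -/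
def thetaRed (d ρ l : ℕ) (τ : ℂ) (y : Fin 8 → ℂ) : ℂ :=
  ∑ c ∈ range 5, thetaRedTerm d ρ l τ y c

lemma sum_smul_projP (r : ℂ) (z : Fin 8 → ℂ) : ∑ i, (r • projP z) i = 0 := by
  rw [← map_smul, sum_projP]

lemma sum_smul_projR (r : ℂ) (z : Fin 8 → ℂ) : ∑ i, (r • projR z) i = 0 := by
  rw [← map_smul, sum_projR]

lemma periodic_thetaRedTerm (d ρ l : ℕ) (τ : ℂ) (y : Fin 8 → ℂ) :
    Function.Periodic (thetaRedTerm d ρ l τ y) (5 : ℕ) := fun c => by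
  have h_class : c + (5 : ℕ) ≡ c [ZMOD 5] := Int.add_modEq_right
  rw [thetaRedTerm, thetaRedTerm, zeta5_congr ((h_class.add_right _).mul_left _),
    sliceTheta_congr_five h_class _ (sum_smul_projP _ y),
    sliceTheta_congr_five ((h_class.mul_left 2).add_right _) _ (sum_smul_projR _ y)]

lemma im_rescaled_pos {τ : ℂ} (hτ : 0 < τ.im) {d ρ : ℕ} (hd : 0 < d) (hρ : 0 < ρ) (l : ℕ) :
    0 < ((ρ * τ + l) / d : ℂ).im := by
  rw [div_natCast_im]
  simp only [add_im, mul_im, natCast_re, natCast_im, zero_mul, add_zero]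
  positivity

lemma sliceTheta_projP_translate {d ρ l n : ℕ} {τ τ' : ℂ} (hτ : ρ * τ = d * τ' - l)
    (y : Fin 8 → ℂ) (c : ℤ) :
    sliceTheta c τ' ((ρ : ℂ) • projP ((((1 + 5 * n : ℕ) : ℂ) * τ) • transVec + y)) =
      autFactor τ (1 + 5 * n) y ^ (ρ * d) *
        (zeta5 (l * (c + (1 + 5 * n : ℕ) * d + 2 * d)) *
          sliceTheta (c + (1 + 5 * n : ℕ) * d) τ' ((ρ : ℂ) • projP y)) := by
  set N : ℕ := 1 + 5 * n with hN
  have h_point : (ρ : ℂ) • projP (((N : ℂ) * τ) • transVec + y) =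
      (ρ : ℂ) • projP y - ((N * l : ℤ) : ℂ) • weightVec 4 +
        (((N * d : ℤ) : ℂ) * τ') • weightVec 4 := by
    rw [map_add, map_smul, projP_transVec, smul_add, smul_smul, mul_left_comm, hτ]
    push_cast
    module
  have h_class : (l : ℤ) * (c + N * d + 2 * d) ≡
      N ^ 2 * (2 * d * l) + N * l * (c + N * d) [ZMOD 5] :=
    Int.modEq_iff_dvd.2
      ⟨(2 * n + 5 * n ^ 2) * 2 * d * l + n * l * (c + N * d), by rw [hN]; push_cast; ring⟩
  rw [h_point, sliceTheta_add_smul_weightVec, sliceTheta_sub_smul_weightVec, zeta5_congr h_class,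
    zeta5_eq_exp, autFactor, ← Complex.exp_nat_mul, ← mul_assoc, ← mul_assoc, ← Complex.exp_add,
    ← Complex.exp_add]
  congr 2
  simp [weightVec]
  linear_combination (4 / 5 * πC * I * N ^ 2 * d) * hτ

lemma Theta_translate {τ : ℂ} (hτ : 0 < τ.im) {d ρ : ℕ} (hd : 0 < d) (hρ : 0 < ρ) (l n : ℕ)
    (y : Fin 8 → ℂ) :
    Theta ((ρ * τ + l) / d) ((ρ : ℂ) • ((((1 + 5 * n : ℕ) : ℂ) * τ) • transVec + y)) =
      autFactor τ (1 + 5 * n) y ^ (ρ * d) * thetaRed d ρ l τ y := by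
  have hd0 : (d : ℂ) ≠ 0 := Nat.cast_ne_zero.2 hd.ne'
  have h_rescale : (ρ : ℂ) * τ = d * ((ρ * τ + l) / d) - l := by field_simp; ring
  have h_class (c : ℕ) : (2 * c : ℤ) ≡ 2 * (c + (1 + 5 * n : ℕ) * d) + 3 * d [ZMOD 5] :=
    Int.modEq_iff_dvd.2 ⟨d + 2 * n * d, by push_cast; ring⟩
  rw [Theta_eq_sum (im_rescaled_pos hτ hd hρ l), thetaRed,
    ← sum_range_add_of_periodic (periodic_thetaRedTerm d ρ l τ y) ((1 + 5 * n) * d), mul_sum]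
  refine sum_congr rfl fun c _ => ?_
  rw [map_smul projP, map_smul projR, sliceTheta_projP_translate h_rescale, map_add projR,
    map_smul projR, projR_transVec, smul_zero, zero_add,
    sliceTheta_congr_five (h_class c) _ (sum_smul_projR _ y), thetaRedTerm]
  push_cast
  ring

/-! ### First-order jets at the fixed point -/

/-- The point of `ℂ⁸` both of whose projections are `rootPt`. -/
def basePt : Fin 8 → ℂ := ![0, 1/5, 2/5, 3/5, -6/5, 3/5, 4/5, -1]

lemma projP_basePt : projP basePt = rootPt := by
  ext i
  fin_cases i <;> simp [projP_apply, basePt, rootPt] <;> norm_num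

lemma projR_basePt : projR basePt = rootPt := by
  ext i
  fin_cases i <;> simp [projR_apply, basePt, rootPt] <;> norm_num

/-- The `m`-th coefficient of the discrete Fourier transform on `ℂ⁵`. -/
def fourier5 (m : ℤ) : (Fin 5 → ℂ) →L[ℂ] ℂ :=
  ∑ j : Fin 5, zeta5 (m * j) • ContinuousLinearMap.proj (R := ℂ) (φ := fun _ : Fin 5 => ℂ) j

lemma fourier5_apply (m : ℤ) (h : Fin 5 → ℂ) :
    fourier5 m h = ∑ j : Fin 5, zeta5 (m * j) * h j := by
  simp [fourier5]

lemma fourier5_congr {m n : ℤ} (h : m ≡ n [ZMOD 5]) : fourier5 m = fourier5 n :=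
  sum_congr rfl fun j _ => by rw [zeta5_congr (h.mul_right j)]

/-- The linear form on the `ζ^m`-eigenspace of the Coxeter element of `A₄ ⊕ A₄` with coordinates
`A` and `B`. -/
def jetMap (m : ℕ) (A B : ℂ) : (Fin 8 → ℂ) →L[ℂ] ℂ :=
  (2 * πC * I) • (A • (fourier5 m).comp projP + B • (fourier5 (3 * m)).comp projR)

lemma jetMap_apply (m : ℕ) (A B : ℂ) (h : Fin 8 → ℂ) : jetMap m A B h =
    2 * πC * I * (A * fourier5 m (projP h) + B * fourier5 (3 * m) (projR h)) := by
  simp only [jetMap, smul_apply, add_apply, smul_eq_mul, ContinuousLinearMap.comp_apply]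

/-- Near each of the points `basePt + (1 + 5n)τ·transVec`, and after removal of the factor of
automorphy of index `m`, the function `F` has value `V` and differential `D`. -/
def HasJet (τ : ℂ) (m : ℕ) (F : (Fin 8 → ℂ) → ℂ) (V : ℂ) (D : (Fin 8 → ℂ) →L[ℂ] ℂ) : Prop :=
  ∃ G : (Fin 8 → ℂ) → ℂ,
    (∀ (n : ℕ) (y : Fin 8 → ℂ), F ((((1 + 5 * n : ℕ) : ℂ) * τ) • transVec + y) =
      autFactor τ (1 + 5 * n) y ^ m * G y) ∧ G basePt = V ∧ HasStrictFDerivAt G D basePt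

/-- The function `F` of index `m` vanishes at the fixed points, with differential
`jetMap m A B`. -/
def HasCoeffs (τ : ℂ) (m : ℕ) (F : (Fin 8 → ℂ) → ℂ) (A B : ℂ) : Prop :=
  HasJet τ m F 0 (jetMap m A B)

section JetArithmetic

variable {τ : ℂ} {m : ℕ} {F F' : (Fin 8 → ℂ) → ℂ}

lemma HasJet.const_mul {V : ℂ} {D : (Fin 8 → ℂ) →L[ℂ] ℂ} (h : HasJet τ m F V D) (c : ℂ) :
    HasJet τ m (fun z => c * F z) (c * V) (c • D) := by
  obtain ⟨G, h_trans, h_value, h_deriv⟩ := h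
  exact ⟨fun y => c * G y, fun n y => by simp only [h_trans, mul_left_comm],
    by simp only [h_value], h_deriv.const_mul c⟩

lemma HasJet.add {V V' : ℂ} {D D' : (Fin 8 → ℂ) →L[ℂ] ℂ} (h : HasJet τ m F V D)
    (h' : HasJet τ m F' V' D') : HasJet τ m (fun z => F z + F' z) (V + V') (D + D') := by
  obtain ⟨G, h_trans, h_value, h_deriv⟩ := h
  obtain ⟨G', h_trans', h_value', h_deriv'⟩ := h'
  exact ⟨fun y => G y + G' y, fun n y => by simp only [h_trans, h_trans', mul_add],
    by simp only [h_value, h_value'], h_deriv.add h_deriv'⟩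

lemma HasJet.sum {ι : Type*} {s : Finset ι} {F : ι → (Fin 8 → ℂ) → ℂ} {V : ι → ℂ}
    {D : ι → (Fin 8 → ℂ) →L[ℂ] ℂ} (h : ∀ k, HasJet τ m (F k) (V k) (D k)) :
    HasJet τ m (fun z => ∑ k ∈ s, F k z) (∑ k ∈ s, V k) (∑ k ∈ s, D k) := by
  choose G h_trans h_value h_deriv using h
  exact ⟨fun y => ∑ k ∈ s, G k y, fun n y => by simp only [h_trans, mul_sum],
    by simp only [h_value], HasStrictFDerivAt.fun_sum fun k _ => h_deriv k⟩

variable {A A' B B' : ℂ}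

lemma HasCoeffs.const_mul (h : HasCoeffs τ m F A B) (c : ℂ) :
    HasCoeffs τ m (fun z => c * F z) (c * A) (c * B) := by
  have h_smul : jetMap m (c * A) (c * B) = c • jetMap m A B := by
    ext1 v; simp only [jetMap_apply, smul_apply, smul_eq_mul]; ring
  rw [HasCoeffs, h_smul, ← mul_zero c]
  exact HasJet.const_mul h c

lemma HasCoeffs.add (h : HasCoeffs τ m F A B) (h' : HasCoeffs τ m F' A' B') :
    HasCoeffs τ m (fun z => F z + F' z) (A + A') (B + B') := by
  have h_add : jetMap m (A + A') (B + B') = jetMap m A B + jetMap m A' B' := by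
    ext1 v; simp only [jetMap_apply, add_apply]; ring
  rw [HasCoeffs, h_add, ← add_zero (0 : ℂ)]
  exact HasJet.add h h'

lemma HasCoeffs.sub (h : HasCoeffs τ m F A B) (h' : HasCoeffs τ m F' A' B') :
    HasCoeffs τ m (fun z => F z - F' z) (A - A') (B - B') := by
  simpa only [neg_one_mul, ← sub_eq_add_neg] using h.add (h'.const_mul (-1))

lemma HasCoeffs.sum {ι : Type*} {s : Finset ι} {F : ι → (Fin 8 → ℂ) → ℂ} {A B : ι → ℂ}
    (h : ∀ k, HasCoeffs τ m (F k) (A k) (B k)) :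
    HasCoeffs τ m (fun z => ∑ k ∈ s, F k z) (∑ k ∈ s, A k) (∑ k ∈ s, B k) := by
  have h_sum : jetMap m (∑ k ∈ s, A k) (∑ k ∈ s, B k) = ∑ k ∈ s, jetMap m (A k) (B k) := by
    ext1 v
    simp only [jetMap_apply, _root_.sum_apply, mul_sum, sum_mul, sum_add_distrib, mul_add]
  rw [HasCoeffs, h_sum, ← sum_const_zero (s := s)]
  exact HasJet.sum h

end JetArithmetic

/-- The coordinates of the differential of `Θ((ρτ + l)/d, ρ z)` at the fixed points: `e = 1` gives
the one on the first copy of `A₄`, `e = 3` the one on the second. -/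
def thetaCoef (e d ρ l : ℕ) (τ : ℂ) : ℂ :=
  ρ * zeta5 (3 * e ^ 2 * d * l) *
    (sliceMoment (e * d % 5 : ℕ) ((ρ * τ + l) / d) ((ρ : ℂ) • rootPt) 0 *
      sliceTheta 0 ((ρ * τ + l) / d) ((ρ : ℂ) • rootPt))

section ThetaJet

variable {τ : ℂ} {d ρ : ℕ}

lemma hasStrictFDerivAt_sliceTheta_comp (hτ : 0 < τ.im) (c : ℤ) (ρ : ℕ)
    {L : (Fin 8 → ℂ) →L[ℂ] Fin 5 → ℂ} (hL : L basePt = rootPt) :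
    HasStrictFDerivAt (fun y => sliceTheta c τ ((ρ : ℂ) • L y))
      ((2 * πC * I * (ρ * sliceMoment c τ ((ρ : ℂ) • rootPt) 0)) • (fourier5 (ρ * c)).comp L)
      basePt := by
  obtain ⟨D, h_deriv, hD⟩ := hasStrictFDerivAt_sliceTheta_rootPt hτ c ρ
  rw [← hL] at h_deriv
  refine (h_deriv.comp basePt (L.hasStrictFDerivAt.const_smul (ρ : ℂ))).congr_fderiv ?_
  ext1 h
  simp only [smul_apply, ContinuousLinearMap.comp_apply, hD, fourier5_apply, smul_eq_mul,
    Pi.smul_apply, mul_sum]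
  exact sum_congr rfl fun j _ => by ring

lemma hasStrictFDerivAt_thetaRedTerm (hτ : 0 < τ.im) (hd : 0 < d) (hρ : 0 < ρ) (l : ℕ)
    {c c' : ℤ} (hc : 2 * c + 3 * d ≡ c' [ZMOD 5]) :
    HasStrictFDerivAt (fun y => thetaRedTerm d ρ l τ y c)
      (zeta5 (l * (c + 2 * d)) •
        (sliceTheta c ((ρ * τ + l) / d) ((ρ : ℂ) • rootPt) •
            (2 * πC * I * (ρ * sliceMoment c' ((ρ * τ + l) / d) ((ρ : ℂ) • rootPt) 0)) •
              (fourier5 (ρ * c')).comp projR +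
          sliceTheta c' ((ρ * τ + l) / d) ((ρ : ℂ) • rootPt) •
            (2 * πC * I * (ρ * sliceMoment c ((ρ * τ + l) / d) ((ρ : ℂ) • rootPt) 0)) •
              (fourier5 (ρ * c)).comp projP)) basePt := by
  have hτ' := im_rescaled_pos hτ hd hρ l
  have h_mul := ((hasStrictFDerivAt_sliceTheta_comp hτ' c ρ projP_basePt).mul
    (hasStrictFDerivAt_sliceTheta_comp hτ' c' ρ projR_basePt)).const_mul (zeta5 (l * (c + 2 * d)))
  simp only [projP_basePt, projR_basePt] at h_mul
  refine h_mul.congr_of_eventuallyEq (.of_forall fun y => ?_)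
  simp only [thetaRedTerm, Pi.mul_apply, sliceTheta_congr_five hc _ (sum_smul_projR _ y)]

lemma sliceTheta_rootPt_eq_zero_of_lt (hρ : ¬ 5 ∣ ρ) {c : ℕ} (hc : c < 5) (h0 : c ≠ 0) (τ : ℂ) :
    sliceTheta c τ ((ρ : ℂ) • rootPt) = 0 := by
  refine sliceTheta_rootPt_eq_zero ?_ τ
  norm_cast
  rw [Nat.prime_five.dvd_mul]
  exact not_or.2 ⟨hρ, Nat.not_dvd_of_pos_of_lt (Nat.pos_of_ne_zero h0) hc⟩

lemma natCast_modEq_mod_five (n : ℕ) : (n : ℤ) ≡ (n % 5 : ℕ) [ZMOD 5] :=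
  Int.natCast_modEq_iff.2 (Nat.mod_modEq n 5).symm

lemma thetaRed_basePt (hd : ¬ 5 ∣ d) (hρ : ¬ 5 ∣ ρ) (l : ℕ) : thetaRed d ρ l τ basePt = 0 := by
  refine sum_eq_zero fun c hc => ?_
  have hc5 := mem_range.1 hc
  have h_class : (2 * c + 3 * d : ℤ) ≡ ((2 * c + 3 * d) % 5 : ℕ) [ZMOD 5] := by
    exact_mod_cast natCast_modEq_mod_five (2 * c + 3 * d)
  rw [thetaRedTerm, sliceTheta_congr_five h_class _ (sum_smul_projR _ basePt), projP_basePt,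
    projR_basePt]
  rcases eq_or_ne c 0 with rfl | h0
  · rw [sliceTheta_rootPt_eq_zero_of_lt hρ (Nat.mod_lt _ (by norm_num)) (by omega), mul_zero,
      mul_zero]
  · rw [sliceTheta_rootPt_eq_zero_of_lt hρ hc5 h0, zero_mul, mul_zero]

lemma hasStrictFDerivAt_thetaRed (hτ : 0 < τ.im) (hd : ¬ 5 ∣ d) (hρ : ¬ 5 ∣ ρ) (l : ℕ) :
    HasStrictFDerivAt (thetaRed d ρ l τ)
      (jetMap (ρ * d) (thetaCoef 1 d ρ l τ) (thetaCoef 3 d ρ l τ)) basePt := by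
  have hd0 : 0 < d := Nat.pos_of_ne_zero (by grind)
  have hρ0 : 0 < ρ := Nat.pos_of_ne_zero (by grind)
  have h_class (c : ℕ) : (2 * c + 3 * d : ℤ) ≡ ((2 * c + 3 * d) % 5 : ℕ) [ZMOD 5] := by
    exact_mod_cast natCast_modEq_mod_five (2 * c + 3 * d)
  refine (HasStrictFDerivAt.fun_sum fun c _ =>
    hasStrictFDerivAt_thetaRedTerm hτ hd0 hρ0 l (h_class c)).congr_fderiv ?_
  ext1 h
  simp only [_root_.sum_apply, add_apply, smul_apply, smul_eq_mul, mul_add, sum_add_distrib]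
  -- The first factor vanishes unless `c ≡ 0`, the second unless `c ≡ d`.
  rw [sum_eq_single_of_mem 0 (mem_range.2 (by norm_num)) fun c hc h0 => by
      rw [sliceTheta_rootPt_eq_zero_of_lt hρ (mem_range.1 hc) h0, zero_mul, mul_zero],
    sum_eq_single_of_mem (d % 5) (mem_range.2 (Nat.mod_lt _ (by norm_num))) fun c hc h0 => by
      rw [sliceTheta_rootPt_eq_zero_of_lt hρ (Nat.mod_lt _ (by norm_num))
        (by have := mem_range.1 hc; omega), zero_mul, mul_zero],
    show (2 * (d % 5) + 3 * d) % 5 = 0 by omega]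
  have h_zeta : zeta5 (l * (d % 5 : ℕ) + l * (2 * d)) = zeta5 (3 * 1 ^ 2 * d * l) :=
    zeta5_congr <| (((natCast_modEq_mod_five d).symm.mul_left _).add_right _).trans <| by
      ring_nf; rfl
  have h_zeta_three : zeta5 (l * (2 * d)) = zeta5 (3 * 3 ^ 2 * d * l) :=
    zeta5_congr <| Int.modEq_iff_dvd.2 ⟨5 * d * l, by push_cast; ring⟩
  have h_fourier : fourier5 (ρ * (d % 5 : ℕ)) = fourier5 (ρ * d : ℕ) :=
    fourier5_congr <| by exact_mod_cast (natCast_modEq_mod_five d).symm.mul_left ρ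
  have h_fourier_three : fourier5 (ρ * (3 * d % 5 : ℕ)) = fourier5 (3 * (ρ * d : ℕ)) :=
    fourier5_congr <| ((natCast_modEq_mod_five (3 * d)).symm.mul_left ρ).trans <| by
      push_cast; ring_nf; rfl
  simp only [h_zeta, h_zeta_three, h_fourier, h_fourier_three, mul_zero, zero_add, jetMap,
    thetaCoef, add_apply, smul_apply, smul_eq_mul, one_mul, Nat.cast_zero, Nat.cast_one,
    Nat.cast_ofNat]
  ring

lemma hasCoeffs_Theta (hτ : 0 < τ.im) (hd : ¬ 5 ∣ d) (hρ : ¬ 5 ∣ ρ) (l : ℕ) :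
    HasCoeffs τ (ρ * d) (fun z => Theta ((ρ * τ + l) / d) (fun i => ρ * z i))
      (thetaCoef 1 d ρ l τ) (thetaCoef 3 d ρ l τ) :=
  ⟨thetaRed d ρ l τ,
    Theta_translate hτ (Nat.pos_of_ne_zero (by grind)) (Nat.pos_of_ne_zero (by grind)) l,
    thetaRed_basePt hd hρ l, hasStrictFDerivAt_thetaRed hτ hd hρ l⟩

end ThetaJet

/-! ### Expansions at the origin -/

section Expansions

open Polynomial

/-- `F` has the Taylor polynomial `P` of order `N` at the origin; the coefficients of `P` in degree
at least `N` are irrelevant. -/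
def HasExpansion (N : ℕ) (F : ℂ → ℂ) (P : Polynomial ℂ) : Prop :=
  (fun u => F u - P.eval u) =O[𝓝 0] (fun u => u ^ N)

namespace HasExpansion

variable {N M : ℕ} {F G : ℂ → ℂ} {P Q : ℂ[X]}

lemma const (N : ℕ) (c : ℂ) : HasExpansion N (fun _ => c) (C c) := by
  simpa [HasExpansion] using isBigO_zero (fun u : ℂ => u ^ N) (𝓝 0)

lemma mono (h : HasExpansion N F P) (hM : M ≤ N) : HasExpansion M F P :=
  h.trans <| IsBigO.of_bound 1 <| by
    filter_upwards [Metric.ball_mem_nhds (0 : ℂ) one_pos] with u hu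
    simpa using pow_le_pow_of_le_one (norm_nonneg u) (mem_ball_zero_iff.1 hu).le hM

lemma congr_coeff (h : HasExpansion N F P) (hPQ : ∀ n < N, P.coeff n = Q.coeff n) :
    HasExpansion N F Q := by
  obtain ⟨R, hR⟩ : X ^ N ∣ P - Q :=
    X_pow_dvd_iff.2 fun n hn => by rw [coeff_sub, hPQ n hn, sub_self]
  have h_tail : (fun u => (P - Q).eval u) =O[𝓝 0] (fun u : ℂ => u ^ N) := by
    simpa [hR] using (isBigO_refl (fun u : ℂ => u ^ N) (𝓝 0)).mul
      (R.continuousAt (a := 0).norm.isBoundedUnder_le.isBigO_one ℂ)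
  exact (IsBigO.add h h_tail).congr_left fun u => by rw [eval_sub]; ring

lemma add (h : HasExpansion N F P) (h' : HasExpansion N G Q) :
    HasExpansion N (fun u => F u + G u) (P + Q) :=
  (IsBigO.add h h').congr_left fun u => by rw [eval_add]; ring

lemma isBigO_one (h : HasExpansion N F P) : F =O[𝓝 0] (fun _ => (1 : ℂ)) := by
  have h_pow : (fun u : ℂ => u ^ N) =O[𝓝 0] (fun _ => (1 : ℂ)) :=
    (continuousAt_pow 0 N).norm.isBoundedUnder_le.isBigO_one ℂ
  exact ((h.trans h_pow).add
    (P.continuousAt.norm.isBoundedUnder_le.isBigO_one ℂ)).congr_left fun u => by ring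

lemma mul (h : HasExpansion N F P) (h' : HasExpansion N G Q) :
    HasExpansion N (fun u => F u * G u) (P * Q) := by
  have hQ : (fun u => Q.eval u) =O[𝓝 0] (fun _ => (1 : ℂ)) :=
    Q.continuousAt.norm.isBoundedUnder_le.isBigO_one ℂ
  exact ((h.isBigO_one.mul h').add (hQ.mul h)).congr
    (fun u => by rw [eval_mul]; ring) (fun u => by ring)

lemma const_mul (h : HasExpansion N F P) (c : ℂ) :
    HasExpansion N (fun u => c * F u) (C c * P) :=
  (const N c).mul h

lemma mul_id (h : HasExpansion N F P) : HasExpansion (N + 1) (fun u => u * F u) (X * P) :=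
  ((isBigO_refl (fun u : ℂ => u) _).mul h).congr
    (fun u => by rw [eval_mul, eval_X]; ring) (fun u => by ring)

lemma comp_pow (h : HasExpansion N F P) {k : ℕ} (hk : k ≠ 0) :
    HasExpansion (k * N) (fun u => F (u ^ k)) (expand ℂ k P) := by
  have h_lim : Tendsto (fun u : ℂ => u ^ k) (𝓝 0) (𝓝 0) :=
    (continuous_pow k).tendsto' 0 0 (zero_pow hk)
  simpa only [HasExpansion, expand_eval, pow_mul, Function.comp_def] using h.comp_tendsto h_lim

lemma comp_const_mul (h : HasExpansion N F P) (c : ℂ) :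
    HasExpansion N (fun u => F (c * u)) (P.comp (C c * X)) := by
  have h_lim : Tendsto (fun u : ℂ => c * u) (𝓝 0) (𝓝 0) :=
    (continuous_const_mul c).tendsto' 0 0 (mul_zero c)
  have h_comp := (h.comp_tendsto h_lim).trans <|
    (isBigO_const_mul_self (c ^ N) (fun u : ℂ => u ^ N) (𝓝 0)).congr_left fun u => by
      rw [Function.comp_apply, mul_pow]
  exact h_comp.congr_left fun u => by
    simp only [Function.comp_apply, eval_comp, eval_mul, eval_C, eval_X]

lemma sum {ι : Type*} {s : Finset ι} {F : ι → ℂ → ℂ} {P : ι → ℂ[X]}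
    (h : ∀ k, HasExpansion N (F k) (P k)) :
    HasExpansion N (fun u => ∑ k ∈ s, F k u) (∑ k ∈ s, P k) :=
  (IsBigO.sum fun k _ => h k).congr_left fun u => by
    rw [Finset.sum_apply, sum_sub_distrib, eval_finsetSum]

lemma tendsto_div_pow {a : ℕ} (h : HasExpansion (a + 1) F P) (h_low : ∀ n < a, P.coeff n = 0) :
    Tendsto (fun u => F u / u ^ a) (𝓝[≠] 0) (𝓝 (P.coeff a)) := by
  have h_lead : HasExpansion (a + 1) F (C (P.coeff a) * X ^ a) := h.congr_coeff fun n hn => by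
    rcases (Nat.lt_succ_iff.1 hn).lt_or_eq with hlt | rfl
    · rw [h_low n hlt, coeff_C_mul_X_pow, if_neg hlt.ne]
    · rw [coeff_C_mul_X_pow, if_pos rfl]
  have h_little : (fun u : ℂ => u ^ (a + 1)) =o[𝓝 0] (fun u : ℂ => u ^ a) := by
    simpa using isLittleO_pow_pow (𝕜 := ℂ) (Nat.lt_succ_self a)
  have h_error := ((IsBigO.trans_isLittleO h_lead h_little).mono
    nhdsWithin_le_nhds).tendsto_div_nhds_zero (l := 𝓝[≠] 0)
  refine (zero_add (P.coeff a) ▸ h_error.add_const (P.coeff a)).congr' ?_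
  filter_upwards [self_mem_nhdsWithin] with u hu
  rw [eval_mul, eval_C, eval_X_pow, sub_div, mul_div_cancel_right₀ _ (pow_ne_zero _ hu),
    sub_add_cancel]

lemma tendsto (h : HasExpansion N F P) (hN : N ≠ 0) : Tendsto F (𝓝 0) (𝓝 (P.coeff 0)) := by
  have h_pow : Tendsto (fun u : ℂ => u ^ N) (𝓝 0) (𝓝 0) :=
    (continuous_pow N).tendsto' 0 0 (zero_pow hN)
  simpa [coeff_zero_eq_eval_zero] using (h.trans_tendsto h_pow).add P.continuousAt.tendsto

lemma tendsto_sum_rootsOfUnity {a d : ℕ} (had : a < d) {ζ : ℂ} (hζ : IsPrimitiveRoot ζ d)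
    (h : HasExpansion (a + 1) F P) :
    Tendsto (fun u => (∑ k ∈ range d, (ζ ^ (a * k))⁻¹ * F (ζ ^ k * u)) / u ^ a) (𝓝[≠] 0)
      (𝓝 (d * P.coeff a)) := by
  have h_average : HasExpansion (a + 1) (fun u => ∑ k ∈ range d, (ζ ^ (a * k))⁻¹ * F (ζ ^ k * u))
      (∑ k ∈ range d, C (ζ ^ (a * k))⁻¹ * P.comp (C (ζ ^ k) * X)) :=
    sum fun k => (h.comp_const_mul (ζ ^ k)).const_mul _
  have h_coeff (n : ℕ) : (∑ k ∈ range d, C (ζ ^ (a * k))⁻¹ * P.comp (C (ζ ^ k) * X)).coeff n =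
      P.coeff n * ∑ k ∈ range d, ((ζ ^ a)⁻¹ * ζ ^ n) ^ k := by
    simp only [finsetSum_coeff, coeff_C_mul, comp_C_mul_X_coeff, mul_sum]
    refine sum_congr rfl fun k _ => ?_
    rw [mul_pow, inv_pow, ← pow_mul, ← pow_mul, ← pow_mul, mul_comm k n]
    ring
  have hζ0 := hζ.ne_zero (by omega)
  have h_lim := h_average.tendsto_div_pow fun n hn => by
    have h_ne : (ζ ^ a)⁻¹ * ζ ^ n ≠ 1 := by
      rw [Ne, inv_mul_eq_one₀ (pow_ne_zero _ hζ0)]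
      exact fun h_eq => hn.ne (hζ.pow_inj had (by omega) h_eq).symm
    have h_pow : ((ζ ^ a)⁻¹ * ζ ^ n) ^ d = 1 := by
      rw [mul_pow, inv_pow, pow_right_comm, pow_right_comm ζ n, hζ.pow_eq_one, one_pow, one_pow,
        inv_one, one_mul]
    rw [h_coeff, geom_sum_eq h_ne, h_pow, sub_self, zero_div, mul_zero]
  rwa [h_coeff, inv_mul_cancel₀ (pow_ne_zero a hζ0), sum_congr rfl fun k _ => one_pow k, sum_const,
    card_range, nsmul_one, mul_comm (P.coeff a)] at h_lim

lemma tsum {ι : Type*} {χ : ι → ℂ} {n : ι → ℕ} {r : ℝ} (hr : 0 < r)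
    (h_summable : Summable fun i => ‖χ i‖ * r ^ n i) {N : ℕ} {s : Finset ι}
    (hs : ∀ i ∉ s, N ≤ n i) :
    HasExpansion N (fun u => ∑' i, χ i * u ^ n i) (∑ i ∈ s, C (χ i) * X ^ n i) := by
  refine IsBigO.of_bound ((∑' i, ‖χ i‖ * r ^ n i) * (r ^ N)⁻¹) ?_
  filter_upwards [Metric.ball_mem_nhds (0 : ℂ) hr] with u hu
  have hur : ‖u‖ ≤ r := (mem_ball_zero_iff.1 hu).le
  have h_series : Summable fun i => χ i * u ^ n i :=
    .of_norm_bounded h_summable fun i => by rw [norm_mul, norm_pow]; gcongr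
  have h_tail (i : {i // i ∉ s}) :
      ‖χ i * u ^ n i‖ ≤ ‖χ i‖ * r ^ n i * ((r ^ N)⁻¹ * ‖u‖ ^ N) := by
    obtain ⟨k, hk⟩ := Nat.exists_eq_add_of_le (hs i.1 i.2)
    have h_cancel : r ^ N * r ^ k * ((r ^ N)⁻¹ * ‖u‖ ^ N) = ‖u‖ ^ N * r ^ k := by
      field_simp
    rw [norm_mul, norm_pow, hk, pow_add, pow_add, mul_assoc, h_cancel]
    gcongr
  simp only [eval_finsetSum, eval_mul, eval_C, eval_X_pow]
  rw [← h_series.sum_add_tsum_subtype_compl s, add_sub_cancel_left]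
  refine (tsum_of_norm_bounded ((h_summable.subtype _).mul_right _).hasSum h_tail).trans ?_
  rw [tsum_mul_right, norm_pow, mul_assoc]
  gcongr
  exact h_summable.tsum_subtype_le _ {i | i ∉ s} fun i => by positivity

end HasExpansion

/-- The polynomial with the given integral coefficients. -/
def intPoly {N : ℕ} (k : Fin N → ℤ) : ℂ[X] := ofFn N fun n => (k n : ℂ)

lemma coeff_intPoly {N : ℕ} (k : Fin N → ℤ) {n : ℕ} (hn : n < N) :
    (intPoly k).coeff n = k ⟨n, hn⟩ :=
  ofFn_coeff_eq_val_of_lt _ hn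

/-- The function `F` has the four integers `k` as its first Taylor coefficients at the origin. -/
def HasIntExpansion (F : ℂ → ℂ) (k : Fin 4 → ℤ) : Prop := HasExpansion 4 F (intPoly k)

/-- The coefficients of a product of series truncated at order four. -/
def truncMul (k l : Fin 4 → ℤ) : Fin 4 → ℤ :=
  ![k 0 * l 0, k 0 * l 1 + k 1 * l 0, k 0 * l 2 + k 1 * l 1 + k 2 * l 0,
    k 0 * l 3 + k 1 * l 2 + k 2 * l 1 + k 3 * l 0]

/-- The coefficients of the series in `u ^ j` with the given truncation. -/
def truncDilate (j : ℕ) (k : Fin 4 → ℤ) : Fin 4 → ℤ :=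
  fun n => if j ∣ n then k ⟨n / j, (Nat.div_le_self _ _).trans_lt n.2⟩ else 0

namespace HasIntExpansion

variable {F G : ℂ → ℂ} {k l : Fin 4 → ℤ}

lemma of_eq (h : HasIntExpansion F k) (hkl : k = l) : HasIntExpansion F l := hkl ▸ h

lemma add (h : HasIntExpansion F k) (h' : HasIntExpansion G l) :
    HasIntExpansion (fun u => F u + G u) (k + l) :=
  (HasExpansion.add h h').congr_coeff fun n hn => by simp [coeff_intPoly, hn]

lemma mul (h : HasIntExpansion F k) (h' : HasIntExpansion G l) :
    HasIntExpansion (fun u => F u * G u) (truncMul k l) :=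
  (HasExpansion.mul h h').congr_coeff fun n hn => by
    interval_cases n <;>
      simp [truncMul, coeff_mul, Nat.antidiagonal_succ, coeff_intPoly, add_assoc]

lemma mul_id (h : HasIntExpansion F k) :
    HasIntExpansion (fun u => u * F u) ![0, k 0, k 1, k 2] :=
  ((HasExpansion.mul_id h).mono (by simp)).congr_coeff fun n hn => by
    interval_cases n <;> simp [coeff_intPoly, coeff_X_mul]

lemma comp_pow (h : HasIntExpansion F k) {j : ℕ} (hj : 0 < j) :
    HasIntExpansion (fun u => F (u ^ j)) (truncDilate j k) :=
  ((HasExpansion.comp_pow h hj.ne').mono (by omega)).congr_coeff fun n hn => by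
    rw [coeff_expand hj, coeff_intPoly _ hn, truncDilate]
    split_ifs
    · exact coeff_intPoly _ _
    · simp

lemma sq (h : HasIntExpansion F k) : HasIntExpansion (fun u => F u ^ 2) (truncMul k k) := by
  simpa only [pow_two] using h.mul h

lemma pow_four (h : HasIntExpansion F k) :
    HasIntExpansion (fun u => F u ^ 4) (truncMul (truncMul k k) (truncMul k k)) := by
  simpa only [← pow_mul] using h.sq.sq

end HasIntExpansion

end Expansions

/-! ### Fourier coefficients of the slices at the fixed points -/

/-- The vectors of a slice of `ℤ⁵`, parametrised by their first four coordinates. -/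
abbrev Quad : Type := ℤ × ℤ × ℤ × ℤ

/-- The last coordinate of the vector of coordinate sum `c` extending a quadruple. -/
def quadLast (c : ℤ) (x : Quad) : ℤ := c - x.1 - x.2.1 - x.2.2.1 - x.2.2.2

/-- The squared length of the vector of coordinate sum `c` extending a quadruple. -/
def quadSq (c : ℤ) (x : Quad) : ℤ :=
  x.1 ^ 2 + x.2.1 ^ 2 + x.2.2.1 ^ 2 + x.2.2.2 ^ 2 + quadLast c x ^ 2

/-- The exponent of the root of unity attached to a quadruple: five times the pairing with
`rootPt`, modulo five. -/
def quadRes (c : ℤ) (x : Quad) : ℤ := x.2.1 + 2 * x.2.2.1 + 3 * x.2.2.2 + 4 * quadLast c x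

/-- The degree of the term of a quadruple in the expansion of a slice; the truncated division loses
nothing, by `quadSq_eq`. -/
def quadDeg (c : ℤ) (x : Quad) : ℕ := ((quadSq c x - c) / 2).toNat

/-- A vector of a slice is determined by its first four coordinates. -/
def quadEquiv (c : ℤ) : Quad ≃ Slice (Fin 5) c where
  toFun x := ⟨![x.1, x.2.1, x.2.2.1, x.2.2.2, quadLast c x], by
    simp [Fin.sum_univ_five, quadLast]⟩
  invFun a := (a.1 0, a.1 1, a.1 2, a.1 3)
  left_inv _ := rfl
  right_inv a := by
    have h_sum := a.2
    rw [Fin.sum_univ_five] at h_sum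
    ext i
    fin_cases i <;> simp [quadLast]
    linarith

lemma mul_pred_nonneg (a : ℤ) : 0 ≤ a * (a - 1) := by
  rcases le_or_gt a 0 with h | h <;> nlinarith

lemma quadSq_eq (c : ℤ) (x : Quad) : quadSq c x = c + 2 * quadDeg c x := by
  have h_sub : quadSq c x - c = x.1 * (x.1 - 1) + x.2.1 * (x.2.1 - 1) +
      x.2.2.1 * (x.2.2.1 - 1) + x.2.2.2 * (x.2.2.2 - 1) + quadLast c x * (quadLast c x - 1) := by
    simp only [quadSq, quadLast]
    ring
  have h_even : Even (quadSq c x - c) := h_sub ▸ ((((Int.even_mul_pred_self _).add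
    (Int.even_mul_pred_self _)).add (Int.even_mul_pred_self _)).add
      (Int.even_mul_pred_self _)).add (Int.even_mul_pred_self _)
  have h_sub_nonneg : 0 ≤ quadSq c x - c := by
    linarith [mul_pred_nonneg x.1, mul_pred_nonneg x.2.1, mul_pred_nonneg x.2.2.1,
      mul_pred_nonneg x.2.2.2, mul_pred_nonneg (quadLast c x)]
  rw [quadDeg, Int.toNat_of_nonneg (by omega)]
  obtain ⟨k, hk⟩ := h_even
  omega

lemma sliceTerm_quadEquiv (c : ℤ) (τ : ℂ) (ρ : ℕ) (x : Quad) :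
    sliceTerm τ ((ρ : ℂ) • rootPt) (quadEquiv c x).1 =
      cexp (2 * πC * I * τ * (c * (5 - c) / 10)) *
        (zeta5 (ρ * quadRes c x) * qExp τ ^ quadDeg c x) := by
  have h_vec : (quadEquiv c x).1 = ![x.1, x.2.1, x.2.2.1, x.2.2.2, quadLast c x] := rfl
  have h_sq := congrArg (Int.cast : ℤ → ℂ) (quadSq_eq c x)
  rw [zeta5_eq_exp, sliceTerm, sliceNorm, (quadEquiv c x).sum_cast, h_vec, qExp,
    ← Complex.exp_nat_mul, ← Complex.exp_add, ← Complex.exp_add,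
    Complex.exp_eq_exp_iff_exists_int]
  refine ⟨-(2 * ρ * quadLast c x), ?_⟩
  push_cast [quadRes, quadSq] at h_sq ⊢
  simp [Fin.sum_univ_five, rootPt, πC] at h_sq ⊢
  linear_combination (Real.pi * I * τ) * h_sq

/-- The power series of the sum of `w` over a slice, at the point `ρ • rootPt`. -/
def quadSeries (c : ℤ) (ρ : ℕ) (w : Quad → ℤ) (u : ℂ) : ℂ :=
  ∑' x : Quad, zeta5 (ρ * quadRes c x) * w x * u ^ quadDeg c x

lemma tsum_sliceTerm_mul (c : ℤ) (τ : ℂ) (ρ : ℕ) (w : Quad → ℤ) :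
    ∑' a : Slice (Fin 5) c, sliceTerm τ ((ρ : ℂ) • rootPt) a.1 * w ((quadEquiv c).symm a) =
      cexp (2 * πC * I * τ * (c * (5 - c) / 10)) * quadSeries c ρ w (qExp τ) := by
  rw [← (quadEquiv c).tsum_eq, quadSeries, ← tsum_mul_left]
  refine tsum_congr fun x => ?_
  rw [sliceTerm_quadEquiv, Equiv.symm_apply_apply]
  ring

lemma sliceTheta_rootPt (c : ℤ) (τ : ℂ) (ρ : ℕ) : sliceTheta c τ ((ρ : ℂ) • rootPt) =
    cexp (2 * πC * I * τ * (c * (5 - c) / 10)) * quadSeries c ρ 1 (qExp τ) := by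
  simpa [sliceTheta] using tsum_sliceTerm_mul c τ ρ 1

lemma sliceTheta_zero_rootPt (τ : ℂ) (ρ : ℕ) : sliceTheta 0 τ ((ρ : ℂ) • rootPt) =
    quadSeries 0 ρ 1 (qExp τ) := by
  simp [sliceTheta_rootPt]

lemma sliceMoment_rootPt_zero (c : ℤ) (τ : ℂ) (ρ : ℕ) :
    sliceMoment c τ ((ρ : ℂ) • rootPt) 0 =
      cexp (2 * πC * I * τ * (c * (5 - c) / 10)) * quadSeries c ρ Prod.fst (qExp τ) :=
  tsum_sliceTerm_mul c τ ρ Prod.fst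

lemma summable_quadSeries {c : ℤ} {ρ : ℕ} {w : Quad → ℤ}
    (h : Summable fun a : Slice (Fin 5) c =>
      sliceTerm I ((ρ : ℂ) • rootPt) a.1 * w ((quadEquiv c).symm a)) :
    Summable fun x : Quad => ‖zeta5 (ρ * quadRes c x) * w x‖ * ‖qExp I‖ ^ quadDeg c x := by
  have h_scale : ‖cexp (2 * πC * I * I * (c * (5 - c) / 10))‖ ≠ 0 :=
    norm_ne_zero_iff.2 (Complex.exp_ne_zero _)
  refine (summable_mul_left_iff h_scale).1 (((quadEquiv c).summable_iff.2 h).norm.congr fun x => ?_)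
  simp only [Function.comp_apply, Equiv.symm_apply_apply, sliceTerm_quadEquiv, norm_mul, norm_pow]
  ring

lemma summable_quadSeries_one (c : ℤ) (ρ : ℕ) : Summable fun x : Quad =>
    ‖zeta5 (ρ * quadRes c x) * (1 : Quad → ℤ) x‖ * ‖qExp I‖ ^ quadDeg c x :=
  summable_quadSeries <| by
    simpa using (summable_norm_sliceTerm (τ := I) (by simp) c ((ρ : ℂ) • rootPt)).of_norm

lemma summable_quadSeries_fst (c : ℤ) (ρ : ℕ) : Summable fun x : Quad =>
    ‖zeta5 (ρ * quadRes c x) * (Prod.fst x : ℤ)‖ * ‖qExp I‖ ^ quadDeg c x :=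
  summable_quadSeries (summable_sliceTerm_mul_coord (by simp) c _ 0)

lemma sum_zeta5_mul_range {m : ℤ} (hm : ¬ 5 ∣ m) : ∑ r ∈ range 5, zeta5 (m * r) = 0 := by
  have h_pow (r : ℕ) : zeta5 (m * r) = zeta5 m ^ r := by
    rw [zeta5_eq_exp, zeta5_eq_exp, ← Complex.exp_nat_mul]
    push_cast
    ring_nf
  have h_five : zeta5 (m * (5 : ℕ)) = 1 := zeta5_eq_one_iff.2 (Dvd.intro_left m rfl)
  simp only [h_pow] at h_five ⊢
  rw [geom_sum_eq (zeta5_eq_one_iff.not.2 hm), h_five, sub_self, zero_div]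

lemma sum_zeta5_mul_eq_sum_range {ι : Type*} (m : ℤ) (s : Finset ι) (f w : ι → ℤ) :
    ∑ i ∈ s, zeta5 (m * f i) * w i =
      ∑ r ∈ range 5, zeta5 (m * r) * (∑ i ∈ s with f i % 5 = r, w i : ℤ) := by
  rw [← sum_fiberwise_of_maps_to (t := range 5) (g := fun i => (f i % 5).toNat)
    (fun i _ => mem_range.2 (by omega))]
  refine sum_congr rfl fun r _ => ?_
  push_cast
  rw [mul_sum]
  refine sum_congr (filter_congr fun i _ => by omega) fun i hi => ?_
  have h_mod : f i ≡ r [ZMOD 5] := by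
    rw [← (mem_filter.1 hi).2]
    exact (Int.mod_modEq _ _).symm
  rw [zeta5_congr (h_mod.mul_left m)]

/-- Since the fifth roots of unity sum to zero, a sum in which the nontrivial ones occur equally
often is rational. -/
lemma sum_zeta5_mul_eq {ι : Type*} {m : ℤ} (hm : ¬ 5 ∣ m) (s : Finset ι) (f w : ι → ℤ) {k : ℤ}
    (h : ∀ r ∈ Icc (1 : ℤ) 4,
      ∑ i ∈ s with f i % 5 = 0, w i - ∑ i ∈ s with f i % 5 = r, w i = k) :
    ∑ i ∈ s, zeta5 (m * f i) * w i = k := by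
  set S : ℤ → ℤ := fun r => ∑ i ∈ s with f i % 5 = r, w i
  have h_count (r : ℕ) (hr : r ∈ range 5) :
      zeta5 (m * r) * S r = zeta5 (m * r) * (S 0 - k) + if r = 0 then (k : ℂ) else 0 := by
    split_ifs with h_zero
    · simp [h_zero, zeta5_eq_exp]
    · rw [← h r (mem_Icc.2 (by have := mem_range.1 hr; omega))]
      push_cast [S]
      ring
  calc ∑ i ∈ s, zeta5 (m * f i) * w i
    _ = ∑ r ∈ range 5, zeta5 (m * r) * S r := sum_zeta5_mul_eq_sum_range m s f w
    _ = (∑ r ∈ range 5, zeta5 (m * r)) * (S 0 - k) + k := by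
      rw [sum_congr rfl h_count, sum_add_distrib, sum_mul, sum_ite_eq' (range 5) 0,
        if_pos (by simp)]
    _ = k := by rw [sum_zeta5_mul_range hm, zero_mul, zero_add]

/-- All quadruples of degree less than four lie in this box, for the slices `0 ≤ c ≤ 4`. -/
def quadBox : Finset Quad := Icc (-2) 3 ×ˢ Icc (-2) 3 ×ˢ Icc (-2) 3 ×ˢ Icc (-2) 3

lemma mem_quadBox {c : ℤ} (h₀ : 0 ≤ c) (h₄ : c ≤ 4) {x : Quad} (hx : quadDeg c x < 4) :
    x ∈ quadBox := by
  have h_bound (a : ℤ) (ha : 5 * a ^ 2 - 2 * c * a + c ^ 2 ≤ 4 * c + 24) : -2 ≤ a ∧ a ≤ 3 := by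
    interval_cases c <;> constructor <;> nlinarith
  have h_sq : quadSq c x ≤ c + 6 := by have := quadSq_eq c x; omega
  obtain ⟨x, y, z, t⟩ := x
  simp only [quadSq] at h_sq
  have h_sum : c = x + y + z + t + quadLast c (x, y, z, t) := by simp only [quadLast]; ring
  generalize quadLast c (x, y, z, t) = v at h_sq h_sum
  subst h_sum
  -- Cauchy-Schwarz for the other four coordinates.
  simp only [quadBox, mem_product, mem_Icc]
  refine ⟨h_bound x ?_, h_bound y ?_, h_bound z ?_, h_bound t ?_⟩
  · nlinarith [sq_nonneg (y - z), sq_nonneg (y - t), sq_nonneg (y - v), sq_nonneg (z - t),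
      sq_nonneg (z - v), sq_nonneg (t - v)]
  · nlinarith [sq_nonneg (x - z), sq_nonneg (x - t), sq_nonneg (x - v), sq_nonneg (z - t),
      sq_nonneg (z - v), sq_nonneg (t - v)]
  · nlinarith [sq_nonneg (x - y), sq_nonneg (x - t), sq_nonneg (x - v), sq_nonneg (y - t),
      sq_nonneg (y - v), sq_nonneg (t - v)]
  · nlinarith [sq_nonneg (x - y), sq_nonneg (x - z), sq_nonneg (x - v), sq_nonneg (y - z),
      sq_nonneg (y - v), sq_nonneg (z - v)]

/-- The sum of `w` over the quadruples of given length and residue. -/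
def quadCount (c : ℤ) (w : Quad → ℤ) (n : ℕ) (r : ℤ) : ℤ :=
  ∑ x ∈ quadBox with quadSq c x = c + 2 * n ∧ quadRes c x % 5 = r, w x

lemma hasIntExpansion_quadSeries {c : ℤ} (h₀ : 0 ≤ c) (h₄ : c ≤ 4) {w : Quad → ℤ} {ρ : ℕ}
    (hρ : ¬ 5 ∣ ρ)
    (hs : Summable fun x : Quad => ‖zeta5 (ρ * quadRes c x) * w x‖ * ‖qExp I‖ ^ quadDeg c x)
    {k : Fin 4 → ℤ} (hk : ∀ n : Fin 4, ∀ r ∈ Icc (1 : ℤ) 4,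
      quadCount c w n 0 - quadCount c w n r = k n) :
    HasIntExpansion (quadSeries c ρ w) k := by
  refine (HasExpansion.tsum (norm_pos_iff.2 (Complex.exp_ne_zero _)) hs
    (s := {x ∈ quadBox | quadDeg c x < 4}) fun x hx => ?_).congr_coeff fun n hn => ?_
  · by_contra! h_lt
    exact hx (mem_filter.2 ⟨mem_quadBox h₀ h₄ h_lt, h_lt⟩)
  have h_filter : {x ∈ {x ∈ quadBox | quadDeg c x < 4} | n = quadDeg c x} =
      {x ∈ quadBox | quadSq c x = c + 2 * n} := by
    rw [filter_filter]
    refine filter_congr fun x _ => ?_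
    have := quadSq_eq c x
    omega
  have h_cast : ¬ (5 : ℤ) ∣ ρ := by omega
  rw [coeff_intPoly _ hn,
    ← sum_zeta5_mul_eq h_cast {x ∈ quadBox | quadSq c x = c + 2 * n} (quadRes c) w fun r hr => by
      simpa only [filter_filter, quadCount] using hk ⟨n, hn⟩ r hr,
    Polynomial.finsetSum_coeff]
  simp only [Polynomial.coeff_C_mul_X_pow]
  rw [← sum_filter, h_filter]

set_option maxRecDepth 100000 in
lemma quadCount_zero_one : ∀ n : Fin 4, ∀ r ∈ Icc 1 4,
    quadCount 0 1 n 0 - quadCount 0 1 n r = ![1, -5, 5, 10] n := by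
  decide +kernel

set_option maxRecDepth 100000 in
lemma quadCount_one_fst : ∀ n : Fin 4, ∀ r ∈ Icc 1 4,
    quadCount 1 Prod.fst n 0 - quadCount 1 Prod.fst n r = ![1, -4, 1, 11] n := by
  decide +kernel

set_option maxRecDepth 100000 in
lemma quadCount_two_fst : ∀ n : Fin 4, ∀ r ∈ Icc 1 4,
    quadCount 2 Prod.fst n 0 - quadCount 2 Prod.fst n r = ![-1, 5, -6, -6] n := by
  decide +kernel

set_option maxRecDepth 100000 in
lemma quadCount_three_fst : ∀ n : Fin 4, ∀ r ∈ Icc 1 4,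
    quadCount 3 Prod.fst n 0 - quadCount 3 Prod.fst n r = ![1, -5, 6, 6] n := by
  decide +kernel

set_option maxRecDepth 100000 in
lemma quadCount_four_fst : ∀ n : Fin 4, ∀ r ∈ Icc 1 4,
    quadCount 4 Prod.fst n 0 - quadCount 4 Prod.fst n r = ![-1, 4, -1, -11] n := by
  decide +kernel

/-- The product of slice series through which the theta series of `E₈` enter the Jacobian: the
first moment of the slice `c` times the theta series of the slice `0`. -/
def sliceProd (c : ℤ) (ρ : ℕ) (u : ℂ) : ℂ := quadSeries c ρ Prod.fst u * quadSeries 0 ρ 1 u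

lemma hasIntExpansion_sliceProd {c : ℤ} {ρ : ℕ} (hρ : ¬ 5 ∣ ρ) (h₀ : 0 ≤ c) (h₄ : c ≤ 4)
    {k : Fin 4 → ℤ} (hk : ∀ n : Fin 4, ∀ r ∈ Icc (1 : ℤ) 4,
      quadCount c Prod.fst n 0 - quadCount c Prod.fst n r = k n) :
    HasIntExpansion (sliceProd c ρ) (truncMul k ![1, -5, 5, 10]) :=
  (hasIntExpansion_quadSeries h₀ h₄ hρ (summable_quadSeries_fst c ρ) hk).mul
    (hasIntExpansion_quadSeries le_rfl (by simp) hρ (summable_quadSeries_one 0 ρ)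
      quadCount_zero_one)

lemma hasIntExpansion_sliceProd_one {ρ : ℕ} (hρ : ¬ 5 ∣ ρ) :
    HasIntExpansion (sliceProd 1 ρ) ![1, -9, 26, -4] :=
  (hasIntExpansion_sliceProd hρ (by simp) (by simp) quadCount_one_fst).of_eq (by decide)

lemma hasIntExpansion_sliceProd_two {ρ : ℕ} (hρ : ¬ 5 ∣ ρ) :
    HasIntExpansion (sliceProd 2 ρ) ![-1, 10, -36, 39] :=
  (hasIntExpansion_sliceProd hρ (by simp) (by simp) quadCount_two_fst).of_eq (by decide)

lemma hasIntExpansion_sliceProd_three {ρ : ℕ} (hρ : ¬ 5 ∣ ρ) :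
    HasIntExpansion (sliceProd 3 ρ) ![1, -10, 36, -39] :=
  (hasIntExpansion_sliceProd hρ (by simp) (by simp) quadCount_three_fst).of_eq (by decide)

lemma hasIntExpansion_sliceProd_four {ρ : ℕ} (hρ : ¬ 5 ∣ ρ) :
    HasIntExpansion (sliceProd 4 ρ) ![-1, 9, -26, 4] :=
  (hasIntExpansion_sliceProd hρ (by simp) (by simp) quadCount_four_fst).of_eq (by decide)

/-! ### Theta constants -/

/-- The theta series of `n ^ 2`, over all integers `n`. -/
def thetaSq (u : ℂ) : ℂ := ∑' n : ℤ, u ^ n.natAbs ^ 2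

/-- The theta series of `n * (n - 1)`, over all integers `n`. -/
def thetaTri (u : ℂ) : ℂ := ∑' n : ℤ, u ^ (n * (n - 1)).toNat

lemma summable_half_pow_natAbs : Summable fun n : ℤ => (1 / 2 : ℝ) ^ n.natAbs :=
  .of_nat_of_neg (by simpa using summable_geometric_two) (by simpa using summable_geometric_two)

lemma hasIntExpansion_thetaSq : HasIntExpansion thetaSq ![1, 2, 0, 0] := by
  have h_summable : Summable fun n : ℤ => ‖(1 : ℂ)‖ * (1 / 2 : ℝ) ^ n.natAbs ^ 2 := by
    refine summable_half_pow_natAbs.of_nonneg_of_le (fun n => by positivity) fun n => ?_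
    rw [norm_one, one_mul]
    exact pow_le_pow_of_le_one (by simp) (by norm_num) (Nat.le_self_pow two_ne_zero _)
  have h_tsum := HasExpansion.tsum (by norm_num) h_summable (N := 4) (s := {-1, 0, 1})
    fun n hn => by
      simp only [mem_insert, mem_singleton, not_or] at hn
      exact Nat.pow_le_pow_left (by omega : 2 ≤ n.natAbs) 2
  simp only [one_mul] at h_tsum
  refine h_tsum.congr_coeff fun n hn => ?_
  interval_cases n <;> simp [coeff_intPoly, Polynomial.coeff_X, Polynomial.coeff_one]
  norm_num

lemma hasIntExpansion_thetaTri : HasIntExpansion thetaTri ![2, 0, 2, 0] := by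
  have h_summable : Summable fun n : ℤ => ‖(1 : ℂ)‖ * (1 / 2 : ℝ) ^ (n * (n - 1)).toNat := by
    refine (summable_half_pow_natAbs.mul_left 2).of_nonneg_of_le (fun n => by positivity)
      fun n => ?_
    have h_natAbs : (n.natAbs : ℤ) ≤ n * (n - 1) + 1 := by
      rw [Int.natCast_natAbs]
      exact abs_le.2 ⟨by nlinarith [mul_pred_nonneg n, sq_nonneg (n + 1)],
        by nlinarith [sq_nonneg (n - 1)]⟩
    have h_pow := pow_le_pow_of_le_one (by norm_num : (0 : ℝ) ≤ 1 / 2) (by norm_num)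
      (by omega : n.natAbs ≤ (n * (n - 1)).toNat + 1)
    rw [pow_succ] at h_pow
    rw [norm_one]
    linarith
  have h_tsum := HasExpansion.tsum (by norm_num) h_summable (N := 4) (s := {-1, 0, 1, 2})
    fun n hn => by
      simp only [mem_insert, mem_singleton, not_or] at hn
      have : 4 ≤ n * (n - 1) := by
        rcases lt_or_ge n 0 with h | h
        · nlinarith [show n ≤ -2 by omega]
        · nlinarith [show 3 ≤ n by omega]
      omega
  simp only [one_mul] at h_tsum
  refine h_tsum.congr_coeff fun n hn => ?_
  interval_cases n <;>
    simp [coeff_intPoly, Polynomial.coeff_X_pow, Polynomial.coeff_one] <;> norm_num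

lemma natCast_natAbs_sq (n : ℤ) : (n.natAbs : ℂ) ^ 2 = n ^ 2 := by
  rw [← Int.cast_natCast, ← Int.cast_pow, Int.natAbs_sq, Int.cast_pow]

lemma th3_zero_eq (τ : ℂ) : th3 0 τ = thetaSq (qExp (τ / 2)) := by
  refine tsum_congr fun n => ?_
  rw [qExp, ← Complex.exp_nat_mul, mul_zero, zero_mul, Complex.exp_zero, one_mul]
  push_cast [natCast_natAbs_sq]
  ring_nf

lemma th4_zero_eq (τ : ℂ) : th4 0 τ = thetaSq (-qExp (τ / 2)) := by
  rw [th4, thetaSq]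
  refine tsum_congr fun n => ?_
  have h_sign : (-1 : ℂ) ^ n.natAbs ^ 2 = (-1) ^ n := by
    rw [← zpow_natCast, Nat.cast_pow, Int.natAbs_sq]
    rcases Int.even_or_odd n with h | h
    · rw [h.neg_one_zpow, (h.pow_of_ne_zero two_ne_zero).neg_one_zpow]
    · rw [h.neg_one_zpow, h.pow.neg_one_zpow]
  rw [neg_pow, h_sign, qExp, ← Complex.exp_nat_mul, mul_zero, zero_mul, Complex.exp_zero, mul_one]
  push_cast [natCast_natAbs_sq]
  ring_nf

lemma th2_zero_eq (τ : ℂ) : th2 0 τ = cexp (πC * I * τ / 4) * thetaTri (qExp (τ / 2)) := by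
  rw [th2, thetaTri, ← tsum_mul_left]
  refine tsum_congr fun n => ?_
  have h_toNat : (((n * (n - 1)).toNat : ℤ) : ℂ) = n * (n - 1) := by
    rw [Int.toNat_of_nonneg (mul_pred_nonneg n)]
    push_cast
    rfl
  rw [qExp, ← Complex.exp_nat_mul, ← Int.cast_natCast, h_toNat, mul_zero, zero_mul,
    Complex.exp_zero, one_mul, ← Complex.exp_add]
  ring_nf

lemma th2_zero_pow_four (τ : ℂ) :
    th2 0 τ ^ 4 = qExp (τ / 2) * thetaTri (qExp (τ / 2)) ^ 4 := by
  have h_exp : cexp (πC * I * τ / 4) ^ 4 = qExp (τ / 2) := by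
    rw [qExp, ← Complex.exp_nat_mul]
    push_cast
    ring_nf
  rw [th2_zero_eq, mul_pow, h_exp]

lemma thetaTri_neg (u : ℂ) : thetaTri (-u) = thetaTri u := by
  refine tsum_congr fun n => ?_
  have h_even : Even (n * (n - 1)).toNat := by
    have h := Int.even_mul_pred_self n
    rw [← Int.toNat_of_nonneg (mul_pred_nonneg n)] at h
    exact_mod_cast h
  rw [h_even.neg_pow]

lemma qExp_add_half (τ : ℂ) : qExp ((τ + 1) / 2) = -qExp (τ / 2) := by
  rw [qExp, qExp, show 2 * πC * I * ((τ + 1) / 2) = 2 * πC * I * (τ / 2) + Real.pi * I by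
    rw [πC]; ring, Complex.exp_add, Complex.exp_pi_mul_I]
  ring

lemma qExp_natCast_mul (n : ℕ) (τ : ℂ) : qExp (n * τ) = qExp τ ^ n := by
  rw [qExp, qExp, ← Complex.exp_nat_mul]
  ring_nf

/-- The theta series of the form `h0`. -/
def hSeries (u : ℂ) : ℂ := thetaSq u * thetaSq (u ^ 3) + u * (thetaTri u * thetaTri (u ^ 3))

lemma h0_eq (τ : ℂ) : h0 τ = hSeries (qExp τ) := by
  have h_three : qExp (6 * τ / 2) = qExp τ ^ 3 := by
    rw [← qExp_natCast_mul]
    push_cast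
    ring_nf
  have h_exp : cexp (πC * I * (2 * τ) / 4) * cexp (πC * I * (6 * τ) / 4) = qExp τ := by
    rw [qExp, ← Complex.exp_add]
    ring_nf
  rw [h0, th3_zero_eq, th3_zero_eq, th2_zero_eq, th2_zero_eq, h_three,
    mul_div_cancel_left₀ τ two_ne_zero, hSeries]
  linear_combination thetaTri (qExp τ) * thetaTri (qExp τ ^ 3) * h_exp

/-- The theta series of `-12 * ee3`. -/
def eeSeries (u : ℂ) : ℂ := thetaSq u ^ 4 + u * thetaTri u ^ 4

lemma ee3_eq (τ : ℂ) : ee3 τ = -(1 / 12) * eeSeries (qExp (τ / 2)) := by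
  rw [ee3, th2_zero_pow_four, th3_zero_eq, eeSeries]
  ring

lemma ee2_eq (τ : ℂ) : ee2 τ = -(1 / 12) * eeSeries (qExp ((τ + 1) / 2)) := by
  rw [ee2, th2_zero_pow_four, th4_zero_eq, eeSeries, qExp_add_half, thetaTri_neg]
  ring

lemma hasIntExpansion_hSeries : HasIntExpansion hSeries ![1, 6, 0, 6] :=
  ((hasIntExpansion_thetaSq.mul (hasIntExpansion_thetaSq.comp_pow three_pos)).add
      (hasIntExpansion_thetaTri.mul (hasIntExpansion_thetaTri.comp_pow three_pos)).mul_id).of_eq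
    (by decide)

lemma hasIntExpansion_eeSeries : HasIntExpansion eeSeries ![1, 24, 24, 96] :=
  (hasIntExpansion_thetaSq.pow_four.add hasIntExpansion_thetaTri.pow_four.mul_id).of_eq
    (by decide)

lemma hasIntExpansion_mul_thetaTri_pow_four :
    HasIntExpansion (fun u => u * thetaTri u ^ 4) ![0, 16, 0, 64] :=
  (hasIntExpansion_thetaTri.pow_four.mul_id).of_eq (by decide)

lemma hasIntExpansion_hSeries_sq : HasIntExpansion (fun u => hSeries u ^ 2) ![1, 12, 36, 12] :=
  hasIntExpansion_hSeries.sq.of_eq (by decide)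

lemma hasIntExpansion_hSeries_sq_comp_sq :
    HasIntExpansion (fun u => hSeries (u ^ 2) ^ 2) ![1, 0, 12, 0] :=
  (hasIntExpansion_hSeries_sq.comp_pow two_pos).of_eq (by decide)

lemma hasIntExpansion_one : HasIntExpansion (fun _ => 1) ![1, 0, 0, 0] :=
  (HasExpansion.const 4 1).congr_coeff fun n hn => by
    interval_cases n <;> simp [coeff_intPoly, Polynomial.coeff_one]

/-! ### Leading coefficients along the imaginary axis -/

/-- The normalizing factor `exp (2πsT)`, which compensates `q ^ s` at `τ = iT`. -/
def grow (s T : ℝ) : ℂ := cexp (2 * πC * (s * T))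

lemma grow_zero (T : ℝ) : grow 0 T = 1 := by simp [grow]

lemma tendsto_grow_of_neg {s : ℝ} (hs : s < 0) : Tendsto (grow s) atTop (𝓝 0) := by
  have h_norm (T : ℝ) : ‖grow s T‖ = Real.exp (2 * Real.pi * s * T) := by
    rw [grow, Complex.norm_exp, πC]
    congr 1
    norm_cast
    ring
  rw [tendsto_zero_iff_norm_tendsto_zero]
  simp only [h_norm]
  exact Real.tendsto_exp_atBot.comp
    (tendsto_id.const_mul_atTop_of_neg (by nlinarith [Real.pi_pos]))

lemma qExp_rescaled (d ρ : ℕ) (l : ℂ) (T : ℝ) :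
    qExp ((ρ * (I * T) + l) / d) = cexp (2 * πC * I * (l / d)) * grow (-(ρ / d)) T := by
  rw [qExp, grow, ← Complex.exp_add]
  congr 1
  push_cast
  linear_combination (2 * πC * ρ * T / d) * I_mul_I

lemma tendsto_qExp_rescaled {d ρ : ℕ} (hd : d ≠ 0) (hρ : ρ ≠ 0) (l : ℂ) :
    Tendsto (fun T : ℝ => qExp ((ρ * (I * T) + l) / d)) atTop (𝓝[≠] 0) := by
  refine tendsto_nhdsWithin_iff.2 ⟨?_, .of_forall fun T => Complex.exp_ne_zero _⟩
  have h_neg : (-(ρ / d) : ℝ) < 0 := neg_lt_zero.2 (by positivity)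
  simpa only [qExp_rescaled, mul_zero] using
    (tendsto_grow_of_neg h_neg).const_mul (cexp (2 * πC * I * (l / d)))

/-- The function `C` of `τ` is asymptotic to `L * exp (-2πsT)` at `τ = iT` as `T` tends to
infinity; the value `L = 0` is allowed. -/
def HasLeadingCoeff (s : ℝ) (C : ℂ → ℂ) (L : ℂ) : Prop :=
  Tendsto (fun T : ℝ => grow s T * C (I * T)) atTop (𝓝 L)

namespace HasLeadingCoeff

variable {s t : ℝ} {C D : ℂ → ℂ} {L M : ℂ}

lemma of_eq (h : HasLeadingCoeff s C L) (hCD : ∀ τ, D τ = C τ) (hLM : L = M) :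
    HasLeadingCoeff s D M := by
  obtain rfl : D = C := funext hCD
  exact hLM ▸ h

lemma add (h : HasLeadingCoeff s C L) (h' : HasLeadingCoeff s D M) :
    HasLeadingCoeff s (fun τ => C τ + D τ) (L + M) :=
  (Tendsto.add h h').congr fun T => by ring

lemma const_mul (h : HasLeadingCoeff s C L) (c : ℂ) :
    HasLeadingCoeff s (fun τ => c * C τ) (c * L) :=
  (Tendsto.const_mul c h).congr fun T => by ring

lemma sub (h : HasLeadingCoeff s C L) (h' : HasLeadingCoeff s D M) :
    HasLeadingCoeff s (fun τ => C τ - D τ) (L - M) :=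
  (Tendsto.sub h h').congr fun T => by ring

lemma sum {ι : Type*} {S : Finset ι} {C : ι → ℂ → ℂ} {L : ι → ℂ}
    (h : ∀ k, HasLeadingCoeff s (C k) (L k)) :
    HasLeadingCoeff s (fun τ => ∑ k ∈ S, C k τ) (∑ k ∈ S, L k) := by
  simpa only [HasLeadingCoeff, mul_sum] using tendsto_finsetSum S fun k _ => h k

lemma mul (h : HasLeadingCoeff s C L) (h' : HasLeadingCoeff t D M) :
    HasLeadingCoeff (s + t) (fun τ => C τ * D τ) (L * M) := by
  refine (Tendsto.mul h h').congr fun T => ?_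
  have h_add : grow (s + t) T = grow s T * grow t T := by
    rw [grow, grow, grow, ← Complex.exp_add]
    push_cast
    ring_nf
  rw [h_add]
  ring

lemma pow (h : HasLeadingCoeff 0 C L) (n : ℕ) :
    HasLeadingCoeff 0 (fun τ => C τ ^ n) (L ^ n) := by
  simpa only [HasLeadingCoeff, grow_zero, one_mul] using Tendsto.pow h n

lemma weight_mul (h : HasLeadingCoeff 0 C L) (h' : HasLeadingCoeff s D M) :
    HasLeadingCoeff s (fun τ => C τ * D τ) (L * M) := by
  simpa only [zero_add] using h.mul h'

lemma eventually_ne_zero (h : HasLeadingCoeff s C L) (hL : L ≠ 0) :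
    ∀ᶠ T : ℝ in atTop, C (I * T) ≠ 0 :=
  (h.eventually_ne hL).mono fun _ hT => right_ne_zero_of_mul hT

lemma of_expansion {F : ℂ → ℂ} {k : Fin 4 → ℤ} (h : HasIntExpansion F k) {d ρ : ℕ} (hd : d ≠ 0)
    (hρ : ρ ≠ 0) (l : ℂ) : HasLeadingCoeff 0 (fun τ => F (qExp ((ρ * τ + l) / d))) (k 0) := by
  have h_lim : Tendsto F (𝓝 0) (𝓝 (k 0)) :=
    coeff_intPoly k four_pos ▸ HasExpansion.tendsto h four_ne_zero
  simpa only [HasLeadingCoeff, grow_zero, one_mul, Function.comp_def] using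
    (h_lim.mono_left nhdsWithin_le_nhds).comp (tendsto_qExp_rescaled hd hρ l)

end HasLeadingCoeff

/-- The first coefficients of `sliceProd c`, for the residues `c = 1, 2, 3, 4`. -/
def sliceProdCoeffs : ℕ → Fin 4 → ℤ
  | 1 => ![1, -9, 26, -4]
  | 2 => ![-1, 10, -36, 39]
  | 3 => ![1, -10, 36, -39]
  | 4 => ![-1, 9, -26, 4]
  | _ => 0

lemma hasIntExpansion_sliceProd_mod_five {n ρ : ℕ} (hn : ¬ 5 ∣ n) (hρ : ¬ 5 ∣ ρ) :
    HasIntExpansion (sliceProd (n % 5 : ℕ) ρ) (sliceProdCoeffs (n % 5)) := by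
  have h_pos : 1 ≤ n % 5 := by omega
  have h_lt : n % 5 < 5 := Nat.mod_lt n (by norm_num)
  interval_cases n % 5
  exacts [hasIntExpansion_sliceProd_one hρ, hasIntExpansion_sliceProd_two hρ,
    hasIntExpansion_sliceProd_three hρ, hasIntExpansion_sliceProd_four hρ]

section ThetaCoef

variable {e d ρ : ℕ} {s : ℝ} {L : ℤ}

/-- Half the minimal norm of the slice of residue `κ`. -/
def sliceExponent (κ : ℕ) : ℝ := κ * (5 - κ) / 10

lemma thetaCoef_eq (e d ρ l : ℕ) (τ : ℂ) : thetaCoef e d ρ l τ =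
    ρ * zeta5 (3 * e ^ 2 * d * l) *
      cexp (2 * πC * I * ((ρ * τ + l) / d) * sliceExponent (e * d % 5)) *
        sliceProd (e * d % 5 : ℕ) ρ (qExp ((ρ * τ + l) / d)) := by
  rw [thetaCoef, sliceMoment_rootPt_zero, sliceTheta_zero_rootPt, sliceProd, sliceExponent,
    Int.cast_natCast]
  push_cast
  ring

lemma grow_mul_thetaCoef (e d ρ l : ℕ) (s T : ℝ) :
    grow s T * thetaCoef e d ρ l (I * T) =
      grow (s - ρ * sliceExponent (e * d % 5) / d) T *
        (ρ * cexp (2 * πC * I *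
          (l * (3 * e ^ 2 * d / 5 + sliceExponent (e * d % 5) / d))) *
          sliceProd (e * d % 5 : ℕ) ρ (qExp ((ρ * (I * T) + l) / d))) := by
  have h_exp : grow s T * cexp (2 * πC * I * ((3 * e ^ 2 * d * l : ℤ) / 5)) *
      cexp (2 * πC * I * ((ρ * (I * T) + l) / d) * sliceExponent (e * d % 5)) =
      grow (s - ρ * sliceExponent (e * d % 5) / d) T *
        cexp (2 * πC * I * (l * (3 * e ^ 2 * d / 5 + sliceExponent (e * d % 5) / d))) := by
    rw [grow, grow, ← Complex.exp_add, ← Complex.exp_add, ← Complex.exp_add]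
    congr 1
    push_cast
    linear_combination (2 * πC * ρ * T / d * sliceExponent (e * d % 5)) * I_mul_I
  rw [thetaCoef_eq, zeta5_eq_exp]
  linear_combination (ρ * sliceProd (e * d % 5 : ℕ) ρ (qExp ((ρ * (I * T) + l) / d))) * h_exp

lemma tendsto_sliceProd_qExp (hed : ¬ 5 ∣ e * d) (hρ : ¬ 5 ∣ ρ) (l : ℕ) :
    Tendsto (fun T : ℝ => sliceProd (e * d % 5 : ℕ) ρ (qExp ((ρ * (I * T) + l) / d))) atTop
      (𝓝 (sliceProdCoeffs (e * d % 5) 0)) := by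
  simpa only [HasLeadingCoeff, grow_zero, one_mul] using HasLeadingCoeff.of_expansion
    (hasIntExpansion_sliceProd_mod_five hed hρ) (by grind : d ≠ 0) (by grind) l

lemma hasLeadingCoeff_thetaCoef {l : ℕ} (n : ℕ) (hed : ¬ 5 ∣ e * d := by decide)
    (hρ : ¬ 5 ∣ ρ := by decide)
    (hs : s = ρ * sliceExponent (e * d % 5) / d := by norm_num [sliceExponent])
    (hn : (l * (3 * e ^ 2 * d / 5 + sliceExponent (e * d % 5) / d) : ℝ) = n / 2 := by
      norm_num [sliceExponent])
    (hL : ρ * (-1) ^ n * sliceProdCoeffs (e * d % 5) 0 = L := by decide) :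
    HasLeadingCoeff s (thetaCoef e d ρ l) L := by
  have h_sign : cexp (2 * πC * I *
      (l * (3 * e ^ 2 * d / 5 + sliceExponent (e * d % 5) / d))) = (-1) ^ n := by
    have hn' : (l * (3 * e ^ 2 * d / 5 + sliceExponent (e * d % 5) / d) : ℂ) = n / 2 := by
      rw [← ofReal_inj] at hn
      push_cast at hn
      exact hn
    rw [hn', ← Complex.exp_pi_mul_I, ← Complex.exp_nat_mul, πC]
    ring_nf
  rw [← hL]
  push_cast
  simpa only [HasLeadingCoeff, grow_mul_thetaCoef, hs, sub_self, grow_zero, one_mul, h_sign] using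
    (tendsto_sliceProd_qExp hed hρ l).const_mul ((ρ : ℂ) * (-1) ^ n)

lemma hasLeadingCoeff_thetaCoef_zero (l : ℕ) (hed : ¬ 5 ∣ e * d := by decide)
    (hρ : ¬ 5 ∣ ρ := by decide)
    (hs : s < ρ * sliceExponent (e * d % 5) / d := by norm_num [sliceExponent]) :
    HasLeadingCoeff s (thetaCoef e d ρ l) 0 := by
  simpa only [HasLeadingCoeff, grow_mul_thetaCoef, zero_mul] using
    (tendsto_grow_of_neg (sub_neg.2 hs)).mul ((tendsto_sliceProd_qExp hed hρ l).const_mul _)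

lemma grow_mul_exp_phase {a n : ℕ} (hd : d ≠ 0)
    (hs : s = (ρ * sliceExponent (e * d % 5) + a) / d)
    (hn : (3 * e ^ 2 * d * ρ / 5 + s : ℝ) = n) (k : ℕ) (T : ℝ) :
    grow (s - ρ * sliceExponent (e * d % 5) / d) T * cexp (2 * πC * I *
      ((ρ * k : ℕ) * (3 * e ^ 2 * d / 5 + sliceExponent (e * d % 5) / d))) =
        (cexp (2 * Real.pi * I / d) ^ (a * k))⁻¹ / qExp (I * T / d) ^ a := by
  have hdC : (d : ℂ) ≠ 0 := mod_cast hd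
  have hs' : (s : ℂ) = (ρ * sliceExponent (e * d % 5) + a) / d :=
    mod_cast congrArg ((↑) : ℝ → ℂ) hs
  have hn' : (3 * e ^ 2 * d * ρ / 5 + s : ℂ) = n := by
    rw [← ofReal_inj] at hn
    push_cast at hn
    exact hn
  have h_ne : cexp (2 * Real.pi * I / d) ^ (a * k) * qExp (I * T / d) ^ a ≠ 0 :=
    mul_ne_zero (pow_ne_zero _ (Complex.exp_ne_zero _)) (pow_ne_zero _ (Complex.exp_ne_zero _))
  rw [← one_div, div_div, eq_div_iff h_ne, ← Complex.exp_nat_mul_two_pi_mul_I (k * n), grow,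
    qExp, ← Complex.exp_nat_mul, ← Complex.exp_nat_mul, ← Complex.exp_add, ← Complex.exp_add,
    ← Complex.exp_add]
  congr 1
  push_cast
  rw [← hn', hs', πC]
  field_simp
  linear_combination (5 * a * T : ℂ) * I_sq

/-- Up to scaling the summands are values at the points `ζ ^ k * u`, `ζ` a primitive `d`-th root of
unity, so that summation over `k` extracts one Taylor coefficient. -/
lemma grow_mul_mul_thetaCoef {a n : ℕ} (hd : d ≠ 0)
    (hs : s = (ρ * sliceExponent (e * d % 5) + a) / d)
    (hn : (3 * e ^ 2 * d * ρ / 5 + s : ℝ) = n) (W : ℂ → ℂ) (k : ℕ) (T : ℝ) :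
    grow s T * (W (qExp ((I * T + k) / d)) * thetaCoef e d ρ (ρ * k) (I * T)) =
      ρ * ((cexp (2 * Real.pi * I / d) ^ (a * k))⁻¹ *
        (W (cexp (2 * Real.pi * I / d) ^ k * qExp (I * T / d)) *
          sliceProd (e * d % 5 : ℕ) ρ ((cexp (2 * Real.pi * I / d) ^ k * qExp (I * T / d)) ^ ρ)) /
            qExp (I * T / d) ^ a) := by
  set u := cexp (2 * Real.pi * I / d) ^ k * qExp (I * T / d) with hu
  have h_qExp : qExp ((I * T + k) / d) = u := by
    rw [hu, qExp, qExp, ← Complex.exp_nat_mul, ← Complex.exp_add, πC]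
    ring_nf
  have h_qExp_pow : qExp ((ρ * (I * T) + (ρ * k : ℕ)) / d) = u ^ ρ := by
    rw [← h_qExp, ← qExp_natCast_mul]
    push_cast
    ring_nf
  rw [mul_left_comm, grow_mul_thetaCoef, h_qExp, h_qExp_pow]
  linear_combination (W u * ρ * sliceProd (e * d % 5 : ℕ) ρ (u ^ ρ)) *
    grow_mul_exp_phase hd hs hn k T

lemma hasLeadingCoeff_sum_thetaCoef {V : ℕ → ℂ → ℂ} {W : ℂ → ℂ} {w : Fin 4 → ℤ} {l : ℕ → ℕ}
    (hV : ∀ k τ, V k τ = W (qExp ((τ + k) / d))) (hW : HasIntExpansion W w) (a : Fin 4) (n : ℕ)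
    (hl : ∀ k, l k = ρ * k := by simp) (hed : ¬ 5 ∣ e * d := by decide)
    (hρ : ¬ 5 ∣ ρ := by decide) (had : a < d := by decide)
    (hs : s = (ρ * sliceExponent (e * d % 5) + (a : ℕ)) / d := by norm_num [sliceExponent])
    (hn : (3 * e ^ 2 * d * ρ / 5 + s : ℝ) = n := by norm_num)
    (hL : ρ * (d * truncMul w (truncDilate ρ (sliceProdCoeffs (e * d % 5))) a) = L := by
      decide) :
    HasLeadingCoeff s
      (fun τ => ∑ k ∈ range d, V k τ * thetaCoef e d ρ (l k) τ) L := by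
  have hd : d ≠ 0 := by omega
  have h_qExp : Tendsto (fun T : ℝ => qExp (I * T / d)) atTop (𝓝[≠] 0) := by
    simpa using tendsto_qExp_rescaled hd one_ne_zero 0
  have hρ_pos : 0 < ρ := Nat.pos_of_ne_zero (by grind)
  have h_expansion := hW.mul ((hasIntExpansion_sliceProd_mod_five hed hρ).comp_pow hρ_pos)
  have h_average := ((HasExpansion.mono h_expansion a.isLt).tendsto_sum_rootsOfUnity had
    (Complex.isPrimitiveRoot_exp d hd)).comp h_qExp |>.const_mul (ρ : ℂ)
  rw [coeff_intPoly _ a.isLt] at h_average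
  rw [← hL]
  push_cast
  refine h_average.congr fun T => ?_
  rw [Function.comp, sum_div, mul_sum, mul_sum]
  exact sum_congr rfl fun k _ => by
    rw [hV, hl]
    exact (grow_mul_mul_thetaCoef hd hs hn W k T).symm

end ThetaCoef

/-! ### The nine forms as combinations of rescaled theta functions -/

/-- The combination that yields `A_m` from the rescaled theta functions, and the coordinates of its
differential from theirs. The arguments `d ρ l τ` of `X` stand for `Θ((ρτ + l)/d, ρ z)`. -/
def combAM (m : ℕ) (X : ℕ → ℕ → ℕ → ℂ → ℂ) (τ : ℂ) : ℂ :=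
  m ^ 3 / (m ^ 3 + 1) * (X 1 m 0 τ + (m ^ 4 : ℂ)⁻¹ * ∑ k ∈ range m, X m 1 k τ)

/-- The combination that yields `B_2`; see `combAM`. -/
def combB2 (X : ℕ → ℕ → ℕ → ℂ → ℂ) (τ : ℂ) : ℂ :=
  32 / 5 * (ee1 τ * X 1 2 0 τ + 1 / 2 ^ 4 * ee3 τ * X 2 1 0 τ + 1 / 2 ^ 4 * ee2 τ * X 2 1 1 τ)

/-- The combination that yields `B_3`; see `combAM`. -/
def combB3 (X : ℕ → ℕ → ℕ → ℂ → ℂ) (τ : ℂ) : ℂ :=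
  81 / 80 * (h0 τ ^ 2 * X 1 3 0 τ -
    1 / 3 ^ 5 * ∑ k ∈ range 3, h0 ((τ + k) / 3) ^ 2 * X 3 1 k τ)

/-- The combination that yields `B_4`; see `combAM`. -/
def combB4 (X : ℕ → ℕ → ℕ → ℂ → ℂ) (τ : ℂ) : ℂ :=
  16 / 15 * (th4 0 (2 * τ) ^ 4 * X 1 4 0 τ - 1 / 2 ^ 4 * (th4 0 (2 * τ) ^ 4 * X 2 2 1 τ) -
    1 / (2 ^ 2 * 4 ^ 4) * ∑ k ∈ range 4, th2 0 ((τ + k) / 2) ^ 4 * X 4 1 k τ)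

/-- The combination that yields `B_6`; see `combAM`. -/
def combB6 (X : ℕ → ℕ → ℕ → ℂ → ℂ) (τ : ℂ) : ℂ :=
  9 / 10 * (h0 τ ^ 2 * X 1 6 0 τ
    + 1 / 2 ^ 4 * ∑ k ∈ range 2, h0 (τ + k) ^ 2 * X 2 3 (3 * k) τ
    - 1 / (3 * 3 ^ 4) * ∑ k ∈ range 3, h0 ((τ + k) / 3) ^ 2 * X 3 2 (2 * k) τ
    - 1 / (3 * 6 ^ 4) * ∑ k ∈ range 6, h0 ((τ + k) / 3) ^ 2 * X 6 1 k τ)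

section Forms

variable {τ : ℂ}

lemma HasJet.congr {m : ℕ} {F F' : (Fin 8 → ℂ) → ℂ} {V : ℂ} {D : (Fin 8 → ℂ) →L[ℂ] ℂ}
    (h : HasJet τ m F V D) (hF : ∀ z, F' z = F z) : HasJet τ m F' V D :=
  (funext hF : F' = F) ▸ h

lemma HasCoeffs.congr {m : ℕ} {F F' : (Fin 8 → ℂ) → ℂ} {A B : ℂ} (h : HasCoeffs τ m F A B)
    (hF : ∀ z, F' z = F z) : HasCoeffs τ m F' A B :=
  HasJet.congr h hF

lemma hasCoeffs_A1 (hτ : 0 < τ.im) :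
    HasCoeffs τ 1 (A1 τ) (thetaCoef 1 1 1 0 τ) (thetaCoef 3 1 1 0 τ) :=
  (hasCoeffs_Theta hτ (d := 1) (ρ := 1) (by decide) (by decide) 0).congr fun z => by simp [A1]

lemma hasCoeffs_A4 (hτ : 0 < τ.im) :
    HasCoeffs τ 4 (A4 τ) (thetaCoef 1 2 2 0 τ) (thetaCoef 3 2 2 0 τ) :=
  (hasCoeffs_Theta hτ (d := 2) (ρ := 2) (by decide) (by decide) 0).congr fun z => by simp [A4]

lemma hasCoeffs_AM (hτ : 0 < τ.im) {m : ℕ} (hm : ¬ 5 ∣ m) :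
    HasCoeffs τ m (AM m τ) (combAM m (thetaCoef 1) τ) (combAM m (thetaCoef 3) τ) := by
  have h_dilate := hasCoeffs_Theta hτ (by decide : ¬ 5 ∣ 1) hm 0
  have h_cosets (k : ℕ) := hasCoeffs_Theta hτ hm (by decide : ¬ 5 ∣ 1) k
  rw [mul_one] at h_dilate
  simp only [one_mul] at h_cosets
  exact ((h_dilate.add ((HasCoeffs.sum h_cosets).const_mul _)).const_mul _).congr fun z => by
    simp [AM]

lemma hasCoeffs_B2 (hτ : 0 < τ.im) :
    HasCoeffs τ 2 (B2 τ) (combB2 (thetaCoef 1) τ) (combB2 (thetaCoef 3) τ) := by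
  have h_dilate : HasCoeffs τ 2 _ _ _ :=
    hasCoeffs_Theta hτ (d := 1) (ρ := 2) (by decide) (by decide) 0
  have h_cosets (k : ℕ) : HasCoeffs τ 2 _ _ _ :=
    hasCoeffs_Theta hτ (d := 2) (ρ := 1) (by decide) (by decide) k
  exact ((((h_dilate.const_mul _).add ((h_cosets 0).const_mul _)).add
    ((h_cosets 1).const_mul _)).const_mul _).congr fun z => by simp [B2]

lemma hasCoeffs_B3 (hτ : 0 < τ.im) :
    HasCoeffs τ 3 (B3 τ) (combB3 (thetaCoef 1) τ) (combB3 (thetaCoef 3) τ) := by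
  have h_dilate : HasCoeffs τ 3 _ _ _ :=
    hasCoeffs_Theta hτ (d := 1) (ρ := 3) (by decide) (by decide) 0
  have h_cosets (k : ℕ) : HasCoeffs τ 3 _ _ _ :=
    (hasCoeffs_Theta hτ (d := 3) (ρ := 1) (by decide) (by decide) k).const_mul
      (h0 ((τ + (k : ℂ)) / 3) ^ 2)
  exact (((h_dilate.const_mul _).sub ((HasCoeffs.sum h_cosets).const_mul _)).const_mul _).congr
    fun z => by simp [B3]

lemma hasCoeffs_B4 (hτ : 0 < τ.im) :
    HasCoeffs τ 4 (B4 τ) (combB4 (thetaCoef 1) τ) (combB4 (thetaCoef 3) τ) := by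
  have h_dilate : HasCoeffs τ 4 _ _ _ :=
    hasCoeffs_Theta hτ (d := 1) (ρ := 4) (by decide) (by decide) 0
  have h_half : HasCoeffs τ 4 _ _ _ :=
    hasCoeffs_Theta hτ (d := 2) (ρ := 2) (by decide) (by decide) 1
  have h_cosets (k : ℕ) : HasCoeffs τ 4 _ _ _ :=
    (hasCoeffs_Theta hτ (d := 4) (ρ := 1) (by decide) (by decide) k).const_mul
      (th2 0 ((τ + (k : ℂ)) / 2) ^ 4)
  refine ((((h_dilate.const_mul _).sub ((h_half.const_mul _).const_mul _)).sub
    ((HasCoeffs.sum h_cosets).const_mul _)).const_mul _).congr fun z => ?_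
  have h_arg : (2 * τ + 1) / 2 = τ + 2⁻¹ := by ring
  simp [B4, h_arg, mul_assoc]

lemma hasCoeffs_B6 (hτ : 0 < τ.im) :
    HasCoeffs τ 6 (B6 τ) (combB6 (thetaCoef 1) τ) (combB6 (thetaCoef 3) τ) := by
  have h_dilate : HasCoeffs τ 6 _ _ _ :=
    hasCoeffs_Theta hτ (d := 1) (ρ := 6) (by decide) (by decide) 0
  have h_two (k : ℕ) : HasCoeffs τ 6 _ _ _ :=
    (hasCoeffs_Theta hτ (d := 2) (ρ := 3) (by decide) (by decide) (3 * k)).const_mul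
      (h0 (τ + (k : ℂ)) ^ 2)
  have h_three (k : ℕ) : HasCoeffs τ 6 _ _ _ :=
    (hasCoeffs_Theta hτ (d := 3) (ρ := 2) (by decide) (by decide) (2 * k)).const_mul
      (h0 ((τ + (k : ℂ)) / 3) ^ 2)
  have h_six (k : ℕ) : HasCoeffs τ 6 _ _ _ :=
    (hasCoeffs_Theta hτ (d := 6) (ρ := 1) (by decide) (by decide) k).const_mul
      (h0 ((τ + (k : ℂ)) / 3) ^ 2)
  exact (((((h_dilate.const_mul _).add ((HasCoeffs.sum h_two).const_mul _)).sub
    ((HasCoeffs.sum h_three).const_mul _)).sub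
      ((HasCoeffs.sum h_six).const_mul _)).const_mul _).congr fun z => by simp [B6]

end Forms

/-! ### Nonvanishing of the four determinants -/

namespace HasLeadingCoeff

variable {s t : ℝ} {X : ℕ → ℕ → ℕ → ℂ → ℂ} {C C' D D' : ℂ → ℂ} {a a' b b' c d : ℂ}

lemma h0_add_nat (l : ℕ) : HasLeadingCoeff 0 (fun τ => h0 (τ + l)) 1 :=
  (of_expansion hasIntExpansion_hSeries one_ne_zero one_ne_zero l).of_eq
    (fun τ => by simp [h0_eq]) (by simp)

lemma h0_sq : HasLeadingCoeff 0 (fun τ => h0 τ ^ 2) 1 := by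
  simpa using (h0_add_nat 0).pow 2

lemma th4_two_mul_pow_four : HasLeadingCoeff 0 (fun τ => th4 0 (2 * τ) ^ 4) 1 :=
  ((of_expansion hasIntExpansion_thetaSq two_ne_zero two_ne_zero 1).pow 4).of_eq
    (fun τ => by simp [th4_zero_eq, qExp_add_half]) (by simp)

lemma ee1_sixth : HasLeadingCoeff 0 ee1 (1 / 6) := by
  have h_th3 := (of_expansion hasIntExpansion_thetaSq two_ne_zero one_ne_zero 0).pow 4
  have h_th4 := (of_expansion hasIntExpansion_thetaSq two_ne_zero one_ne_zero 1).pow 4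
  refine ((h_th3.add h_th4).const_mul (1 / 12)).of_eq (fun τ => ?_) (by norm_num)
  simp only [ee1, th3_zero_eq, th4_zero_eq, Nat.cast_one, Nat.cast_ofNat, one_mul, add_zero,
    qExp_add_half]
  ring

lemma combAM {m : ℕ} (h_dilate : HasLeadingCoeff s (X 1 m 0) a)
    (h_cosets : HasLeadingCoeff s (fun τ => ∑ k ∈ range m, X m 1 k τ) b) :
    HasLeadingCoeff s (combAM m X) (m ^ 3 / (m ^ 3 + 1) * (a + (m ^ 4 : ℂ)⁻¹ * b)) :=
  (h_dilate.add (h_cosets.const_mul _)).const_mul _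

lemma combB2 (h_dilate : HasLeadingCoeff s (X 1 2 0) a)
    (h_cosets : HasLeadingCoeff s
      (fun τ => ∑ k ∈ range 2, eeSeries (qExp ((τ + k) / 2)) * X 2 1 k τ) b) :
    HasLeadingCoeff s (combB2 X) (32 / 5 * (1 / 6 * a - 1 / 12 * (1 / 2 ^ 4 * b))) := by
  refine (((ee1_sixth.weight_mul h_dilate).sub
    ((h_cosets.const_mul (1 / 2 ^ 4)).const_mul (1 / 12))).const_mul (32 / 5)).of_eq
      (fun τ => ?_) rfl
  rw [E8Jacobi.combB2, ee3_eq, ee2_eq, sum_range_succ, sum_range_one, Nat.cast_zero, add_zero,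
    Nat.cast_one]
  ring

lemma combB3 (h_dilate : HasLeadingCoeff s (X 1 3 0) a)
    (h_cosets : HasLeadingCoeff s
      (fun τ => ∑ k ∈ range 3, h0 ((τ + k) / 3) ^ 2 * X 3 1 k τ) b) :
    HasLeadingCoeff s (combB3 X) (81 / 80 * (1 * a - 1 / 3 ^ 5 * b)) :=
  ((h0_sq.weight_mul h_dilate).sub (h_cosets.const_mul _)).const_mul _

lemma combB4 (h_dilate : HasLeadingCoeff s (X 1 4 0) a) (h_half : HasLeadingCoeff s (X 2 2 1) b)
    (h_cosets : HasLeadingCoeff s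
      (fun τ => ∑ k ∈ range 4, th2 0 ((τ + k) / 2) ^ 4 * X 4 1 k τ) c) :
    HasLeadingCoeff s (combB4 X)
      (16 / 15 * (1 * a - 1 / 2 ^ 4 * (1 * b) - 1 / (2 ^ 2 * 4 ^ 4) * c)) :=
  (((th4_two_mul_pow_four.weight_mul h_dilate).sub
    ((th4_two_mul_pow_four.weight_mul h_half).const_mul _)).sub (h_cosets.const_mul _)).const_mul _

lemma combB6 (h_dilate : HasLeadingCoeff s (X 1 6 0) a)
    (h_two : HasLeadingCoeff s (fun τ => ∑ k ∈ range 2, h0 (τ + k) ^ 2 * X 2 3 (3 * k) τ) b)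
    (h_three : HasLeadingCoeff s
      (fun τ => ∑ k ∈ range 3, h0 ((τ + k) / 3) ^ 2 * X 3 2 (2 * k) τ) c)
    (h_six : HasLeadingCoeff s (fun τ => ∑ k ∈ range 6, h0 ((τ + k) / 3) ^ 2 * X 6 1 k τ) d) :
    HasLeadingCoeff s (combB6 X) (9 / 10 * (1 * a + 1 / 2 ^ 4 * b - 1 / (3 * 3 ^ 4) * c -
      1 / (3 * 6 ^ 4) * d)) :=
  ((((h0_sq.weight_mul h_dilate).add (h_two.const_mul _)).sub (h_three.const_mul _)).sub
    (h_six.const_mul _)).const_mul _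

lemma eventually_det_ne_zero (hC : HasLeadingCoeff s C a) (hD : HasLeadingCoeff t D b)
    (hC' : HasLeadingCoeff s C' a') (hD' : HasLeadingCoeff t D' b') (h : a * b' - a' * b ≠ 0) :
    ∀ᶠ T : ℝ in atTop, C (I * T) * D' (I * T) - C' (I * T) * D (I * T) ≠ 0 :=
  ((hC.mul hD').sub (hC'.mul hD)).eventually_ne_zero h

end HasLeadingCoeff

section LeadingCoefficients

variable {e m : ℕ} {s : ℝ} {L : ℤ}

lemma hasLeadingCoeff_sum_thetaCoef_unweighted (a : Fin 4) (n : ℕ)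
    (hem : ¬ 5 ∣ e * m := by decide) (ham : a < m := by decide)
    (hs : s = (sliceExponent (e * m % 5) + (a : ℕ)) / m := by norm_num [sliceExponent])
    (hn : (3 * e ^ 2 * m / 5 + s : ℝ) = n := by norm_num)
    (hL : m * truncMul ![1, 0, 0, 0] (truncDilate 1 (sliceProdCoeffs (e * m % 5))) a = L := by
      decide) :
    HasLeadingCoeff s (fun τ => ∑ k ∈ range m, thetaCoef e m 1 k τ) L :=
  (hasLeadingCoeff_sum_thetaCoef (ρ := 1) (V := fun _ _ => 1) (l := fun k => k) (fun _ _ => rfl)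
    hasIntExpansion_one a n (hed := hem) (had := ham) (hs := by simpa using hs)
      (hn := by simpa using hn) (hL := by simpa using hL)).of_eq
    (fun τ => by simp only [one_mul]) rfl

lemma h0_sq_eq (k : ℕ) (τ : ℂ) :
    h0 (τ + k) ^ 2 = hSeries (qExp ((τ + k) / (2 : ℕ)) ^ 2) ^ 2 := by
  rw [h0_eq, ← qExp_natCast_mul]
  push_cast
  ring_nf

lemma h0_third_sq_eq (k : ℕ) (τ : ℂ) :
    h0 ((τ + k) / 3) ^ 2 = hSeries (qExp ((τ + k) / (3 : ℕ))) ^ 2 := by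
  rw [h0_eq, Nat.cast_ofNat]

lemma h0_third_sq_eq_sixth (k : ℕ) (τ : ℂ) :
    h0 ((τ + k) / 3) ^ 2 = hSeries (qExp ((τ + k) / (6 : ℕ)) ^ 2) ^ 2 := by
  rw [h0_eq, ← qExp_natCast_mul]
  push_cast
  ring_nf

lemma th2_half_pow_four_eq (k : ℕ) (τ : ℂ) : th2 0 ((τ + k) / 2) ^ 4 =
    qExp ((τ + k) / (4 : ℕ)) * thetaTri (qExp ((τ + k) / (4 : ℕ))) ^ 4 := by
  rw [th2_zero_pow_four, div_div]
  norm_num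

lemma hasLeadingCoeff_A2_one : HasLeadingCoeff (4 / 5) (combAM 2 (thetaCoef 1)) (26 / 9) :=
  (HasLeadingCoeff.combAM (hasLeadingCoeff_thetaCoef 0 (L := 2))
    (hasLeadingCoeff_sum_thetaCoef_unweighted 1 2 (L := 20))).of_eq (fun _ => rfl) (by norm_num)

lemma hasLeadingCoeff_A2_three : HasLeadingCoeff (1 / 5) (combAM 2 (thetaCoef 3)) (1 / 9) :=
  (HasLeadingCoeff.combAM (hasLeadingCoeff_thetaCoef_zero 0)
    (hasLeadingCoeff_sum_thetaCoef_unweighted 0 11 (L := 2))).of_eq (fun _ => rfl) (by norm_num)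

lemma hasLeadingCoeff_B2_one : HasLeadingCoeff (4 / 5) (combB2 (thetaCoef 1)) (46 / 15) :=
  (HasLeadingCoeff.combB2 (hasLeadingCoeff_thetaCoef 0 (L := 2))
    (hasLeadingCoeff_sum_thetaCoef (fun _ _ => rfl) hasIntExpansion_eeSeries 1 2
      (L := -28))).of_eq (fun _ => rfl) (by norm_num)

lemma hasLeadingCoeff_B2_three : HasLeadingCoeff (1 / 5) (combB2 (thetaCoef 3)) (-1 / 15) :=
  (HasLeadingCoeff.combB2 (hasLeadingCoeff_thetaCoef_zero 0)
    (hasLeadingCoeff_sum_thetaCoef (fun _ _ => rfl) hasIntExpansion_eeSeries 0 11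
      (L := 2))).of_eq (fun _ => rfl) (by norm_num)

lemma hasLeadingCoeff_A3_one : HasLeadingCoeff (1 / 5) (combAM 3 (thetaCoef 1)) (1 / 28) :=
  (HasLeadingCoeff.combAM (hasLeadingCoeff_thetaCoef_zero 0)
    (hasLeadingCoeff_sum_thetaCoef_unweighted 0 2 (L := 3))).of_eq (fun _ => rfl) (by norm_num)

lemma hasLeadingCoeff_A3_three : HasLeadingCoeff (4 / 5) (combAM 3 (thetaCoef 3)) (-13 / 14) :=
  (HasLeadingCoeff.combAM (hasLeadingCoeff_thetaCoef_zero 0)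
    (hasLeadingCoeff_sum_thetaCoef_unweighted 2 17 (L := -78))).of_eq (fun _ => rfl)
      (by norm_num)

lemma hasLeadingCoeff_B3_one : HasLeadingCoeff (1 / 5) (combB3 (thetaCoef 1)) (-1 / 80) :=
  (HasLeadingCoeff.combB3 (hasLeadingCoeff_thetaCoef_zero 0)
    (hasLeadingCoeff_sum_thetaCoef h0_third_sq_eq hasIntExpansion_hSeries_sq 0 2
      (L := 3))).of_eq (fun _ => rfl) (by norm_num)

lemma hasLeadingCoeff_B3_three : HasLeadingCoeff (4 / 5) (combB3 (thetaCoef 3)) (-23 / 40) :=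
  (HasLeadingCoeff.combB3 (hasLeadingCoeff_thetaCoef_zero 0)
    (hasLeadingCoeff_sum_thetaCoef h0_third_sq_eq hasIntExpansion_hSeries_sq 2 17
      (L := 138))).of_eq (fun _ => rfl) (by norm_num)

lemma hasLeadingCoeff_B4_one : HasLeadingCoeff (3 / 5) (combB4 (thetaCoef 1)) (-11 / 15) :=
  (HasLeadingCoeff.combB4 (hasLeadingCoeff_thetaCoef_zero 0) (hasLeadingCoeff_thetaCoef 3 (L := 2))
    (hasLeadingCoeff_sum_thetaCoef th2_half_pow_four_eq hasIntExpansion_mul_thetaTri_pow_four 2 3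
      (L := 576))).of_eq (fun _ => rfl) (by norm_num)

lemma hasLeadingCoeff_B4_three : HasLeadingCoeff (2 / 5) (combB4 (thetaCoef 3)) (-1 / 15) :=
  (HasLeadingCoeff.combB4 (hasLeadingCoeff_thetaCoef_zero 0) (hasLeadingCoeff_thetaCoef 22 (L := 2))
    (hasLeadingCoeff_sum_thetaCoef th2_half_pow_four_eq hasIntExpansion_mul_thetaTri_pow_four 1 22
      (L := -64))).of_eq (fun _ => rfl) (by norm_num)

lemma hasLeadingCoeff_B6_one : HasLeadingCoeff (2 / 5) (combB6 (thetaCoef 1)) (-3 / 40) := by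
  have h_two : HasLeadingCoeff (2 / 5)
      (fun τ => ∑ k ∈ range 2, h0 (τ + k) ^ 2 * thetaCoef 1 2 3 (3 * k) τ) 0 := by
    simpa using HasLeadingCoeff.sum (S := range 2) fun k =>
      ((HasLeadingCoeff.h0_add_nat k).pow 2).weight_mul
        (hasLeadingCoeff_thetaCoef_zero (e := 1) (3 * k))
  exact (HasLeadingCoeff.combB6 (hasLeadingCoeff_thetaCoef_zero 0) h_two
    (hasLeadingCoeff_sum_thetaCoef h0_third_sq_eq hasIntExpansion_hSeries_sq 0 4 (L := 6))
    (hasLeadingCoeff_sum_thetaCoef h0_third_sq_eq_sixth hasIntExpansion_hSeries_sq_comp_sq 2 4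
      (L := 228))).of_eq (fun _ => rfl) (by norm_num)

lemma hasLeadingCoeff_B6_three : HasLeadingCoeff (3 / 5) (combB6 (thetaCoef 3)) (33 / 40) :=
  (HasLeadingCoeff.combB6 (hasLeadingCoeff_thetaCoef_zero 0)
    (hasLeadingCoeff_sum_thetaCoef h0_sq_eq hasIntExpansion_hSeries_sq_comp_sq 0 33 (L := 6))
    (hasLeadingCoeff_sum_thetaCoef h0_third_sq_eq hasIntExpansion_hSeries_sq 1 33 (L := -72))
    (hasLeadingCoeff_sum_thetaCoef h0_third_sq_eq_sixth hasIntExpansion_hSeries_sq_comp_sq 3 33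
      (L := -954))).of_eq (fun _ => rfl) (by norm_num)

end LeadingCoefficients

lemma eventually_det_one : ∀ᶠ T : ℝ in atTop,
    thetaCoef 1 1 1 0 (I * T) * combB6 (thetaCoef 3) (I * T) -
      combB6 (thetaCoef 1) (I * T) * thetaCoef 3 1 1 0 (I * T) ≠ 0 :=
  (hasLeadingCoeff_thetaCoef 0 (L := 1)).eventually_det_ne_zero
    (hasLeadingCoeff_thetaCoef 0 (L := 1)) hasLeadingCoeff_B6_one hasLeadingCoeff_B6_three
      (by norm_num)

lemma eventually_det_two : ∀ᶠ T : ℝ in atTop,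
    combAM 2 (thetaCoef 1) (I * T) * combB2 (thetaCoef 3) (I * T) -
      combB2 (thetaCoef 1) (I * T) * combAM 2 (thetaCoef 3) (I * T) ≠ 0 :=
  hasLeadingCoeff_A2_one.eventually_det_ne_zero hasLeadingCoeff_A2_three hasLeadingCoeff_B2_one
    hasLeadingCoeff_B2_three (by norm_num)

lemma eventually_det_three : ∀ᶠ T : ℝ in atTop,
    combAM 3 (thetaCoef 1) (I * T) * combB3 (thetaCoef 3) (I * T) -
      combB3 (thetaCoef 1) (I * T) * combAM 3 (thetaCoef 3) (I * T) ≠ 0 :=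
  hasLeadingCoeff_A3_one.eventually_det_ne_zero hasLeadingCoeff_A3_three hasLeadingCoeff_B3_one
    hasLeadingCoeff_B3_three (by norm_num)

lemma eventually_det_four : ∀ᶠ T : ℝ in atTop,
    thetaCoef 1 2 2 0 (I * T) * combB4 (thetaCoef 3) (I * T) -
      combB4 (thetaCoef 1) (I * T) * thetaCoef 3 2 2 0 (I * T) ≠ 0 :=
  (hasLeadingCoeff_thetaCoef 0 (L := -2)).eventually_det_ne_zero
    (hasLeadingCoeff_thetaCoef 0 (L := 2)) hasLeadingCoeff_B4_one hasLeadingCoeff_B4_three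
      (by norm_num)

/-! ### The value of `A₅` at the fixed points -/

lemma isBigO_quadSeries_one (c : ℤ) (ρ : ℕ) :
    quadSeries c ρ 1 =O[𝓝 0] (fun _ => (1 : ℂ)) := by
  have h_expansion : HasExpansion 0 (quadSeries c ρ 1) _ :=
    HasExpansion.tsum (norm_pos_iff.2 (Complex.exp_ne_zero _)) (summable_quadSeries_one c ρ)
      (s := ∅) fun _ _ => Nat.zero_le _
  exact h_expansion.isBigO_one

lemma sliceTheta_rootPt_imaginary (c : ℤ) (ρ : ℕ) (T : ℝ) :
    sliceTheta c (ρ * (I * T)) ((ρ : ℂ) • rootPt) =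
      grow (-(ρ * (c * (5 - c) / 10))) T * quadSeries c ρ 1 (qExp (ρ * (I * T))) := by
  rw [sliceTheta_rootPt, grow]
  congr 2
  push_cast
  linear_combination (2 * πC * ρ * T * (c * (5 - c) / 10)) * I_mul_I

section SliceAsymptotics

variable {ρ : ℕ} {c : ℤ}

lemma isBigO_quadSeries_qExp (hρ : ρ ≠ 0) (c : ℤ) :
    (fun T : ℝ => quadSeries c ρ 1 (qExp (ρ * (I * T)))) =O[atTop] (fun _ => (1 : ℂ)) := by
  have h_qExp : Tendsto (fun T : ℝ => qExp (ρ * (I * T))) atTop (𝓝 0) := by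
    simpa using (tendsto_qExp_rescaled one_ne_zero hρ 0).mono_right nhdsWithin_le_nhds
  exact (isBigO_quadSeries_one c ρ).comp_tendsto h_qExp

lemma sliceTheta_rootPt_emod_five (c : ℤ) (τ : ℂ) (ρ : ℕ) :
    sliceTheta (c % 5) τ ((ρ : ℂ) • rootPt) = sliceTheta c τ ((ρ : ℂ) • rootPt) :=
  sliceTheta_congr_five (Int.mod_modEq c 5) τ <| by
    simpa only [projP_basePt] using sum_smul_projP ρ basePt

lemma tendsto_sliceTheta_rootPt (hρ : ρ ≠ 0) (hc : ¬ 5 ∣ c) :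
    Tendsto (fun T : ℝ => sliceTheta c (ρ * (I * T)) ((ρ : ℂ) • rootPt)) atTop (𝓝 0) := by
  simp only [← sliceTheta_rootPt_emod_five c, sliceTheta_rootPt_imaginary]
  have h_pos : (0 : ℝ) < (c % 5 : ℤ) := by exact_mod_cast (by omega : 0 < c % 5)
  have h_lt : ((c % 5 : ℤ) : ℝ) < 5 := by exact_mod_cast (by omega : c % 5 < 5)
  have h_neg : -(ρ * ((c % 5 : ℤ) * (5 - (c % 5 : ℤ)) / 10) : ℝ) < 0 := by
    have := sub_pos.2 h_lt
    exact neg_lt_zero.2 (by positivity)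
  refine ((isBigO_refl _ _).mul (isBigO_quadSeries_qExp hρ _)).trans_tendsto ?_
  simpa only [mul_one] using tendsto_grow_of_neg h_neg

lemma isBigO_sliceTheta_rootPt (hρ : ρ ≠ 0) (c : ℤ) :
    (fun T : ℝ => sliceTheta c (ρ * (I * T)) ((ρ : ℂ) • rootPt)) =O[atTop]
      (fun _ => (1 : ℂ)) := by
  by_cases hc : 5 ∣ c
  · simp only [← sliceTheta_rootPt_emod_five c, Int.emod_eq_zero_of_dvd hc,
      sliceTheta_zero_rootPt]
    exact isBigO_quadSeries_qExp hρ 0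
  · exact (tendsto_sliceTheta_rootPt hρ hc).norm.isBoundedUnder_le.isBigO_one ℂ

end SliceAsymptotics

lemma hasLeadingCoeff_thetaRed_five :
    HasLeadingCoeff 0 (fun τ => thetaRed 1 5 0 τ basePt) 0 := by
  have h_ne : 5 ≠ 0 := by norm_num
  have h_term (c : ℤ) : Tendsto (fun T : ℝ =>
      sliceTheta c ((5 : ℕ) * (I * T)) (((5 : ℕ) : ℂ) • rootPt) *
        sliceTheta (2 * c + 3 * (1 : ℕ)) ((5 : ℕ) * (I * T)) (((5 : ℕ) : ℂ) • rootPt))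
      atTop (𝓝 0) := by
    by_cases hc : 5 ∣ c
    · simpa only [one_mul] using (isBigO_sliceTheta_rootPt h_ne c).mul (isBigO_refl _ _)
        |>.trans_tendsto <| by
          simpa only [one_mul] using tendsto_sliceTheta_rootPt h_ne (by grind)
    · exact ((isBigO_refl _ _).mul (isBigO_sliceTheta_rootPt h_ne _)).trans_tendsto <| by
        simpa only [mul_one] using tendsto_sliceTheta_rootPt h_ne hc
  have h_sum := tendsto_finsetSum (range 5) fun c _ =>
    (h_term c).const_mul (zeta5 ((0 : ℕ) * (c + 2 * (1 : ℕ))))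
  simpa only [HasLeadingCoeff, grow_zero, one_mul, thetaRed, thetaRedTerm, projP_basePt,
    projR_basePt, Nat.cast_zero, add_zero, Nat.cast_one, div_one, mul_zero, sum_const_zero]
    using h_sum

lemma thetaRed_fifth (k : ℕ) (τ : ℂ) : thetaRed 5 1 k τ basePt =
    quadSeries 0 1 1 (qExp (((1 : ℕ) * τ + k) / (5 : ℕ))) ^ 2 := by
  have h_zeta : zeta5 (k * (0 + 2 * (5 : ℕ))) = 1 := zeta5_eq_one_iff.2 ⟨2 * k, by push_cast; ring⟩
  have h_class : (2 * 0 + 3 * (5 : ℕ) : ℤ) ≡ 0 [ZMOD 5] := by decide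
  rw [thetaRed, sum_eq_single_of_mem 0 (mem_range.2 (by norm_num)) fun c hc h0 => ?_]
  · rw [thetaRedTerm, Nat.cast_zero, h_zeta, sliceTheta_congr_five h_class _ (sum_smul_projR _ _),
      projP_basePt, projR_basePt, sliceTheta_zero_rootPt, one_mul, pow_two]
  · have h_lt := mem_range.1 hc
    rw [thetaRedTerm, projP_basePt, sliceTheta_rootPt_eq_zero (by omega), zero_mul, mul_zero]

lemma hasLeadingCoeff_thetaRed_fifth (k : ℕ) :
    HasLeadingCoeff 0 (fun τ => thetaRed 5 1 k τ basePt) 1 := by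
  have h_expansion : HasIntExpansion (quadSeries 0 1 1) ![1, -5, 5, 10] :=
    hasIntExpansion_quadSeries le_rfl (by simp) (by decide) (summable_quadSeries_one 0 1)
      quadCount_zero_one
  exact ((HasLeadingCoeff.of_expansion h_expansion (by norm_num) one_ne_zero k).pow 2).of_eq
    (thetaRed_fifth k) (by simp)

/-- The common value of `A_5` at the fixed points, with the factors of automorphy removed. -/
def valueA5 (τ : ℂ) : ℂ :=
  combAM 5 (fun d ρ l τ => thetaRed d ρ l τ basePt) τ

lemma eventually_valueA5_ne_zero : ∀ᶠ T : ℝ in atTop, valueA5 (I * T) ≠ 0 := by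
  have h_lead : HasLeadingCoeff 0 valueA5 _ :=
    HasLeadingCoeff.combAM (X := fun d ρ l τ => thetaRed d ρ l τ basePt)
      hasLeadingCoeff_thetaRed_five (HasLeadingCoeff.sum hasLeadingCoeff_thetaRed_fifth)
  exact h_lead.eventually_ne_zero (by norm_num)

lemma hasJet_Theta {τ : ℂ} (hτ : 0 < τ.im) {d ρ : ℕ} (hd : 0 < d) (hρ : 0 < ρ) (l : ℕ) :
    ∃ D, HasJet τ (ρ * d) (fun z => Theta ((ρ * τ + l) / d) (fun i => ρ * z i))
      (thetaRed d ρ l τ basePt) D :=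
  ⟨_, thetaRed d ρ l τ, Theta_translate hτ hd hρ l, rfl, HasStrictFDerivAt.fun_sum fun c _ =>
    hasStrictFDerivAt_thetaRedTerm hτ hd hρ l (c := c) rfl⟩

lemma hasJet_A5 {τ : ℂ} (hτ : 0 < τ.im) : ∃ D, HasJet τ 5 (A5 τ) (valueA5 τ) D := by
  obtain ⟨D, h_dilate⟩ := hasJet_Theta hτ one_pos (by norm_num : 0 < 5) 0
  choose E h_cosets using hasJet_Theta hτ (by norm_num : 0 < 5) one_pos
  rw [mul_one] at h_dilate
  simp only [one_mul] at h_cosets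
  exact ⟨_, ((h_dilate.add ((HasJet.sum h_cosets).const_mul _)).const_mul _).congr fun z => by
    simp [A5, AM]⟩

/-! ### Algebraic independence of the Eisenstein series -/

lemma eval_pow_mul_eq_zero {σ R : Type*} [CommRing R] [IsDomain R] {c : MvPolynomial σ R}
    {w : σ → ℕ} {a : σ → R} {S : Set R} (hS : S.Infinite)
    (h : ∀ t ∈ S, MvPolynomial.eval (fun i => t ^ w i * a i) c = 0) (t : R) :
    MvPolynomial.eval (fun i => t ^ w i * a i) c = 0 := by
  let p : Polynomial R :=
    MvPolynomial.aeval (fun i => Polynomial.X ^ w i * Polynomial.C (a i)) c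
  have hp (t : R) : p.eval t = MvPolynomial.eval (fun i => t ^ w i * a i) c := by
    rw [← Polynomial.coe_aeval_eq_eval, ← MvPolynomial.aeval_eq_eval]
    simp [p, MvPolynomial.comp_aeval_apply, mul_comm (a _)]
  have hp0 : p = 0 := Polynomial.eq_zero_of_infinite_isRoot p
    (hS.mono fun t ht => (hp t).trans (h t ht))
  rw [← hp, hp0, Polynomial.eval_zero]

section Eisenstein

open UpperHalfPlane hiding I
open scoped MatrixGroups

lemma modularForm_E_eq_tsum {k : ℕ} (hk : 3 ≤ k) (hk_even : Even k) (z : ℍ) :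
    ModularForm.E hk z = 1 - 2 * k / bernoulli k *
      ∑' n : ℕ+, (n : ℂ) ^ (k - 1) * qExp z ^ (n : ℕ) / (1 - qExp z ^ (n : ℕ)) := by
  simp only [EisensteinSeries.q_expansion_bernoulli hk hk_even, zpow_natCast, qExp, πC,
    tsum_pow_div_one_sub_eq_tsum_sigma (norm_exp_two_pi_I_lt_one z)]

lemma E4_eq (z : ℍ) : E4 z = ModularForm.E₄ z := by
  have h_bernoulli : bernoulli 4 = -1 / 30 := by decide +kernel
  rw [ModularForm.E₄, modularForm_E_eq_tsum _ (by decide), h_bernoulli, E4]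
  push_cast
  ring

lemma E6_eq (z : ℍ) : E6 z = ModularForm.E₆ z := by
  have h_bernoulli : bernoulli 6 = 1 / 42 := by decide +kernel
  rw [ModularForm.E₆, modularForm_E_eq_tsum _ (by decide), h_bernoulli, E6]
  push_cast
  ring

lemma exists_modular_translate (z : ℍ) (n : ℕ) : ∃ w : ℍ,
    E4 w = ((z : ℂ) + n) ^ 4 * E4 z ∧ E6 w = ((z : ℂ) + n) ^ 6 * E6 z := by
  let γ : SL(2, ℤ) := ⟨!![0, -1; 1, n], by simp⟩
  have hγ : Matrix.SpecialLinearGroup.mapGL ℝ γ ∈ 𝒮ℒ := ⟨γ, rfl⟩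
  have h_denom : denom (Matrix.SpecialLinearGroup.mapGL ℝ γ) z = (z : ℂ) + n := by
    have h_lower_left : Matrix.SpecialLinearGroup.mapGL ℝ γ 1 0 = ((1 : ℤ) : ℝ) := rfl
    have h_lower_right : Matrix.SpecialLinearGroup.mapGL ℝ γ 1 1 = ((n : ℤ) : ℝ) := rfl
    simp [denom, h_lower_left, h_lower_right]
  refine ⟨Matrix.SpecialLinearGroup.mapGL ℝ γ • z, ?_, ?_⟩
  · rw [E4_eq, E4_eq, SlashInvariantForm.slash_action_eqn'' ModularForm.E₄ hγ, h_denom]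
    norm_cast
  · rw [E6_eq, E6_eq, SlashInvariantForm.slash_action_eqn'' ModularForm.E₆ hγ, h_denom]
    norm_cast

lemma tendsto_modularForm_atImInfty {F : Type*} [FunLike F ℍ ℂ] {Γ : Subgroup (GL (Fin 2) ℝ)}
    {k : ℤ} [ModularFormClass F Γ k] (f : F) {h : ℝ} (hh : 0 < h) (hΓ : h ∈ Γ.strictPeriods) :
    Tendsto f atImInfty (𝓝 ((qExpansion h f).coeff 0)) := by
  have h_analytic := ModularFormClass.analyticAt_cuspFunction_zero f hh hΓ
  have h_periodic := SlashInvariantFormClass.periodic_comp_ofComplex f hΓ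
  rw [qExpansion_coeff_zero hh h_analytic h_periodic,
    ← cuspFunction_apply_zero hh h_analytic h_periodic]
  exact (h_analytic.continuousAt.tendsto.comp (qParam_tendsto_atImInfty hh)).congr
    fun τ => SlashInvariantFormClass.eq_cuspFunction f τ hΓ hh.ne'

lemma tendsto_modularForm_E_atImInfty {k : ℕ} (hk : 3 ≤ k) (hk_even : Even k) :
    Tendsto (ModularForm.E hk) atImInfty (𝓝 1) := by
  rw [← EisensteinSeries.E_qExpansion_coeff_zero hk hk_even]
  exact tendsto_modularForm_atImInfty _ one_pos one_mem_strictPeriods_SL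

lemma E4_cube_ne_E6_sq (z : ℍ) : E4 z ^ 3 ≠ E6 z ^ 2 := by
  have h_disc := ModularForm.discriminant_ne_zero z
  rw [ModularForm.discriminant_eq_E₄_cube_sub_E₆_sq, ← E4_eq, ← E6_eq] at h_disc
  exact fun h => h_disc (by rw [h, sub_self, zero_div])

/-- The ratio tends to `1` at the cusp without ever being equal to `1`. -/
lemma infinite_E6_sq_div_E4_cube :
    {u : ℂ | ∃ z : ℍ, E4 z ≠ 0 ∧ E6 z ≠ 0 ∧ u = E6 z ^ 2 / E4 z ^ 3}.Infinite := by
  have h4 : Tendsto (fun z : ℍ => E4 z) atImInfty (𝓝 1) := by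
    simpa only [E4_eq] using tendsto_modularForm_E_atImInfty (k := 4) (by simp) (by decide)
  have h6 : Tendsto (fun z : ℍ => E6 z) atImInfty (𝓝 1) := by
    simpa only [E6_eq] using tendsto_modularForm_E_atImInfty (k := 6) (by simp) (by decide)
  have h_ratio : Tendsto (fun z : ℍ => E6 z ^ 2 / E4 z ^ 3) atImInfty (𝓝 1) := by
    simpa [Pi.div_def] using (h6.pow 2).div (h4.pow 3) (by norm_num)
  intro h_finite
  obtain ⟨z, hE4, -, hz⟩ := h_finite.isClosed.mem_of_tendsto h_ratio (by
    filter_upwards [h4.eventually_ne one_ne_zero, h6.eventually_ne one_ne_zero] with z h4 h6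
    exact ⟨z, h4, h6, rfl⟩)
  rw [eq_div_iff (pow_ne_zero _ hE4), one_mul] at hz
  exact E4_cube_ne_E6_sq z hz

section Relation

variable {c : MvPolynomial (Fin 2) ℂ}

lemma eval_scaled_eisenstein_eq_zero
    (hc : ∀ z : ℍ, MvPolynomial.eval ![E4 z, E6 z] c = 0) (z : ℍ) (t : ℂ) :
    MvPolynomial.eval ![t ^ 4 * E4 z, t ^ 6 * E6 z] c = 0 := by
  have h_infinite : (Set.range fun n : ℕ => (z : ℂ) + n).Infinite :=
    Set.infinite_range_of_injective fun a b hab => by simpa using hab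
  have h_scale (t : ℂ) : (fun i => t ^ ![4, 6] i * ![E4 z, E6 z] i) =
      ![t ^ 4 * E4 z, t ^ 6 * E6 z] := by
    ext i; fin_cases i <;> rfl
  rw [← h_scale]
  refine eval_pow_mul_eq_zero h_infinite ?_ t
  rintro _ ⟨n, rfl⟩
  obtain ⟨w, h4, h6⟩ := exists_modular_translate z n
  rw [h_scale, ← h4, ← h6, hc]

/-- Scaling by a square root of `E₆ s / E₄²` turns `(E₄, E₆)` into `(u s², u² s³)` with
`u = E₆² / E₄³`. -/
lemma eval_cuspidal_curve_eq_zero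
    (hc : ∀ z : ℍ, MvPolynomial.eval ![E4 z, E6 z] c = 0) (s u : ℂ) :
    MvPolynomial.eval ![u * s ^ 2, u ^ 2 * s ^ 3] c = 0 := by
  have h_scale (u : ℂ) : (fun i => u ^ ![1, 2] i * ![s ^ 2, s ^ 3] i) =
      ![u * s ^ 2, u ^ 2 * s ^ 3] := by
    ext i; fin_cases i <;> simp
  rw [← h_scale]
  refine eval_pow_mul_eq_zero infinite_E6_sq_div_E4_cube ?_ u
  rintro _ ⟨z, h4, h6, rfl⟩
  obtain ⟨t, ht⟩ := IsAlgClosed.exists_pow_nat_eq (E6 z * s / E4 z ^ 2) two_pos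
  rw [h_scale, ← eval_scaled_eisenstein_eq_zero hc z t, show t ^ 4 = (t ^ 2) ^ 2 by ring,
    show t ^ 6 = (t ^ 2) ^ 3 by ring, ht]
  congr 2
  ext i
  fin_cases i <;> simp <;> field_simp

lemma eq_zero_of_eval_eisenstein
    (hc : ∀ z : ℍ, MvPolynomial.eval ![E4 z, E6 z] c = 0) : c = 0 := by
  refine MvPolynomial.funext_set (fun _ => {0}ᶜ) (fun _ => (Set.finite_singleton _).infinite_compl)
    fun x hx => ?_
  have hx0 : x 0 ≠ 0 := hx 0 trivial
  have hx1 : x 1 ≠ 0 := hx 1 trivial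
  rw [map_zero, ← eval_cuspidal_curve_eq_zero hc (x 0 ^ 2 / x 1) (x 1 ^ 2 / x 0 ^ 3)]
  congr 2
  ext i
  fin_cases i <;> simp <;> field_simp

end Relation

lemma analyticOnNhd_of_eq_modularForm {f : ℂ → ℂ} {k : ℤ} {Γ : Subgroup (GL (Fin 2) ℝ)}
    (g : ModularForm Γ k) (hfg : ∀ z : ℍ, f z = g z) : AnalyticOnNhd ℂ f {z | 0 < z.im} := by
  have h_diff : DifferentiableOn ℂ f {z | 0 < z.im} :=
    (UpperHalfPlane.mdifferentiable_iff.1 (ModularFormClass.holo g)).congr fun z hz => by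
      rw [Function.comp_apply, ← hfg, ofComplex_apply_of_im_pos hz]
  exact h_diff.analyticOnNhd isOpen_upperHalfPlaneSet

lemma eqOn_zero_of_eventually_imaginary {f : ℂ → ℂ} (hf : AnalyticOnNhd ℂ f {z | 0 < z.im})
    (h0 : ∀ᶠ T : ℝ in atTop, f (I * T) = 0) : Set.EqOn f 0 {z | 0 < z.im} := by
  obtain ⟨T, hT⟩ := (h0.and (eventually_gt_atTop (0 : ℝ))).exists_forall_of_atTop
  have h_axis : Tendsto (fun S : ℝ => I * (S : ℂ)) (𝓝[>] T) (𝓝[≠] (I * T)) := by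
    refine tendsto_nhdsWithin_iff.2 ⟨(Continuous.tendsto (by fun_prop) T).mono_left
      nhdsWithin_le_nhds, ?_⟩
    filter_upwards [self_mem_nhdsWithin] with S hS
    simpa using (Set.mem_Ioi.1 hS).ne'
  have h_zero : ∀ᶠ S : ℝ in 𝓝[>] T, f (I * S) = 0 := by
    filter_upwards [self_mem_nhdsWithin] with S hS using (hT S (Set.mem_Ioi.1 hS).le).1
  exact hf.eqOn_zero_of_preconnected_of_frequently_eq_zero (z₀ := I * T)
    (convex_halfSpace_im_gt 0).isPreconnected (by simpa using (hT T le_rfl).2)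
    (h_axis.frequently h_zero.frequently)

lemma frequently_eval_eisenstein_ne_zero {c : MvPolynomial (Fin 2) ℂ} (hc : c ≠ 0) :
    ∃ᶠ T : ℝ in atTop, MvPolynomial.eval ![E4 (I * T), E6 (I * T)] c ≠ 0 := by
  intro h_eventually
  simp only [not_not] at h_eventually
  have h_analytic : AnalyticOnNhd ℂ (fun z => MvPolynomial.eval ![E4 z, E6 z] c)
      {z | 0 < z.im} := by
    refine AnalyticOnNhd.aeval_mvPolynomial (fun i => ?_) c
    fin_cases i
    · exact analyticOnNhd_of_eq_modularForm ModularForm.E₄ E4_eq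
    · exact analyticOnNhd_of_eq_modularForm ModularForm.E₆ E6_eq
  exact hc (eq_zero_of_eval_eisenstein fun z =>
    eqOn_zero_of_eventually_imaginary h_analytic h_eventually z.2)

end Eisenstein

/-! ### The Jacobian criterion -/

lemma zeta5_mul_natCast (n : ℤ) (m : ℕ) : zeta5 (n * m) = zeta5 n ^ m := by
  rw [zeta5_eq_exp, zeta5_eq_exp, ← Complex.exp_nat_mul]
  congr 1
  push_cast
  ring

lemma zeta5_eq_zeta5_iff {m n : ℤ} : zeta5 m = zeta5 n ↔ 5 ∣ m - n := by
  have h_split : zeta5 m = zeta5 (m - n) * zeta5 n := by rw [← zeta5_add, sub_add_cancel]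
  have h_ne : zeta5 n ≠ 0 := by
    rw [zeta5_eq_exp]
    exact Complex.exp_ne_zero _
  rw [h_split, mul_eq_right₀ h_ne, zeta5_eq_one_iff]

lemma eq_zero_of_fourier5 {k : ℤ} (hk : ¬ 5 ∣ k) {h : Fin 5 → ℂ} (h0 : ∑ i, h i = 0)
    (hm : ∀ m : Fin 4, fourier5 (k * (m + 1 : ℕ)) h = 0) : h = 0 := by
  have h_inj : Function.Injective fun j : Fin 5 => zeta5 (k * j) := fun a b hab => by
    have h_dvd : (5 : ℤ) ∣ k * (a - b) := by
      rw [mul_sub]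
      exact zeta5_eq_zeta5_iff.1 hab
    have h_diff : (5 : ℤ) ∣ a - b :=
      ((Int.prime_ofNat_iff.2 Nat.prime_five).dvd_or_dvd h_dvd).resolve_left hk
    omega
  refine Matrix.eq_zero_of_forall_pow_sum_mul_pow_eq_zero h_inj fun i => ?_
  cases i using Fin.cases with
  | zero => simpa using h0
  | succ m =>
    rw [← hm m, fourier5_apply]
    refine sum_congr rfl fun j _ => ?_
    rw [mul_right_comm, zeta5_mul_natCast (k * j), mul_comm, Fin.val_succ]

lemma eq_zero_of_proj {h : Fin 8 → ℂ} (hP : projP h = 0) (hR : projR h = 0) : h = 0 := by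
  rw [projR_apply] at hR
  have h_sum : h 0 + h 1 + h 2 + h 3 + h 4 = 0 := by simpa using congrFun hR 0
  simp only [projP_apply, h_sum, zero_div, sub_zero] at hP hR
  have r1 := congrFun hR 1
  have r2 := congrFun hR 2
  have r3 := congrFun hR 3
  have r4 := congrFun hR 4
  simp only [Matrix.cons_val, Pi.zero_apply, zero_add] at r1 r2 r3 r4
  have h5 : h 5 = 0 := by linear_combination r1 + r2
  have h6 : h 6 = 0 := by linear_combination r1 + r3
  have h7 : h 7 = 0 := by linear_combination r1 + r4
  ext i
  fin_cases i
  exacts [congrFun hP 0, congrFun hP 1, congrFun hP 2, congrFun hP 3, congrFun hP 4, h5, h6, h7]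

lemma fourier5_eq_zero_of_jetMap {n : ℕ} {A B A' B' : ℂ} {h : Fin 8 → ℂ}
    (hdet : A * B' - A' * B ≠ 0) (h1 : jetMap n A B h = 0) (h2 : jetMap n A' B' h = 0) :
    fourier5 n (projP h) = 0 ∧ fourier5 (3 * n) (projR h) = 0 := by
  have h_two_pi_I : 2 * πC * I ≠ 0 := by simp [πC, Real.pi_ne_zero]
  rw [jetMap_apply, mul_eq_zero, or_iff_right h_two_pi_I] at h1 h2
  constructor <;> refine (mul_eq_zero.1 ?_).resolve_left hdet
  · linear_combination B' * h1 - B * h2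
  · linear_combination A * h2 - A' * h1

lemma eq_zero_of_jetMap {A B A' B' : Fin 4 → ℂ} {h : Fin 8 → ℂ}
    (hdet : ∀ k, A k * B' k - A' k * B k ≠ 0) (h1 : ∀ k, jetMap (k.val + 1) (A k) (B k) h = 0)
    (h2 : ∀ k, jetMap (k.val + 1) (A' k) (B' k) h = 0) : h = 0 := by
  have h_fourier (k : Fin 4) := fourier5_eq_zero_of_jetMap (hdet k) (h1 k) (h2 k)
  have hP : projP h = 0 := eq_zero_of_fourier5 (k := 1) (by norm_num) (sum_projP h) fun k => by
    rw [one_mul]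
    exact (h_fourier k).1
  have hR : projR h = 0 := eq_zero_of_fourier5 (k := 3) (by norm_num) (sum_projR h) fun k =>
    (h_fourier k).2
  exact eq_zero_of_proj hP hR

lemma norm_autFactor (τ : ℂ) (N : ℕ) (y : Fin 8 → ℂ) : ‖autFactor τ N y‖ =
    Real.exp (N * (4 / 5 * Real.pi * τ.im * N + 2 * Real.pi * (projP y 4).im)) := by
  have h_exponent : -(4 / 5 * πC * I * τ * N ^ 2) - 2 * πC * I * N * projP y 4 =
      ((-(4 / 5 * Real.pi * N ^ 2) : ℝ) : ℂ) * (I * τ) +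
        ((-(2 * Real.pi * N) : ℝ) : ℂ) * (I * projP y 4) := by
    rw [πC]
    push_cast
    ring
  rw [autFactor, Complex.norm_exp, h_exponent, Complex.add_re, Complex.re_ofReal_mul,
    Complex.re_ofReal_mul, Complex.I_mul_re, Complex.I_mul_re]
  ring_nf

lemma infinite_range_autFactor {τ : ℂ} (hτ : 0 < τ.im) (y : Fin 8 → ℂ) :
    (Set.range fun n : ℕ => autFactor τ (1 + 5 * n) y).Infinite := by
  have h_index : Tendsto (fun n : ℕ => ((1 + 5 * n : ℕ) : ℝ)) atTop atTop :=
    tendsto_natCast_atTop_atTop.comp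
      (tendsto_atTop_mono (fun n => (by omega : n ≤ 1 + 5 * n)) tendsto_id)
  have h_norm : Tendsto (fun n : ℕ => ‖autFactor τ (1 + 5 * n) y‖) atTop atTop := by
    simp only [norm_autFactor]
    exact Real.tendsto_exp_atTop.comp (h_index.atTop_mul_atTop₀
      (tendsto_atTop_add_const_right _ _ (h_index.const_mul_atTop (by positivity))))
  refine Set.Infinite.of_image norm fun h_finite => ?_
  rw [← Set.range_comp] at h_finite
  exact not_bddAbove_of_tendsto_atTop h_norm h_finite.bddAbove

/-- By the open mapping theorem `Q` vanishes on a polydisc. -/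
lemma eq_zero_of_eval_of_surjective {ι 𝕜 E : Type*} [Finite ι] [NontriviallyNormedField 𝕜]
    [CompleteSpace 𝕜] [NormedAddCommGroup E] [NormedSpace 𝕜 E] [CompleteSpace E]
    {Φ : E → ι → 𝕜} {Φ' : E →L[𝕜] ι → 𝕜} {p : E} (hΦ : HasStrictFDerivAt Φ Φ' p)
    (h_surj : Function.Surjective Φ') {Q : MvPolynomial ι 𝕜}
    (hQ : ∀ᶠ x in 𝓝 p, MvPolynomial.eval (Φ x) Q = 0) : Q = 0 := by
  have := Fintype.ofFinite ι
  have h_nhds : {x : ι → 𝕜 | MvPolynomial.eval x Q = 0} ∈ 𝓝 (Φ p) := by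
    rw [← hΦ.map_nhds_eq_of_surj (LinearMap.range_eq_top.2 h_surj)]
    exact hQ
  obtain ⟨ε, hε, h_ball⟩ := Metric.mem_nhds_iff.1 h_nhds
  rw [ball_pi _ hε] at h_ball
  refine MvPolynomial.funext_set (fun i => Metric.ball (Φ p i) ε)
    (fun i => infinite_of_mem_nhds _ (Metric.ball_mem_nhds _ hε)) fun x hx => ?_
  rw [map_zero]
  exact h_ball hx

section Jacobian

variable {ι : Type*} {τ : ℂ} {w : ι → ℕ} {G : ι → (Fin 8 → ℂ) → ℂ}

lemma eval_pow_mul_eq_zero_of_translates (hτ : 0 < τ.im) {F : ι → (Fin 8 → ℂ) → ℂ}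
    (hG : ∀ (i : ι) (n : ℕ) (y : Fin 8 → ℂ), F i ((((1 + 5 * n : ℕ) : ℂ) * τ) • transVec + y) =
      autFactor τ (1 + 5 * n) y ^ w i * G i y)
    {Q : MvPolynomial ι ℂ} (hQ : ∀ z, MvPolynomial.eval (fun i => F i z) Q = 0)
    (t : ℂ) (y : Fin 8 → ℂ) : MvPolynomial.eval (fun i => t ^ w i * G i y) Q = 0 := by
  refine eval_pow_mul_eq_zero (infinite_range_autFactor hτ y) ?_ t
  rintro _ ⟨n, rfl⟩
  simp only [← hG, hQ]

/-- The differential at `(1, basePt)` of `(t, y) ↦ (t ^ w i * G i y)`, where `G i` has value `V i`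
and differential `D i` at `basePt`. -/
def scaledDeriv (w : ι → ℕ) (V : ι → ℂ) (D : ι → (Fin 8 → ℂ) →L[ℂ] ℂ) :
    ℂ × (Fin 8 → ℂ) →L[ℂ] ι → ℂ :=
  ContinuousLinearMap.pi fun i =>
    (V i * w i) • ContinuousLinearMap.fst ℂ ℂ (Fin 8 → ℂ) +
      (D i).comp (ContinuousLinearMap.snd ℂ ℂ (Fin 8 → ℂ))

variable {V : ι → ℂ} {D : ι → (Fin 8 → ℂ) →L[ℂ] ℂ}

lemma scaledDeriv_apply (p : ℂ × (Fin 8 → ℂ)) (i : ι) :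
    scaledDeriv w V D p i = V i * w i * p.1 + D i p.2 := by
  simp [scaledDeriv]

lemma hasStrictFDerivAt_pow_mul [Finite ι] (hV : ∀ i, G i basePt = V i)
    (hD : ∀ i, HasStrictFDerivAt (G i) (D i) basePt) :
    HasStrictFDerivAt (fun (p : ℂ × (Fin 8 → ℂ)) i => p.1 ^ w i * G i p.2)
      (scaledDeriv w V D) (1, basePt) := by
  have := Fintype.ofFinite ι
  refine hasStrictFDerivAt_pi.2 fun i => ?_
  have h_pow : HasStrictFDerivAt (fun p : ℂ × (Fin 8 → ℂ) => p.1 ^ w i) _ (1, basePt) :=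
    HasStrictFDerivAt.pow (hasStrictFDerivAt_fst (𝕜 := ℂ) (p := (1, basePt))) (w i)
  have h_G : HasStrictFDerivAt (fun p : ℂ × (Fin 8 → ℂ) => G i p.2) _ (1, basePt) :=
    (hD i).comp (1, basePt) hasStrictFDerivAt_snd
  refine (h_pow.fun_mul h_G).congr_fderiv ?_
  ext p <;> simp [hV]

/-- The Jacobian criterion, with the scale `t` as a ninth coordinate next to the eight of `ℂ⁸`. -/
lemma eq_zero_of_hasJet (hτ : 0 < τ.im) {w : Fin 9 → ℕ} {F : Fin 9 → (Fin 8 → ℂ) → ℂ}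
    {V : Fin 9 → ℂ} {D : Fin 9 → (Fin 8 → ℂ) →L[ℂ] ℂ} (hF : ∀ i, HasJet τ (w i) (F i) (V i) (D i))
    (h_inj : ∀ (t : ℂ) (h : Fin 8 → ℂ), (∀ i, V i * w i * t + D i h = 0) → t = 0 ∧ h = 0)
    {Q : MvPolynomial (Fin 9) ℂ} (hQ : ∀ z, MvPolynomial.eval (fun i => F i z) Q = 0) : Q = 0 := by
  choose G h_trans h_value h_deriv using hF
  have h_surj : Function.Surjective (scaledDeriv w V D) := by
    refine (LinearMap.injective_iff_surjective_of_finrank_eq_finrank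
      (f := (scaledDeriv w V D : ℂ × (Fin 8 → ℂ) →ₗ[ℂ] (Fin 9 → ℂ))) (by simp)).1 ?_
    refine (injective_iff_map_eq_zero _).2 fun p hp => Prod.ext_iff.2 (h_inj p.1 p.2 fun i => ?_)
    rw [← scaledDeriv_apply]
    exact congrFun hp i
  exact eq_zero_of_eval_of_surjective (hasStrictFDerivAt_pow_mul h_value h_deriv) h_surj
    (.of_forall fun p => eval_pow_mul_eq_zero_of_translates hτ h_trans hQ p.1 p.2)

end Jacobian

/-- The coefficients of the differentials of `A₁, A₂, A₃, A₄` at the fixed points, on the first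
(`e = 1`) and second (`e = 3`) copy of `A₄`. -/
def coeffsA (e : ℕ) (τ : ℂ) : Fin 4 → ℂ :=
  ![thetaCoef e 1 1 0 τ, combAM 2 (thetaCoef e) τ, combAM 3 (thetaCoef e) τ, thetaCoef e 2 2 0 τ]

/-- The coefficients of the differentials of `B₆, B₂, B₃, B₄` at the fixed points, ordered by the
index modulo `5`. -/
def coeffsB (e : ℕ) (τ : ℂ) : Fin 4 → ℂ :=
  ![combB6 (thetaCoef e) τ, combB2 (thetaCoef e) τ, combB3 (thetaCoef e) τ, combB4 (thetaCoef e) τ]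

lemma eventually_det_ne_zero : ∀ᶠ T : ℝ in atTop, ∀ k : Fin 4,
    coeffsA 1 (I * T) k * coeffsB 3 (I * T) k - coeffsB 1 (I * T) k * coeffsA 3 (I * T) k ≠ 0 := by
  filter_upwards [eventually_det_one, eventually_det_two, eventually_det_three,
    eventually_det_four] with T h1 h2 h3 h4 k
  fin_cases k
  exacts [h1, h2, h3, h4]

/-- The indices of the nine forms, in the order of `nineForms`. -/
def formIndex : Fin 9 → ℕ := ![1, 2, 3, 4, 5, 2, 3, 4, 6]

/-- The values of the nine forms at the fixed points. -/
def formValue (τ : ℂ) : Fin 9 → ℂ := ![0, 0, 0, 0, valueA5 τ, 0, 0, 0, 0]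

/-- The differentials of the nine forms at the fixed points, given the differential `D` of `A₅`;
`B₆` is listed with `jetMap 1`, since its index is `1` modulo `5`. -/
def formDeriv (τ : ℂ) (D : (Fin 8 → ℂ) →L[ℂ] ℂ) : Fin 9 → (Fin 8 → ℂ) →L[ℂ] ℂ :=
  ![jetMap 1 (coeffsA 1 τ 0) (coeffsA 3 τ 0), jetMap 2 (coeffsA 1 τ 1) (coeffsA 3 τ 1),
    jetMap 3 (coeffsA 1 τ 2) (coeffsA 3 τ 2), jetMap 4 (coeffsA 1 τ 3) (coeffsA 3 τ 3), D,
    jetMap 2 (coeffsB 1 τ 1) (coeffsB 3 τ 1), jetMap 3 (coeffsB 1 τ 2) (coeffsB 3 τ 2),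
    jetMap 4 (coeffsB 1 τ 3) (coeffsB 3 τ 3), jetMap 1 (coeffsB 1 τ 0) (coeffsB 3 τ 0)]

lemma jetMap_six_eq (A B : ℂ) : jetMap 6 A B = jetMap 1 A B := by
  have h1 : fourier5 (6 : ℕ) = fourier5 (1 : ℕ) := fourier5_congr rfl
  have h3 : fourier5 (3 * (6 : ℕ)) = fourier5 (3 * (1 : ℕ)) := fourier5_congr rfl
  rw [jetMap, jetMap, h1, h3]

lemma exists_hasJet_nineForms {τ : ℂ} (hτ : 0 < τ.im) :
    ∃ D, ∀ i, HasJet τ (formIndex i) (nineForms i τ) (formValue τ i) (formDeriv τ D i) := by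
  obtain ⟨D, hD⟩ := hasJet_A5 hτ
  have hB6 := hasCoeffs_B6 hτ
  rw [HasCoeffs, jetMap_six_eq] at hB6
  have hA2 := hasCoeffs_AM hτ (by norm_num : ¬ 5 ∣ 2)
  have hA3 := hasCoeffs_AM hτ (by norm_num : ¬ 5 ∣ 3)
  refine ⟨D, fun i => ?_⟩
  fin_cases i
  exacts [hasCoeffs_A1 hτ, hA2, hA3, hasCoeffs_A4 hτ, hD, hasCoeffs_B2 hτ, hasCoeffs_B3 hτ,
    hasCoeffs_B4 hτ, hB6]

lemma formDeriv_injective {τ : ℂ} {D : (Fin 8 → ℂ) →L[ℂ] ℂ} (hA5 : valueA5 τ ≠ 0)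
    (hdet : ∀ k, coeffsA 1 τ k * coeffsB 3 τ k - coeffsB 1 τ k * coeffsA 3 τ k ≠ 0)
    {t : ℂ} {h : Fin 8 → ℂ}
    (h_zero : ∀ i, formValue τ i * formIndex i * t + formDeriv τ D i h = 0) : t = 0 ∧ h = 0 := by
  have h_deriv (i) (hi : formValue τ i = 0) : formDeriv τ D i h = 0 := by
    simpa [hi] using h_zero i
  have h_deriv_A (k : Fin 4) : jetMap (k.val + 1) (coeffsA 1 τ k) (coeffsA 3 τ k) h = 0 := by
    fin_cases k
    exacts [h_deriv 0 rfl, h_deriv 1 rfl, h_deriv 2 rfl, h_deriv 3 rfl]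
  have h_deriv_B (k : Fin 4) : jetMap (k.val + 1) (coeffsB 1 τ k) (coeffsB 3 τ k) h = 0 := by
    fin_cases k
    exacts [h_deriv 8 rfl, h_deriv 5 rfl, h_deriv 6 rfl, h_deriv 7 rfl]
  have h_eq : h = 0 := eq_zero_of_jetMap hdet h_deriv_A h_deriv_B
  have h_scale : valueA5 τ * 5 * t = 0 := by
    simpa [h_eq, formValue, formIndex] using h_zero 4
  exact ⟨by simpa [hA5] using h_scale, h_eq⟩

lemma eventually_algebraicIndependent : ∀ᶠ T : ℝ in atTop, ∀ Q : MvPolynomial (Fin 9) ℂ,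
    (∀ z, MvPolynomial.eval (fun i => nineForms i (I * T) z) Q = 0) → Q = 0 := by
  filter_upwards [eventually_det_ne_zero, eventually_valueA5_ne_zero, eventually_gt_atTop 0]
    with T hdet hA5 hT Q hQ
  have hτ : 0 < (I * (T : ℂ)).im := by simpa using hT
  obtain ⟨D, hD⟩ := exists_hasJet_nineForms hτ
  exact eq_zero_of_hasJet hτ hD (fun _ _ => formDeriv_injective hA5 hdet) hQ

/-- The nine basic W(E8)-invariant holomorphic Jacobi forms
A_1, A_2, A_3, A_4, A_5, B_2, B_3, B_4, B_6 are algebraically independent over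
the ring ℂ[E4, E6]. -/
theorem nineForms_algebraically_independent :
    ∀ P : MvPolynomial (Fin 9) (MvPolynomial (Fin 2) ℂ),
      (∀ τ : ℂ, 0 < τ.im → ∀ z : Fin 8 → ℂ,
        MvPolynomial.eval₂ (MvPolynomial.eval (fun j : Fin 2 => ![E4 τ, E6 τ] j))
          (fun i : Fin 9 => nineForms i τ z) P = 0) → P = 0 := by
  intro P hP
  by_contra hP_ne
  obtain ⟨d, hd⟩ := MvPolynomial.ne_zero_iff.1 hP_ne
  obtain ⟨T, h_coeff, h_indep, hT⟩ := ((frequently_eval_eisenstein_ne_zero hd).and_eventually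
    (eventually_algebraicIndependent.and (eventually_gt_atTop 0))).exists
  have h_map : MvPolynomial.map (MvPolynomial.eval ![E4 (I * T), E6 (I * T)]) P = 0 :=
    h_indep _ fun z => by
      rw [MvPolynomial.eval_map]
      exact hP (I * T) (by simpa using hT) z
  rw [← MvPolynomial.coeff_map, h_map, MvPolynomial.coeff_zero] at h_coeff
  exact h_coeff rfl

end E8Jacobi
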